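/- arXiv:1701.00888 — 7 statements merged into one kernel-verified Lean document; each statement's English description precedes it below -/
import Mathlib

section
/- For every design ξ1 with finitely many distinct group sizes in [x_L, x_U] and positive weights summing to 1, there exist group sizes x_L < x2 < x3 ≤ x_U and nonnegative weights w1, w2, w3 with w1 + w2 + w3 = 1 such that the design ξ2 supported on {x_L, x2, x3} with these weights satisfies: M(ξ2) − M(ξ1) is a positive semidefinite 3×3 matrix. (That is, the class C0 of at-most-three-point designs whose smallest possible support point is x_L is essentially complete.) -/
/-!
Put `q = 1 - p0`, `s = q ^ x`, `r = p1 + p2 - 1`. Since `λ * π(1 - π) = 1` and `π(1 - π)` is a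
quadratic in `s` with leading coefficient `-r²`, the function `λ s²` is a linear combination of `1`,
`λ` and `λ s`. Hence every entry of `λ f fᵀ` is a linear combination of the constant `1` and the
five functions `λ`, `λ s`, `λ x s`, `λ x s²`, `λ x² s²` (`gtAtom_eq`), the last of which occurs only
in the top left entry, with a positive coefficient. So it suffices to find a design supported on
`xL` and two further points that has the same total mass and the same first four moments as `ξ₁`
and a fifth moment at least as large (`posSemidef_infoOfMoments_sub`).

Let `K` be the convex hull of the moment curve over `[xL, xU]`; it is compact. Move the moment
vector of `ξ₁` inside `K` as far as possible in the fifth direction, to a point `m'`. There is a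
supporting hyperplane of `K` at `m'` whose normal `c` has `c 4 ≥ 0` (`exists_extremal`). Every
representation of `m'` as a convex combination of curve points uses only points `x` at which the
curve touches the hyperplane. After multiplication by `π(1 - π)`, the gap between hyperplane and
curve is `A + (B + C x) s + (D + E x + F x²) s²` with `F = -c 4 ≤ 0` (`gap_mul_var`). It is
nonnegative on `[xL, xU]`, and a Rolle argument shows that such a function, unless all coefficients
vanish, has at most two zeros in `(xL, xU]` (`expPoly_zeros`): three zeros, two of them double,
leave no room for `F ≤ 0`. Thus `m'` is represented on `xL` and at most two other points.
-/


open Real Matrix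

/-- Probability of a positive response at group size `x`. -/
noncomputable def gtPi (p0 p1 p2 x : ℝ) : ℝ := p1 - (p1 + p2 - 1) * (1 - p0) ^ x

/-- `λ(x) = 1/(π(x)(1 − π(x)))`. -/
noncomputable def gtLam (p0 p1 p2 x : ℝ) : ℝ :=
  1 / (gtPi p0 p1 p2 x * (1 - gtPi p0 p1 p2 x))

/-- Gradient vector `f(x)`. -/
noncomputable def gtF (p0 p1 p2 x : ℝ) : Fin 3 → ℝ :=
  ![x * (p1 + p2 - 1) * (1 - p0) ^ (x - 1), 1 - (1 - p0) ^ x, -(1 - p0) ^ x]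

/-- Contribution `w · λ(x) · f(x) f(x)ᵀ` of a single group size to the information matrix. -/
noncomputable def gtAtom (p0 p1 p2 w x : ℝ) : Matrix (Fin 3) (Fin 3) ℝ :=
  (w * gtLam p0 p1 p2 x) • vecMulVec (gtF p0 p1 p2 x) (gtF p0 p1 p2 x)

/-- Information matrix of a design, represented as a finitely supported weight function. -/
noncomputable def gtInfo (p0 p1 p2 : ℝ) (ξ : ℝ →₀ ℝ) : Matrix (Fin 3) (Fin 3) ℝ :=
  ξ.sum fun x wx => gtAtom p0 p1 p2 wx x

/-- A design: finitely many distinct group sizes in `[xL, xU]` with positive weights summing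
to one. -/
def IsDesign (xL xU : ℝ) (ξ : ℝ →₀ ℝ) : Prop :=
  (∀ x ∈ ξ.support, x ∈ Set.Icc xL xU ∧ 0 < ξ x) ∧ ξ.sum (fun _ w => w) = 1

/-! ### Zeros of exponential polynomials -/

/-- The exponential polynomial `A + (B + C x) s + (D + E x + F x²) s²` with `s = exp (k x)`. -/
noncomputable def expPoly (k A B C D E F x : ℝ) : ℝ :=
  A + (B + C * x) * exp (k * x) + (D + E * x + F * x ^ 2) * exp (k * x) ^ 2

/-- Mean value theorem for an everywhere differentiable function, in division-free form. -/
lemma exists_hasDerivAt_slope {f f' : ℝ → ℝ} (hf : ∀ x, HasDerivAt f (f' x) x) {a b : ℝ}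
    (hab : a < b) : ∃ c, a < c ∧ c < b ∧ f b - f a = f' c * (b - a) := by
  obtain ⟨c, hc, h⟩ := exists_hasDerivAt_eq_slope f f' hab
    (fun x _ => (hf x).continuousAt.continuousWithinAt) (fun x _ => hf x)
  refine ⟨c, hc.1, hc.2, ?_⟩
  rw [h]
  have : b - a ≠ 0 := by linarith
  field_simp

lemma exists_zero_of_hasDerivAt {f f' : ℝ → ℝ} (hf : ∀ x, HasDerivAt f (f' x) x) {a b : ℝ}
    (hab : a < b) (h : f a = f b) : ∃ c, a < c ∧ c < b ∧ f' c = 0 := by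
  obtain ⟨c, h1, h2, h3⟩ := exists_hasDerivAt_slope hf hab
  refine ⟨c, h1, h2, ?_⟩
  have : b - a ≠ 0 := by linarith
  rw [h, sub_self] at h3
  simpa [this] using h3.symm

lemma deriv_eq_zero_of_nonneg {f f' : ℝ → ℝ} (hf : ∀ x, HasDerivAt f (f' x) x) {a b y : ℝ}
    (hay : a < y) (hyb : y < b) (hnn : ∀ x ∈ Set.Icc a b, 0 ≤ f x) (hy : f y = 0) : f' y = 0 := by
  have : IsLocalMin f y := by
    filter_upwards [Icc_mem_nhds hay hyb] with x hx
    rw [hy]; exact hnn x hx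
  exact this.hasDerivAt_eq_zero (hf y)

lemma hasDerivAt_expk (k x : ℝ) : HasDerivAt (fun x => exp (k * x)) (k * exp (k * x)) x := by
  have := ((hasDerivAt_id x).const_mul k).exp
  simpa [mul_comm] using this

lemma hasDerivAt_linearexp (k a b p q r x : ℝ) :
    HasDerivAt (fun x => a + b * x + (p + q * x + r * x ^ 2) * exp (k * x))
      (b + ((q + k * p) + (2 * r + k * q) * x + k * r * x ^ 2) * exp (k * x)) x := by
  have h1 := hasDerivAt_expk k x
  have h2 : HasDerivAt (fun x : ℝ => a + b * x) b x := by
    simpa using ((hasDerivAt_id x).const_mul b).const_add a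
  have h3 : HasDerivAt (fun x : ℝ => p + q * x + r * x ^ 2) (q + 2 * r * x) x := by
    have := (((hasDerivAt_id x).const_mul q).const_add p).add
      ((hasDerivAt_pow 2 x).const_mul r)
    refine this.congr_deriv ?_
    simp; ring
  refine (h2.add (h3.mul h1)).congr_deriv ?_
  ring

/-- The derivative of `expPoly` is `exp (k x)` times a linear function plus a quadratic times
`exp (k x)`; dividing by the positive factor leaves a function of the type handled by
`hasDerivAt_linearexp`. -/
lemma hasDerivAt_expPoly (k A B C D E F x : ℝ) :
    HasDerivAt (expPoly k A B C D E F)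
      (exp (k * x) * ((C + k * B) + k * C * x +
        ((E + 2 * k * D) + (2 * F + 2 * k * E) * x + 2 * k * F * x ^ 2) * exp (k * x))) x := by
  have h1 := hasDerivAt_linearexp k 0 0 B C 0 x
  have h2 := hasDerivAt_linearexp (2 * k) A 0 D E F x
  have e : ∀ x : ℝ, exp (2 * k * x) = exp (k * x) ^ 2 := by
    intro x; rw [← Real.exp_nat_mul]; push_cast; ring_nf
  have h3 := h1.add h2
  simp only [e] at h3
  refine (h3.congr_of_eventuallyEq (Filter.Eventually.of_forall fun x => ?_)).congr_deriv ?_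
  · simp only [expPoly, Pi.add_apply]; ring
  · ring

/-- A quadratic with nonnegative leading coefficient that has two roots and is nonpositive at a point
to the left of both vanishes identically. -/
lemma quadratic_eq_zero {p q r x0 x1 x2 : ℝ} (h01 : x0 < x1) (h12 : x1 < x2)
    (e1 : p + q * x1 + r * x1 ^ 2 = 0) (e2 : p + q * x2 + r * x2 ^ 2 = 0)
    (h0 : p + q * x0 + r * x0 ^ 2 ≤ 0) (hr : 0 ≤ r) : p = 0 ∧ q = 0 ∧ r = 0 := by
  have hq : q = -r * (x1 + x2) := by
    have : (q + r * (x1 + x2)) * (x2 - x1) = 0 := by linear_combination e2 - e1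
    have := (mul_eq_zero.1 this).resolve_right (by linarith)
    linarith
  have hp : p = r * (x1 * x2) := by
    rw [hq] at e1; linarith
  have h : r * ((x1 - x0) * (x2 - x0)) ≤ 0 := by
    rw [hp, hq] at h0; linarith
  have hr0 : r = 0 := le_antisymm
    (nonpos_of_mul_nonpos_left h (mul_pos (by linarith) (by linarith))) hr
  subst hr0
  simpa using And.intro hp hq

/-- A nonnegative exponential polynomial on `[a, b]` with `F ≤ 0` and three zeros in `(a, b]` is
identically zero. The two smaller zeros are interior minima, hence double. With
`H = exp (-k x) * Q'`, `H` has four zeros, `H'` three and `H''` two, and `exp (-k x) * H''` is a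
quadratic with leading coefficient `2 k³ F ≥ 0`. Nonnegativity of `Q` to the left of its first zero
makes that quadratic nonpositive somewhere to the left of both its roots, so it is zero. -/
lemma expPoly_zeros {k A B C D E F a b y1 y2 y3 : ℝ} (hk : k < 0) (hF : F ≤ 0)
    (hnn : ∀ x ∈ Set.Icc a b, 0 ≤ expPoly k A B C D E F x)
    (h1 : a < y1) (h12 : y1 < y2) (h23 : y2 < y3) (h3 : y3 ≤ b)
    (z1 : expPoly k A B C D E F y1 = 0) (z2 : expPoly k A B C D E F y2 = 0)
    (z3 : expPoly k A B C D E F y3 = 0) :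
    A = 0 ∧ B = 0 ∧ C = 0 ∧ D = 0 ∧ E = 0 ∧ F = 0 := by
  have hQ := hasDerivAt_expPoly k A B C D E F
  have hpos : ∀ x : ℝ, 0 < exp (k * x) := fun x => exp_pos _
  have d1 := deriv_eq_zero_of_nonneg hQ h1 (by linarith) hnn z1
  have d2 := deriv_eq_zero_of_nonneg hQ (by linarith : a < y2) (by linarith) hnn z2
  obtain ⟨u, hu1, hu2, du⟩ := exists_zero_of_hasDerivAt hQ h12 (z1.trans z2.symm)
  obtain ⟨v, hv1, hv2, dv⟩ := exists_zero_of_hasDerivAt hQ h23 (z2.trans z3.symm)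
  -- `Q a ≥ 0 = Q y1` yields a point `e < y1` with `H e ≤ 0`; this sign propagates through the
  -- mean value theorem to `t0` (where `H' ≥ 0`) and `s0` (where `H'' ≤ 0`) below.
  obtain ⟨e, he1, he2, de⟩ := exists_hasDerivAt_slope hQ h1
  have de' : exp (k * e) * ((C + k * B) + k * C * e +
        ((E + 2 * k * D) + (2 * F + 2 * k * E) * e + 2 * k * F * e ^ 2) * exp (k * e)) ≤ 0 := by
    have := hnn a ⟨le_rfl, by linarith⟩
    by_contra! hc
    have := mul_pos hc (sub_pos.2 h1)
    linarith
  have nz : ∀ x : ℝ, exp (k * x) ≠ 0 := fun x => (hpos x).ne'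
  replace d1 := (mul_eq_zero.1 d1).resolve_left (nz _)
  replace d2 := (mul_eq_zero.1 d2).resolve_left (nz _)
  replace du := (mul_eq_zero.1 du).resolve_left (nz _)
  replace dv := (mul_eq_zero.1 dv).resolve_left (nz _)
  replace de' := nonpos_of_mul_nonpos_right de' (hpos _)
  clear de
  have hH := hasDerivAt_linearexp k (C + k * B) (k * C) (E + 2 * k * D) (2 * F + 2 * k * E)
    (2 * k * F)
  obtain ⟨t1, ht1, ht1', dt1⟩ := exists_zero_of_hasDerivAt hH hu1 (d1.trans du.symm)
  obtain ⟨t2, ht2, ht2', dt2⟩ := exists_zero_of_hasDerivAt hH hu2 (du.trans d2.symm)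
  obtain ⟨t3, ht3, ht3', dt3⟩ := exists_zero_of_hasDerivAt hH hv1 (d2.trans dv.symm)
  obtain ⟨t0, ht0, ht0', dt0⟩ := exists_hasDerivAt_slope hH he2
  replace dt0 : 0 ≤ k * C + (2 * F + 2 * k * E + k * (E + 2 * k * D) +
      (2 * (2 * k * F) + k * (2 * F + 2 * k * E)) * t0 + k * (2 * k * F) * t0 ^ 2) *
        exp (k * t0) := by
    rw [d1] at dt0
    by_contra! hc
    have := mul_neg_of_neg_of_pos hc (sub_pos.2 he2)
    linarith
  have hK := hasDerivAt_linearexp k (k * C) 0 (2 * F + 2 * k * E + k * (E + 2 * k * D))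
    (2 * (2 * k * F) + k * (2 * F + 2 * k * E)) (k * (2 * k * F))
  simp only [zero_mul, add_zero, zero_add] at hK
  obtain ⟨s1, hs1, hs1', ds1⟩ := exists_zero_of_hasDerivAt hK (ht1'.trans ht2) (dt1.trans dt2.symm)
  obtain ⟨s2, hs2, hs2', ds2⟩ := exists_zero_of_hasDerivAt hK (ht2'.trans ht3) (dt2.trans dt3.symm)
  obtain ⟨s0, hs0, hs0', ds0⟩ := exists_hasDerivAt_slope hK (ht0'.trans ht1)
  replace ds1 := (mul_eq_zero.1 ds1).resolve_right (nz _)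
  replace ds2 := (mul_eq_zero.1 ds2).resolve_right (nz _)
  rw [dt1] at ds0
  have hG := quadratic_eq_zero (x0 := s0) (x1 := s1) (x2 := s2) (by linarith) (by linarith)
    ds1 ds2 (by
      by_contra! hc
      have := mul_pos (mul_pos hc (hpos s0)) (sub_pos.2 (ht0'.trans ht1))
      linarith) (by
      have : 0 ≤ (-k) * ((-k) * (-k) * (-F)) :=
        mul_nonneg (by linarith) (mul_nonneg (mul_self_nonneg _) (by linarith))
      linarith)
  obtain ⟨g0, g1, g2⟩ := hG
  -- All coefficients now vanish, from the highest order term down.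
  have k0 : k ≠ 0 := hk.ne
  have hF0 : F = 0 := by simpa [k0] using g2
  subst hF0
  have hE0 : E = 0 := by
    have : k * (k * (k * E)) = 0 := by linarith
    simpa [k0] using this
  subst hE0
  have hD0 : D = 0 := by
    have : k * (k * (k * D)) = 0 := by linarith
    simpa [k0] using this
  subst hD0
  have hC0 : C = 0 := by
    have : k * C = 0 := by simpa using dt1
    simpa [k0] using this
  subst hC0
  have hB0 : B = 0 := by simpa [k0] using d1
  subst hB0
  exact ⟨by simpa [expPoly] using z1, rfl, rfl, rfl, rfl, rfl⟩

/-! ### Extremal points of a compact convex set and supporting hyperplanes -/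

/-- In finite dimension the convex hull of a compact set is compact: by Carathéodory's theorem it is
the continuous image of a product of a standard simplex and finitely many copies of the set. -/
lemma isCompact_convexHull {E : Type} [NormedAddCommGroup E] [NormedSpace ℝ E]
    [FiniteDimensional ℝ E] {s : Set E} (hs : IsCompact s) : IsCompact (convexHull ℝ s) := by
  let N := Module.finrank ℝ E + 1
  have hc : IsCompact ((fun p : (Fin N → ℝ) × (Fin N → E) => ∑ i, p.1 i • p.2 i) ''
      (stdSimplex ℝ (Fin N) ×ˢ Set.univ.pi fun _ => s)) :=
    ((isCompact_stdSimplex ℝ (Fin N)).prod (isCompact_univ_pi fun _ => hs)).image (by fun_prop)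
  convert hc
  ext x
  constructor
  · intro hx
    obtain ⟨ι, _, z, w, hz, hi, hw, hw1, hx⟩ := eq_pos_convex_span_of_mem_convexHull hx
    have hcard : Fintype.card ι ≤ Fintype.card (Fin N) := by
      rw [Fintype.card_fin]
      exact hi.card_le_finrank_succ.trans (Nat.succ_le_succ (Submodule.finrank_le _))
    obtain ⟨φ⟩ := Function.Embedding.nonempty_of_card_le hcard
    have : Nonempty ι := by
      by_contra h
      rw [not_nonempty_iff] at h
      simp at hw1
    obtain ⟨i0⟩ := this
    -- Fewer than `N` points are padded by points of weight zero.
    have key : ∀ {F : Type} [AddCommMonoid F] (g : ι → F),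
        ∑ j, Function.extend φ g 0 j = ∑ i, g i := by
      intro F _ g
      rw [← Finset.sum_subset (Finset.subset_univ (Finset.univ.map φ))]
      · simp [φ.injective.extend_apply]
      · intro j _ hj
        rw [Function.extend_apply']
        · rfl
        · rintro ⟨i, rfl⟩; simp at hj
    refine ⟨(Function.extend φ w 0, Function.extend φ z fun _ => z i0), ⟨⟨fun j => ?_, ?_⟩, ?_⟩, ?_⟩
    · by_cases h : ∃ i, φ i = j
      · obtain ⟨i, rfl⟩ := h
        simpa [φ.injective.extend_apply] using (hw i).le
      · simp [Function.extend_apply' _ _ _ h]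
    · simpa [hw1] using key w
    · intro j _
      by_cases h : ∃ i, φ i = j
      · obtain ⟨i, rfl⟩ := h
        simpa [φ.injective.extend_apply] using hz ⟨i, rfl⟩
      · simpa [Function.extend_apply' _ _ _ h] using hz ⟨i0, rfl⟩
    · rw [← hx, ← key]
      dsimp only
      refine Finset.sum_congr rfl fun j _ => ?_
      by_cases h : ∃ i, φ i = j
      · obtain ⟨i, rfl⟩ := h
        simp [φ.injective.extend_apply]
      · simp [Function.extend_apply' _ _ _ h]
  · rintro ⟨⟨w, z⟩, ⟨⟨hw, hw1⟩, hz⟩, rfl⟩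
    exact mem_convexHull_of_exists_fintype w z hw hw1 (fun i => hz i trivial) rfl

/-- Pushing `m` inside the compact convex set `K` as far as possible in the `j`-th coordinate direction
leads to a point `m'` at which `K` has a supporting hyperplane with nonzero normal `c`, `c j ≥ 0`.
The normal is a limit of normalised functionals separating `K` from the outside points
`m' + (1 / (t + 1)) e_j`. -/
lemma exists_extremal {n : ℕ} {K : Set (Fin n → ℝ)} (hK : IsCompact K) (hconv : Convex ℝ K)
    {m : Fin n → ℝ} (hm : m ∈ K) (j : Fin n) :
    ∃ m' ∈ K, (∀ i, i ≠ j → m' i = m i) ∧ m j ≤ m' j ∧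
      ∃ c : Fin n → ℝ, c ≠ 0 ∧ 0 ≤ c j ∧ ∀ k ∈ K, ∑ i, c i * k i ≤ ∑ i, c i * m' i := by
  have hcl : IsCompact (K ∩ ⋂ i : {i // i ≠ j}, {k : Fin n → ℝ | k i = m i}) :=
    hK.inter_right (isClosed_iInter fun i =>
      isClosed_eq (continuous_apply _) continuous_const)
  obtain ⟨m', ⟨hm'K, hm'⟩, hmax⟩ := hcl.exists_isMaxOn ⟨m, hm, by simp⟩
    (continuous_apply j).continuousOn
  simp only [Set.mem_iInter, Set.mem_ofPred_eq, Subtype.forall] at hm'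
  refine ⟨m', hm'K, hm', hmax ⟨hm, by simp⟩, ?_⟩
  have hout : ∀ t : ℕ, m' + Pi.single j (1 / ((t : ℝ) + 1)) ∉ K := by
    intro t hmem
    have h1 := hmax (a := m' + Pi.single j (1 / ((t : ℝ) + 1))) ⟨hmem, by
      simp only [Set.mem_iInter, Set.mem_ofPred_eq, Subtype.forall]
      intro i hi
      simp [hi, hm' i hi]⟩
    have : (0 : ℝ) < 1 / ((t : ℝ) + 1) := by positivity
    simp only [Pi.add_apply, Pi.single_eq_same, Set.mem_ofPred_eq] at h1
    linarith
  have hsep : ∀ t : ℕ, ∃ c : Fin n → ℝ, ‖c‖ = 1 ∧ ∀ k ∈ K,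
      ∑ i, c i * k i ≤ ∑ i, c i * (m' + Pi.single j (1 / ((t : ℝ) + 1)) : Fin n → ℝ) i := by
    intro t
    obtain ⟨f, u, hf1, hf2⟩ := geometric_hahn_banach_closed_point hconv hK.isClosed (hout t)
    have hf : ∀ x : Fin n → ℝ, f x = ∑ i, f (Pi.single i 1) * x i := by
      intro x
      conv_lhs => rw [← Finset.univ_sum_single x]
      rw [map_sum]
      refine Finset.sum_congr rfl fun i _ => ?_
      rw [mul_comm, ← smul_eq_mul, ← map_smul, ← Pi.single_smul', smul_eq_mul, mul_one]
    set d : Fin n → ℝ := fun i => f (Pi.single i 1) with hd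
    have hd0 : d ≠ 0 := by
      intro h0
      have h1 := hf1 m' hm'K
      have hz : ∀ x, f x = 0 := fun x => by
        rw [hf x]
        exact Finset.sum_eq_zero fun i _ => by rw [show f (Pi.single i 1) = 0 from congrFun h0 i, zero_mul]
      rw [hz] at h1 hf2
      linarith
    have hn : 0 < ‖d‖ := norm_pos_iff.2 hd0
    refine ⟨‖d‖⁻¹ • d, by rw [norm_smul, norm_inv, norm_norm, inv_mul_cancel₀ hn.ne'], ?_⟩
    intro k hk
    have h := (hf1 k hk).trans hf2
    rw [hf, hf] at h
    simp only [Pi.smul_apply, smul_eq_mul, mul_assoc, ← Finset.mul_sum]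
    exact mul_le_mul_of_nonneg_left h.le (inv_nonneg.2 hn.le)
  choose c hc1 hc2 using hsep
  obtain ⟨c', hc', φ, hφ, hlim⟩ := (isCompact_sphere (0 : Fin n → ℝ) 1).tendsto_subseq
    (x := c) (by simpa using hc1)
  have hz : Filter.Tendsto (fun t => 1 / (((φ t : ℕ) : ℝ) + 1)) Filter.atTop (nhds 0) :=
    tendsto_one_div_add_atTop_nhds_zero_nat.comp hφ.tendsto_atTop
  have hci : ∀ i, Filter.Tendsto (fun t => c (φ t) i) Filter.atTop (nhds (c' i)) := fun i =>
    (tendsto_pi_nhds.1 hlim) i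
  refine ⟨c', fun h => by simp [h] at hc', ?_, fun k hk => ?_⟩
  · refine ge_of_tendsto' (hci j) fun t => ?_
    have h := hc2 (φ t) m' hm'K
    simp only [Pi.add_apply, mul_add, Finset.sum_add_distrib, Pi.single_apply, mul_ite, mul_zero,
      Finset.sum_ite_eq', Finset.mem_univ, if_true] at h
    have hp : (0 : ℝ) < 1 / (((φ t : ℕ) : ℝ) + 1) := by positivity
    exact nonneg_of_mul_nonneg_left (by linarith) hp
  · have hL : Filter.Tendsto (fun t => ∑ i, c (φ t) i * k i) Filter.atTop
        (nhds (∑ i, c' i * k i)) :=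
      tendsto_finsetSum _ fun i _ => (hci i).mul_const _
    have hR : Filter.Tendsto
        (fun t => ∑ i, c (φ t) i * m' i + c (φ t) j * (1 / (((φ t : ℕ) : ℝ) + 1)))
        Filter.atTop (nhds (∑ i, c' i * m' i + c' j * 0)) :=
      (tendsto_finsetSum _ fun i _ => (hci i).mul_const _).add ((hci j).mul hz)
    rw [mul_zero, add_zero] at hR
    refine le_of_tendsto_of_tendsto' hL hR fun t => ?_
    have h := hc2 (φ t) k hk
    simpa only [Pi.add_apply, mul_add, Finset.sum_add_distrib, Pi.single_apply, mul_ite, mul_zero,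
      Finset.sum_ite_eq', Finset.mem_univ, if_true] using h

/-! ### Moments of a design and its information matrix -/

/-- A set of at most two points of `(xL, xU]` can be enlarged to exactly two points. -/
lemma exists_atMostTwo {xL xU : ℝ} (hx : xL < xU) (T : Finset ℝ)
    (hT : ∀ y ∈ T, y ∈ Set.Ioc xL xU) (hcard : T.card ≤ 2) :
    ∃ x2 x3, xL < x2 ∧ x2 < x3 ∧ x3 ≤ xU ∧ ∀ y ∈ T, y = x2 ∨ y = x3 := by
  have hmid : xL < (xL + xU) / 2 ∧ (xL + xU) / 2 < xU := ⟨by linarith, by linarith⟩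
  obtain ⟨U, hTU, hU, hU2⟩ := Finset.exists_subsuperset_card_eq
    (s := T) (t := T ∪ {(xL + xU) / 2, xU}) Finset.subset_union_left hcard
    ((Finset.card_pair hmid.2.ne).symm.le.trans (Finset.card_le_card Finset.subset_union_right))
  have hmem : ∀ y ∈ U, y ∈ Set.Ioc xL xU := by
    intro y hy
    have := hU hy
    simp only [Finset.mem_union, Finset.mem_insert, Finset.mem_singleton] at this
    rcases this with h | rfl | rfl
    · exact hT y h
    · exact ⟨hmid.1, hmid.2.le⟩
    · exact ⟨hx, le_rfl⟩
  obtain ⟨a, b, hab, rfl⟩ := Finset.card_eq_two.1 hU2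
  have ha := hmem a (by simp)
  have hb := hmem b (by simp)
  rcases lt_or_gt_of_ne hab with h | h
  · exact ⟨a, b, ha.1, h, hb.2, fun y hy => by simpa using hTU hy⟩
  · exact ⟨b, a, hb.1, h, ha.2, fun y hy => by simpa [or_comm] using hTU hy⟩

/-- The moment curve `(λ, λ s, λ x s, λ x s², λ x² s²)` with `s = (1 - p0) ^ x`. -/
noncomputable def momentCurve (p0 p1 p2 x : ℝ) : Fin 5 → ℝ :=
  gtLam p0 p1 p2 x • ![1, (1 - p0) ^ x, x * (1 - p0) ^ x, x * ((1 - p0) ^ x) ^ 2,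
    x ^ 2 * ((1 - p0) ^ x) ^ 2]

/-- The information matrix as a function of the total mass `W` and the vector `V` of moments along
`momentCurve`; `S` is the moment of `λ s²`, recovered from `W`, `V 0` and `V 1` through
`λ * π(1 - π) = 1`, and `ρ` comes from `q ^ (x - 1) = q ^ x / q` with `q = 1 - p0`. -/
noncomputable def infoOfMoments (p0 p1 p2 W : ℝ) (V : Fin 5 → ℝ) : Matrix (Fin 3) (Fin 3) ℝ :=
  let r := p1 + p2 - 1
  let ρ := r / (1 - p0)
  let S := (p1 * (1 - p1) * V 0 + r * (2 * p1 - 1) * V 1 - W) / r ^ 2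
  !![ρ ^ 2 * V 4, ρ * (V 2 - V 3), -(ρ * V 3);
     ρ * (V 2 - V 3), V 0 - 2 * V 1 + S, S - V 1;
     -(ρ * V 3), S - V 1, S]

lemma infoOfMoments_add (p0 p1 p2 W W' : ℝ) (V V' : Fin 5 → ℝ) :
    infoOfMoments p0 p1 p2 (W + W') (V + V') =
      infoOfMoments p0 p1 p2 W V + infoOfMoments p0 p1 p2 W' V' := by
  ext i j
  fin_cases i <;> fin_cases j <;> simp [infoOfMoments] <;> ring

lemma infoOfMoments_sum {ι : Type*} (p0 p1 p2 : ℝ) (s : Finset ι) (W : ι → ℝ)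
    (V : ι → Fin 5 → ℝ) :
    ∑ i ∈ s, infoOfMoments p0 p1 p2 (W i) (V i) =
      infoOfMoments p0 p1 p2 (∑ i ∈ s, W i) (∑ i ∈ s, V i) := by
  classical
  induction s using Finset.induction_on with
  | empty =>
    ext i j
    fin_cases i <;> fin_cases j <;> simp [infoOfMoments]
  | insert a s ha ih =>
    rw [Finset.sum_insert ha, Finset.sum_insert ha, Finset.sum_insert ha, ih, infoOfMoments_add]

/-- Raising the last moment with the mass and the other moments fixed changes only the top left entry
of the information matrix, and increases it. -/
lemma posSemidef_infoOfMoments_sub {p0 p1 p2 W : ℝ} {V V' : Fin 5 → ℝ}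
    (h : ∀ i, i ≠ 4 → V' i = V i) (h4 : V 4 ≤ V' 4) :
    (infoOfMoments p0 p1 p2 W V' - infoOfMoments p0 p1 p2 W V).PosSemidef := by
  have h0 := h 0 (by decide)
  have h1 := h 1 (by decide)
  have h2 := h 2 (by decide)
  have h3 := h 3 (by decide)
  have : infoOfMoments p0 p1 p2 W V' - infoOfMoments p0 p1 p2 W V =
      diagonal ![((p1 + p2 - 1) / (1 - p0)) ^ 2 * (V' 4 - V 4), 0, 0] := by
    ext i j
    fin_cases i <;> fin_cases j <;> simp [infoOfMoments, h0, h1, h2, h3]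
    ring
  rw [this]
  refine PosSemidef.diagonal fun i => ?_
  fin_cases i
  · exact mul_nonneg (sq_nonneg _) (sub_nonneg.2 h4)
  · exact le_rfl
  · exact le_rfl

lemma gtVar_pos {p0 p1 p2 x : ℝ} (hp0 : p0 ∈ Set.Ioo (0 : ℝ) 1)
    (hp1 : p1 ∈ Set.Ioc (1 / 2 : ℝ) 1) (hp2 : p2 ∈ Set.Ioc (1 / 2 : ℝ) 1) (hx : 1 ≤ x) :
    0 < gtPi p0 p1 p2 x * (1 - gtPi p0 p1 p2 x) := by
  have h0 : 0 < (1 - p0) ^ x := rpow_pos_of_pos (by linarith [hp0.2]) _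
  have h1 : (1 - p0) ^ x < 1 :=
    rpow_lt_one (by linarith [hp0.2]) (by linarith [hp0.1]) (by linarith)
  have hr : 0 < p1 + p2 - 1 := by linarith [hp1.1, hp2.1]
  have h2 := mul_pos hr h0
  have h3 := mul_pos hr (sub_pos.2 h1)
  unfold gtPi
  exact mul_pos (by linarith [hp2.2]) (by linarith [hp1.2])

lemma gtAtom_eq {p0 p1 p2 x : ℝ} (hp0 : p0 ∈ Set.Ioo (0 : ℝ) 1)
    (hp1 : p1 ∈ Set.Ioc (1 / 2 : ℝ) 1) (hp2 : p2 ∈ Set.Ioc (1 / 2 : ℝ) 1) (hx : 1 ≤ x) (w : ℝ) :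
    gtAtom p0 p1 p2 w x = infoOfMoments p0 p1 p2 w (w • momentCurve p0 p1 p2 x) := by
  have hq : 0 < 1 - p0 := by linarith [hp0.2]
  have hr : p1 + p2 - 1 ≠ 0 := by linarith [hp1.1, hp2.1]
  have hlam : gtLam p0 p1 p2 x * (gtPi p0 p1 p2 x * (1 - gtPi p0 p1 p2 x)) = 1 :=
    one_div_mul_cancel (gtVar_pos hp0 hp1 hp2 hx).ne'
  have hS : (p1 * (1 - p1) * (w * gtLam p0 p1 p2 x) + (p1 + p2 - 1) * (2 * p1 - 1) *
      (w * (gtLam p0 p1 p2 x * (1 - p0) ^ x)) - w) / (p1 + p2 - 1) ^ 2 =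
      w * gtLam p0 p1 p2 x * ((1 - p0) ^ x) ^ 2 := by
    rw [div_eq_iff (pow_ne_zero 2 hr)]
    unfold gtPi at hlam
    linear_combination w * hlam
  have hpow : (1 - p0) ^ (x - 1) = (1 - p0) ^ x / (1 - p0) := rpow_sub_one hq.ne' x
  ext i j
  fin_cases i <;> fin_cases j <;>
    simp [gtAtom, gtF, infoOfMoments, momentCurve, hS, hpow] <;>
    first | ring1 | exact Or.inl (by ring1)

lemma continuousOn_momentCurve {p0 p1 p2 xL xU : ℝ} (hp0 : p0 ∈ Set.Ioo (0 : ℝ) 1)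
    (hp1 : p1 ∈ Set.Ioc (1 / 2 : ℝ) 1) (hp2 : p2 ∈ Set.Ioc (1 / 2 : ℝ) 1) (hxL : 1 ≤ xL) :
    ContinuousOn (momentCurve p0 p1 p2) (Set.Icc xL xU) := by
  have hq : 0 < 1 - p0 := by linarith [hp0.2]
  have hs : Continuous fun x : ℝ => (1 - p0) ^ x := continuous_const_rpow hq.ne'
  have hpi : Continuous fun x => gtPi p0 p1 p2 x := by unfold gtPi; fun_prop
  have hlam : ContinuousOn (fun x => gtLam p0 p1 p2 x) (Set.Icc xL xU) := by
    unfold gtLam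
    exact continuousOn_const.div (by fun_prop) fun x hx =>
      (gtVar_pos hp0 hp1 hp2 (hxL.trans hx.1)).ne'
  unfold momentCurve
  refine hlam.smul (Continuous.continuousOn ?_)
  refine continuous_pi fun i => ?_
  fin_cases i <;> simp <;> fun_prop

/-! ### Contact points of a supporting hyperplane with the moment curve -/

/-- The gap between a hyperplane and the moment curve, multiplied by `π(1 - π)`, is an exponential
polynomial in `x`. -/
lemma gap_mul_var {p0 p1 p2 x : ℝ} (hp0 : p0 ∈ Set.Ioo (0 : ℝ) 1)
    (hp1 : p1 ∈ Set.Ioc (1 / 2 : ℝ) 1) (hp2 : p2 ∈ Set.Ioc (1 / 2 : ℝ) 1) (hx : 1 ≤ x)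
    (μ : ℝ) (c : Fin 5 → ℝ) :
    (μ - ∑ i, c i * momentCurve p0 p1 p2 x i) * (gtPi p0 p1 p2 x * (1 - gtPi p0 p1 p2 x)) =
      expPoly (log (1 - p0)) (μ * (p1 * (1 - p1)) - c 0)
        (μ * ((p1 + p2 - 1) * (2 * p1 - 1)) - c 1) (-c 2) (-(μ * (p1 + p2 - 1) ^ 2))
        (-c 3) (-c 4) x := by
  have hq : 0 < 1 - p0 := by linarith [hp0.2]
  have hlam : gtLam p0 p1 p2 x * (gtPi p0 p1 p2 x * (1 - gtPi p0 p1 p2 x)) = 1 :=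
    one_div_mul_cancel (gtVar_pos hp0 hp1 hp2 hx).ne'
  have hs : exp (log (1 - p0) * x) = (1 - p0) ^ x := (rpow_def_of_pos hq x).symm
  simp only [expPoly, hs, momentCurve, Fin.sum_univ_five, Pi.smul_apply, smul_eq_mul]
  simp
  set s := (1 - p0) ^ x with hsdef
  have hv : gtPi p0 p1 p2 x * (1 - gtPi p0 p1 p2 x) =
      p1 * (1 - p1) + (p1 + p2 - 1) * (2 * p1 - 1) * s - (p1 + p2 - 1) ^ 2 * s ^ 2 := by
    unfold gtPi; ring
  linear_combination μ * hv - (c 0 + c 1 * s + c 2 * (x * s) + c 3 * (x * s ^ 2) +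
    c 4 * (x ^ 2 * s ^ 2)) * hlam

/-- A supporting hyperplane of the moment curve whose normal satisfies `c 4 ≥ 0` touches the curve in
at most two points other than the left end point. -/
lemma card_contact_le_two {p0 p1 p2 xL xU : ℝ} (hp0 : p0 ∈ Set.Ioo (0 : ℝ) 1)
    (hp1 : p1 ∈ Set.Ioc (1 / 2 : ℝ) 1) (hp2 : p2 ∈ Set.Ioc (1 / 2 : ℝ) 1) (hxL : 1 ≤ xL)
    {μ : ℝ} {c : Fin 5 → ℝ} (hc : c ≠ 0) (hc4 : 0 ≤ c 4)
    (hle : ∀ x ∈ Set.Icc xL xU, ∑ i, c i * momentCurve p0 p1 p2 x i ≤ μ) (T : Finset ℝ)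
    (hT : ∀ y ∈ T, y ∈ Set.Ioc xL xU ∧ ∑ i, c i * momentCurve p0 p1 p2 y i = μ) :
    T.card ≤ 2 := by
  by_contra! hcard
  let y := T.orderEmbOfCardLe (k := 3) hcard
  have hy : ∀ i, y i ∈ T := fun i => Finset.orderEmbOfCardLe_mem T hcard i
  have hz : ∀ i, expPoly (log (1 - p0)) (μ * (p1 * (1 - p1)) - c 0)
        (μ * ((p1 + p2 - 1) * (2 * p1 - 1)) - c 1) (-c 2) (-(μ * (p1 + p2 - 1) ^ 2))
        (-c 3) (-c 4) (y i) = 0 := fun i => by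
    rw [← gap_mul_var hp0 hp1 hp2 (hxL.trans (hT _ (hy i)).1.1.le), (hT _ (hy i)).2, sub_self,
      zero_mul]
  obtain ⟨hA, hB, hC, hD, hE, hF⟩ := expPoly_zeros (a := xL) (b := xU)
    (log_neg (by linarith [hp0.2]) (by linarith [hp0.1])) (by linarith)
    (fun x hx => by
      rw [← gap_mul_var hp0 hp1 hp2 (hxL.trans hx.1)]
      exact mul_nonneg (sub_nonneg.2 (hle x hx)) (gtVar_pos hp0 hp1 hp2 (hxL.trans hx.1)).le)
    (hT _ (hy 0)).1.1 (y.strictMono (by decide : (0 : Fin 3) < 1))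
    (y.strictMono (by decide : (1 : Fin 3) < 2)) (hT _ (hy 2)).1.2 (hz 0) (hz 1) (hz 2)
  have hr : (p1 + p2 - 1) ^ 2 ≠ 0 := pow_ne_zero 2 (by linarith [hp1.1, hp2.1])
  have hμ : μ = 0 := by simpa [hr] using hD
  subst hμ
  apply hc
  ext i
  fin_cases i <;> simp <;> linarith

/-- Theorem 1 (essential completeness of the class `C₀`): for any design `ξ₁` there are group
sizes `x_L < x₂ < x₃ ≤ x_U` and nonnegative weights summing to one whose three-point design `ξ₂`
satisfies that `M(ξ₂) − M(ξ₁)` is positive semidefinite. -/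
theorem essentially_complete
    (p0 p1 p2 xL xU : ℝ)
    (hp0 : p0 ∈ Set.Ioo (0 : ℝ) 1)
    (hp1 : p1 ∈ Set.Ioc (1 / 2 : ℝ) 1) (hp2 : p2 ∈ Set.Ioc (1 / 2 : ℝ) 1)
    (hxL : 1 ≤ xL) (hxLU : xL < xU)
    (ξ1 : ℝ →₀ ℝ) (hξ1 : IsDesign xL xU ξ1) :
    ∃ x2 x3 w1 w2 w3 : ℝ,
      xL < x2 ∧ x2 < x3 ∧ x3 ≤ xU ∧
      0 ≤ w1 ∧ 0 ≤ w2 ∧ 0 ≤ w3 ∧ w1 + w2 + w3 = 1 ∧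
      (gtAtom p0 p1 p2 w1 xL + gtAtom p0 p1 p2 w2 x2 + gtAtom p0 p1 p2 w3 x3
        - gtInfo p0 p1 p2 ξ1).PosSemidef := by
  classical
  set γ := momentCurve p0 p1 p2 with hγ
  set K := convexHull ℝ (γ '' Set.Icc xL xU) with hK
  have hKc : IsCompact K := isCompact_convexHull
    (isCompact_Icc.image_of_continuousOn (continuousOn_momentCurve hp0 hp1 hp2 hxL))
  set m : Fin 5 → ℝ := ∑ x ∈ ξ1.support, ξ1 x • γ x with hm
  have hsum : ∑ x ∈ ξ1.support, ξ1 x = 1 := hξ1.2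
  have hmK : m ∈ K := (convex_convexHull ℝ _).sum_mem (fun x hx => (hξ1.1 x hx).2.le) hsum
    fun x hx => subset_convexHull ℝ _ ⟨x, (hξ1.1 x hx).1, rfl⟩
  have hinfo : gtInfo p0 p1 p2 ξ1 = infoOfMoments p0 p1 p2 1 m := by
    rw [hm, ← hsum, ← infoOfMoments_sum]
    exact Finset.sum_congr rfl fun x hx =>
      gtAtom_eq hp0 hp1 hp2 (hxL.trans (hξ1.1 x hx).1.1) _
  obtain ⟨m', hm'K, hm', hm4, c, hc, hc4, hsup⟩ :=
    exists_extremal hKc (convex_convexHull ℝ _) hmK 4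
  obtain ⟨ι, _, w, z, hw, hw1, hz, hwz⟩ := mem_convexHull_iff_exists_fintype.1 hm'K
  choose x hx hxz using hz
  -- A point of positive weight lies on the supporting hyperplane, since `m'` does.
  have hcontact : ∀ i, w i ≠ 0 → ∑ l, c l * γ (x i) l = ∑ l, c l * m' l := by
    have hle : ∀ i, ∑ l, c l * γ (x i) l ≤ ∑ l, c l * m' l := fun i =>
      hsup _ (subset_convexHull ℝ _ ⟨x i, hx i, rfl⟩)
    have havg : ∑ i, w i * ∑ l, c l * γ (x i) l = ∑ l, c l * m' l := by
      simp only [← hwz, ← hxz, Finset.sum_apply, Pi.smul_apply, smul_eq_mul, Finset.mul_sum]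
      rw [Finset.sum_comm]
      exact Finset.sum_congr rfl fun _ _ => Finset.sum_congr rfl fun _ _ => by ring
    have h0 : ∑ i, w i * (∑ l, c l * m' l - ∑ l, c l * γ (x i) l) = 0 := by
      simp only [mul_sub, Finset.sum_sub_distrib, havg, ← Finset.sum_mul, hw1]
      ring
    intro i hi
    have := (Finset.sum_eq_zero_iff_of_nonneg fun i _ =>
      mul_nonneg (hw i) (sub_nonneg.2 (hle i))).1 h0 i (Finset.mem_univ i)
    linarith [(mul_eq_zero.1 this).resolve_left hi]
  set T : Finset ℝ := (Finset.univ.filter fun i => w i ≠ 0 ∧ x i ≠ xL).image x with hT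
  have hTmem : ∀ y ∈ T, y ∈ Set.Ioc xL xU ∧ ∑ l, c l * γ y l = ∑ l, c l * m' l := by
    intro y hy
    simp only [hT, Finset.mem_image, Finset.mem_filter, Finset.mem_univ, true_and] at hy
    obtain ⟨i, ⟨hi, hi'⟩, rfl⟩ := hy
    exact ⟨⟨lt_of_le_of_ne (hx i).1 hi'.symm, (hx i).2⟩, hcontact i hi⟩
  obtain ⟨x2, x3, h2, h23, h3, hT2⟩ := exists_atMostTwo hxLU T (fun y hy => (hTmem y hy).1)
    (card_contact_le_two hp0 hp1 hp2 hxL hc hc4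
      (fun y hy => hsup _ (subset_convexHull ℝ _ ⟨y, hy, rfl⟩)) T hTmem)
  have hcases : ∀ i, w i = 0 ∨ x i = xL ∨ x i = x2 ∨ x i = x3 := by
    intro i
    by_contra! h
    have := hT2 (x i) (Finset.mem_image_of_mem x (by simp [h.1, h.2.1]))
    tauto
  -- The representation may repeat points, so weights of equal points are collected.
  let W : ℝ → ℝ := fun y => ∑ i, if x i = y then w i else 0
  have hW : ∀ y, 0 ≤ W y := fun y => Finset.sum_nonneg fun i _ => by
    split_ifs
    · exact hw i
    · exact le_rfl
  have hsplit : ∀ {M : Type} [AddCommGroup M] [Module ℝ M] (v : ℝ → M),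
      ∑ i, w i • v (x i) = W xL • v xL + W x2 • v x2 + W x3 • v x3 := by
    intro M _ _ v
    simp only [W, Finset.sum_smul, ← Finset.sum_add_distrib]
    refine Finset.sum_congr rfl fun i _ => ?_
    rcases hcases i with h | h | h | h
    · simp [h]
    · simp [h, h2.ne, (h2.trans h23).ne]
    · simp [h, h2.ne', h23.ne]
    · simp [h, (h2.trans h23).ne', h23.ne']
  have hW1 : W xL + W x2 + W x3 = 1 := by
    simpa [hw1] using (hsplit fun _ => (1 : ℝ)).symm
  have hWm : W xL • γ xL + W x2 • γ x2 + W x3 • γ x3 = m' := by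
    rw [← hsplit γ, ← hwz]
    simp only [hxz]
  refine ⟨x2, x3, W xL, W x2, W x3, h2, h23, h3, hW _, hW _, hW _, hW1, ?_⟩
  rw [gtAtom_eq hp0 hp1 hp2 hxL, gtAtom_eq hp0 hp1 hp2 (hxL.trans h2.le),
    gtAtom_eq hp0 hp1 hp2 (hxL.trans (h2.trans h23).le), ← infoOfMoments_add,
    ← infoOfMoments_add, hW1, hWm, hinfo]
  exact posSemidef_infoOfMoments_sub hm' hm4
end

section
/- Suppose A1 ∈ (r, 1) satisfies equation (E1): (2/A1)(1 + (1 + Δ0/A1)/(log A1 − Δ0(1/A1 − 1))) = 1/(δc + A1) − 1/(c − A1). Let x2* = x_L + log A1 / log(1 − p0), and let ξ_D be the design placing weight 1/3 on each of the three group sizes x_L, x2*, x_U. Then for every design ξ with group sizes in [x_L, x_U], det M(ξ) ≤ det M(ξ_D), and equality holds only if ξ = ξ_D (i.e., ξ_D is the unique D-optimal design). -/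
/-!
In the variable `u = q^(x - x_L) ∈ [r, 1]` the gradient `f(x)` is a fixed invertible linear image of
`(u log u, u, 1)`, and `1/λ(x)` is a constant multiple of `w(u) = (c - u)(δc + u)`. The points
`x_U, x₂*, x_L` become the nodes `r, A₁, 1`. Let `L₀, L₁, L₂` be the Lagrange basis of
`span{u log u, u, 1}` at these nodes.

In the coordinates given by the suitably scaled `Lᵢ` the matrix `M(ξ_D)` is `(1/3) I`, and the
trace of the information matrix of a design is an average of `∑ Lᵢ(u)² w(uᵢ) / w(u)`. Hence, by
`det ≤ (trace/3)³` for positive semidefinite matrices, optimality follows once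
`∑ Lᵢ(u)² w(uᵢ) ≤ w(u)` on `[r, 1]`; if this is strict off the nodes, an optimal design lives on
the nodes and the equality case of AM-GM forces equal weights (`optimal_of_nodes`).

The inequality is `wt_ge`. The difference `H = w - ∑ Lᵢ² w(uᵢ)` vanishes at the nodes, the equation
for `A₁` says `H'(A₁) = 0`, and `H(0) < 0`. A nonpositive value of `H` elsewhere in `(r, 1)` would give `H'`
the sign pattern `+, -, +, -, +` (weakly after the first sign), so that `(u H'')'`, a quadratic in
`log u`, would have the pattern `+, -, +`; but its leading coefficient is nonpositive
(`not_sign_pattern`, `logPoly_pos`).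
-/

open Real Matrix

/-! ### Sign patterns for combinations of powers and logarithms -/

/-- The mean value theorem, with the slope cleared of denominators. -/
theorem exists_deriv_mul_eq {F F' : ℝ → ℝ} {a b : ℝ} (hab : a < b)
    (hc : ContinuousOn F (Set.Icc a b)) (hd : ∀ x ∈ Set.Ioo a b, HasDerivAt F (F' x) x) :
    ∃ y, a < y ∧ y < b ∧ F' y * (b - a) = F b - F a := by
  obtain ⟨y, hy, h⟩ := exists_hasDerivAt_eq_slope F F' hab hc hd
  refine ⟨y, hy.1, hy.2, ?_⟩
  rw [h, div_mul_cancel₀ _ (sub_pos.2 hab).ne']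

theorem exists_deriv_pos {F F' : ℝ → ℝ} {a b : ℝ} (hab : a < b)
    (hc : ContinuousOn F (Set.Icc a b)) (hd : ∀ x ∈ Set.Ioo a b, HasDerivAt F (F' x) x)
    (h : F a < F b) : ∃ y, a < y ∧ y < b ∧ 0 < F' y := by
  obtain ⟨y, h1, h2, h3⟩ := exists_deriv_mul_eq hab hc hd
  exact ⟨y, h1, h2, pos_of_mul_pos_left (h3 ▸ sub_pos.2 h) (sub_pos.2 hab).le⟩

theorem exists_deriv_nonneg {F F' : ℝ → ℝ} {a b : ℝ} (hab : a < b)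
    (hc : ContinuousOn F (Set.Icc a b)) (hd : ∀ x ∈ Set.Ioo a b, HasDerivAt F (F' x) x)
    (h : F a ≤ F b) : ∃ y, a < y ∧ y < b ∧ 0 ≤ F' y := by
  obtain ⟨y, h1, h2, h3⟩ := exists_deriv_mul_eq hab hc hd
  exact ⟨y, h1, h2, nonneg_of_mul_nonneg_left (h3 ▸ sub_nonneg.2 h) (sub_pos.2 hab)⟩

theorem exists_deriv_nonpos {F F' : ℝ → ℝ} {a b : ℝ} (hab : a < b)
    (hc : ContinuousOn F (Set.Icc a b)) (hd : ∀ x ∈ Set.Ioo a b, HasDerivAt F (F' x) x)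
    (h : F b ≤ F a) : ∃ y, a < y ∧ y < b ∧ F' y ≤ 0 := by
  obtain ⟨y, h1, h2, h3⟩ := exists_deriv_mul_eq hab hc hd
  refine ⟨y, h1, h2, ?_⟩
  by_contra! h4
  have := mul_pos h4 (sub_pos.2 hab)
  linarith

/-- The general element of the span of `(u log u)², u² log u, u², u log u, u, 1`, the space that
contains every quadratic polynomial in `u` and every quadratic form in `(u log u, u, 1)`. It is
continuous on all of `ℝ`; its value at `0` is `f`. -/
noncomputable def logPoly (α β γ d e f u : ℝ) : ℝ :=
  α * (u * log u) ^ 2 + β * (u * (u * log u)) + γ * u ^ 2 + d * (u * log u) + e * u + f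

/-- The derivative of `logPoly`, for `u > 0`. -/
noncomputable def logPolyD1 (α β γ d e u : ℝ) : ℝ :=
  2 * α * (u * log u ^ 2) + 2 * (α + β) * (u * log u) + (β + 2 * γ) * u + d * log u + (d + e)

/-- The function `u ↦ u · logPoly''(u)`; the factor `u` turns its derivative into a polynomial in
`log u`. -/
noncomputable def logPolyD2 (α β γ d u : ℝ) : ℝ :=
  u * (2 * α * log u ^ 2 + (6 * α + 2 * β) * log u + (2 * α + 3 * β + 2 * γ)) + d

/-- The derivative of `logPolyD2`: a quadratic in `log u` with leading coefficient `2 α`. -/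
noncomputable def logPolyD3 (α β γ u : ℝ) : ℝ :=
  2 * α * log u ^ 2 + (10 * α + 2 * β) * log u + (8 * α + 5 * β + 2 * γ)

theorem hasDerivAt_logPoly (α β γ d e f : ℝ) {u : ℝ} (hu : 0 < u) :
    HasDerivAt (logPoly α β γ d e f) (logPolyD1 α β γ d e u) u := by
  have hl := Real.hasDerivAt_log hu.ne'
  have hi := hasDerivAt_id u
  have hm := hi.mul hl
  have := ((((((hm.pow 2).const_mul α).add ((hi.mul hm).const_mul β)).add
    ((hi.pow 2).const_mul γ)).add (hm.const_mul d)).add (hi.const_mul e)).add_const f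
  refine this.congr_deriv ?_
  simp only [logPolyD1, Pi.mul_apply, id_eq]
  field_simp
  ring

theorem hasDerivAt_logPolyD1 (α β γ d e : ℝ) {u : ℝ} (hu : 0 < u) :
    HasDerivAt (logPolyD1 α β γ d e) (logPolyD2 α β γ d u / u) u := by
  have hl := Real.hasDerivAt_log hu.ne'
  have hi := hasDerivAt_id u
  have hm := hi.mul hl
  have := (((((hi.mul (hl.pow 2)).const_mul (2 * α)).add (hm.const_mul (2 * (α + β)))).add
    (hi.const_mul (β + 2 * γ))).add (hl.const_mul d)).add_const (d + e)
  refine this.congr_deriv ?_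
  simp only [logPolyD2, Pi.pow_apply, id_eq]
  field_simp
  ring

theorem hasDerivAt_logPolyD2 (α β γ d : ℝ) {u : ℝ} (hu : 0 < u) :
    HasDerivAt (logPolyD2 α β γ d) (logPolyD3 α β γ u) u := by
  have hl := Real.hasDerivAt_log hu.ne'
  have hi := hasDerivAt_id u
  have := (hi.mul ((((hl.pow 2).const_mul (2 * α)).add (hl.const_mul (6 * α + 2 * β))).add_const
    (2 * α + 3 * β + 2 * γ))).add_const d
  refine this.congr_deriv ?_
  simp only [logPolyD3, Pi.add_apply, Pi.pow_apply, id_eq]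
  field_simp
  ring

theorem continuous_logPoly (α β γ d e f : ℝ) : Continuous (logPoly α β γ d e f) := by
  have := Real.continuous_mul_log
  unfold logPoly
  fun_prop

/-- Descartes-type bound: applying the mean value theorem twice to `logPolyD1`, the alternating pattern
`>0, ≤0, ≥0, ≤0, ≥0` would force the pattern `>0, ≤0, ≥0` on a quadratic in `log u` which is
concave because `α ≤ 0`. -/
theorem not_sign_pattern {α β γ d e : ℝ} (hα : α ≤ 0) {y1 y2 y3 y4 y5 : ℝ}
    (h0 : 0 < y1) (h12 : y1 < y2) (h23 : y2 < y3) (h34 : y3 < y4) (h45 : y4 < y5)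
    (s1 : 0 < logPolyD1 α β γ d e y1) (s2 : logPolyD1 α β γ d e y2 ≤ 0)
    (s3 : 0 ≤ logPolyD1 α β γ d e y3)
    (s4 : logPolyD1 α β γ d e y4 ≤ 0) (s5 : 0 ≤ logPolyD1 α β γ d e y5) : False := by
  have hD : ∀ {a b : ℝ}, 0 < a →
      (∀ x ∈ Set.Ioo a b, HasDerivAt (logPolyD1 α β γ d e) (logPolyD2 α β γ d x / x) x) :=
    fun ha x hx => hasDerivAt_logPolyD1 _ _ _ _ _ (ha.trans hx.1)
  have hC : ∀ {a b : ℝ}, 0 < a → ContinuousOn (logPolyD1 α β γ d e) (Set.Icc a b) :=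
    fun ha x hx =>
      (hasDerivAt_logPolyD1 _ _ _ _ _ (ha.trans_le hx.1)).continuousAt.continuousWithinAt
  have hD2 : ∀ {a b : ℝ}, 0 < a →
      (∀ x ∈ Set.Ioo a b, HasDerivAt (logPolyD2 α β γ d) (logPolyD3 α β γ x) x) :=
    fun ha x hx => hasDerivAt_logPolyD2 _ _ _ _ (ha.trans hx.1)
  have hC2 : ∀ {a b : ℝ}, 0 < a → ContinuousOn (logPolyD2 α β γ d) (Set.Icc a b) :=
    fun ha x hx =>
      (hasDerivAt_logPolyD2 _ _ _ _ (ha.trans_le hx.1)).continuousAt.continuousWithinAt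
  obtain ⟨z1, a1, b1, m1, t1⟩ : ∃ z, y1 < z ∧ z < y2 ∧ 0 < z ∧ logPolyD2 α β γ d z < 0 := by
    obtain ⟨z, l1, l2, l3⟩ := exists_deriv_mul_eq h12 (hC h0) (hD h0)
    have hz := h0.trans l1
    refine ⟨z, l1, l2, hz, ?_⟩
    by_contra! h
    have := mul_nonneg (div_nonneg h hz.le) (sub_pos.2 h12).le
    linarith
  obtain ⟨z2, a2, b2, t2⟩ := exists_deriv_nonneg h23 (hC (by linarith)) (hD (by linarith))
    (s2.trans s3)
  obtain ⟨z3, a3, b3, t3⟩ := exists_deriv_nonpos h34 (hC (by linarith)) (hD (by linarith))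
    (s4.trans s3)
  obtain ⟨z4, a4, b4, t4⟩ := exists_deriv_nonneg h45 (hC (by linarith)) (hD (by linarith))
    (s4.trans s5)
  have k2 : 0 ≤ logPolyD2 α β γ d z2 := by
    have hz : 0 < z2 := by linarith
    simpa [div_mul_cancel₀ _ hz.ne'] using mul_nonneg t2 hz.le
  have k3 : logPolyD2 α β γ d z3 ≤ 0 := by
    have hz : 0 < z3 := by linarith
    simpa [div_mul_cancel₀ _ hz.ne'] using mul_nonpos_of_nonpos_of_nonneg t3 hz.le
  have k4 : 0 ≤ logPolyD2 α β γ d z4 := by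
    have hz : 0 < z4 := by linarith
    simpa [div_mul_cancel₀ _ hz.ne'] using mul_nonneg t4 hz.le
  obtain ⟨x1, c1, d1, q1⟩ := exists_deriv_pos (b1.trans a2) (hC2 m1) (hD2 m1) (t1.trans_le k2)
  obtain ⟨x2, c2, d2, q2⟩ := exists_deriv_nonpos (b2.trans a3) (hC2 (by linarith))
    (hD2 (by linarith)) (k3.trans k2)
  obtain ⟨x3, c3, d3, q3⟩ := exists_deriv_nonneg (b3.trans a4) (hC2 (by linarith))
    (hD2 (by linarith)) (k3.trans k4)
  have l12 : log x1 < log x2 := Real.log_lt_log (by linarith) (by linarith)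
  have l23 : log x2 < log x3 := Real.log_lt_log (by linarith) (by linarith)
  unfold logPolyD3 at q1 q2 q3
  -- A concave quadratic in `log u` cannot be positive, then nonpositive, then nonnegative.
  have e1 := mul_pos (sub_pos.2 l23) q1
  have e2 := mul_nonneg (sub_pos.2 l12).le q3
  have e3 := mul_nonneg (sub_pos.2 (l12.trans l23)).le (neg_nonneg.2 q2)
  have e4 := mul_nonneg (neg_nonneg.2 hα)
    (mul_pos (mul_pos (sub_pos.2 l12) (sub_pos.2 l23)) (sub_pos.2 (l12.trans l23))).le
  nlinarith

/-- A function of the family that is negative at `0` and vanishes at `r`, doubly at `A`, and at `1`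
is positive at every other point of `(r, 1)`: a nonpositive value would create one sign change too
many in its derivative. -/
theorem logPoly_pos {α β γ d e f r A u : ℝ} (hα : α ≤ 0) (hr : 0 < r) (hrA : r < A) (hA : A < 1)
    (h0 : logPoly α β γ d e f 0 < 0) (hHr : logPoly α β γ d e f r = 0)
    (hHA : logPoly α β γ d e f A = 0)
    (hH1 : logPoly α β γ d e f 1 = 0) (hdA : logPolyD1 α β γ d e A = 0)
    (hru : r < u) (hu1 : u < 1) (huA : u ≠ A) : 0 < logPoly α β γ d e f u := by
  by_contra! hu
  have hC : ∀ {a b : ℝ}, ContinuousOn (logPoly α β γ d e f) (Set.Icc a b) :=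
    (continuous_logPoly _ _ _ _ _ _).continuousOn
  have hD : ∀ {a b : ℝ}, 0 ≤ a →
      (∀ x ∈ Set.Ioo a b, HasDerivAt (logPoly α β γ d e f) (logPolyD1 α β γ d e x) x) :=
    fun ha x hx => hasDerivAt_logPoly _ _ _ _ _ _ (ha.trans_lt hx.1)
  -- The rise from the negative value at `0` to the zero at `r` starts the forbidden pattern.
  obtain ⟨y1, a1, b1, s1⟩ := exists_deriv_pos hr hC (hD le_rfl) (by rw [hHr]; exact h0)
  rcases lt_or_gt_of_ne huA with h | h
  · obtain ⟨y2, a2, b2, s2⟩ := exists_deriv_nonpos hru hC (hD hr.le) (by rw [hHr]; exact hu)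
    obtain ⟨y3, a3, b3, s3⟩ := exists_deriv_nonneg h hC (hD (by linarith))
      (by rw [hHA]; exact hu)
    obtain ⟨y5, a5, b5, s5⟩ := exists_deriv_nonneg hA hC (hD (by linarith)) (by rw [hHA, hH1])
    exact not_sign_pattern hα a1 (b1.trans a2) (b2.trans a3) b3 a5 s1 s2 s3 hdA.le s5
  · obtain ⟨y2, a2, b2, s2⟩ := exists_deriv_nonpos hrA hC (hD hr.le) (by rw [hHr, hHA])
    obtain ⟨y4, a4, b4, s4⟩ := exists_deriv_nonpos h hC (hD (by linarith))
      (by rw [hHA]; exact hu)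
    obtain ⟨y5, a5, b5, s5⟩ := exists_deriv_nonneg hu1 hC (hD (by linarith))
      (by rw [hH1]; exact hu)
    exact not_sign_pattern hα a1 (b1.trans a2) b2 a4 (b4.trans a5) s1 s2 hdA.ge s4 s5

/-! ### The dual kernel inequality -/

/-- `1/λ` in the variable `u = q^(x - x_L)`, up to the constant factor `((p₁+p₂-1) q^(x_L))²`. -/
noncomputable def wt (c δ u : ℝ) : ℝ := (c - u) * (δ * c + u)

/-- The determinant of the functions `u log u, u, 1` at the nodes `r, A, 1`. -/
noncomputable def nodeDet (r A : ℝ) : ℝ := A * log A * (1 - r) - r * log r * (1 - A)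

/-- The Lagrange basis at the nodes `r, A, 1` (in this order) of the span of `u log u, u, 1`. -/
noncomputable def lag (r A : ℝ) (u : ℝ) : Fin 3 → ℝ :=
  ![(-((1 - A) * (u * log u) + A * log A * (u - 1))) / nodeDet r A,
    ((1 - r) * (u * log u) + r * log r * (u - 1)) / nodeDet r A,
    ((A * log A - r * log r) * (u - r) - (A - r) * (u * log u - r * log r)) / nodeDet r A]

/-- Strict convexity of `u log u`, applied to `A` as a convex combination of `r` and `1`. -/
theorem nodeDet_neg {r A : ℝ} (hr : 0 < r) (hrA : r < A) (hA : A < 1) : nodeDet r A < 0 := by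
  have h1 : 0 < 1 - r := by linarith
  have ha : 0 < (1 - A) / (1 - r) := div_pos (by linarith) h1
  have hb : 0 < (A - r) / (1 - r) := div_pos (by linarith) h1
  have h := Real.strictConvexOn_mul_log.2 (Set.mem_Ici.2 hr.le) (Set.mem_Ici.2 zero_le_one)
    (by linarith : r ≠ 1) ha hb (by field_simp; ring)
  simp only [smul_eq_mul, log_one, mul_zero, add_zero, mul_one] at h
  rw [show (1 - A) / (1 - r) * r + (A - r) / (1 - r) = A by field_simp; ring] at h
  have h2 := mul_lt_mul_of_pos_right h h1
  have h3 : (1 - A) / (1 - r) * (r * log r) * (1 - r) = (1 - A) * (r * log r) := by field_simp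
  rw [h3] at h2
  unfold nodeDet
  linarith

theorem lag_r {r A : ℝ} (hD : nodeDet r A ≠ 0) : lag r A r = ![1, 0, 0] := by
  ext i
  fin_cases i
  · simp [lag]; rw [div_eq_one_iff_eq hD]; unfold nodeDet; ring
  · simp [lag]; left; ring
  · simp [lag]

theorem lag_A {r A : ℝ} (hD : nodeDet r A ≠ 0) : lag r A A = ![0, 1, 0] := by
  ext i
  fin_cases i
  · simp [lag]; left; ring
  · simp [lag]; rw [div_eq_one_iff_eq hD]; unfold nodeDet; ring
  · simp [lag]; left; ring

theorem lag_one {r A : ℝ} (hD : nodeDet r A ≠ 0) : lag r A 1 = ![0, 0, 1] := by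
  ext i
  fin_cases i
  · simp [lag]
  · simp [lag]
  · simp [lag]; rw [div_eq_one_iff_eq hD]; unfold nodeDet; ring

/-- Lagrange interpolation reproduces the basis functions. -/
theorem lag_repr {r A : ℝ} (hD : nodeDet r A ≠ 0) (u : ℝ) :
    !![r * log r, A * log A, 0; r, A, 1; 1, 1, 1] *ᵥ lag r A u = ![u * log u, u, 1] := by
  ext i
  fin_cases i <;> simp [lag, Matrix.mulVec, dotProduct, Fin.sum_univ_three] <;> field_simp <;>
    unfold nodeDet <;> ring

/-- The condition of the equivalence theorem, strict off the nodes. The difference of both sides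
belongs to the family `logPoly`; hypothesis `hE` says exactly that its derivative vanishes at `A`. -/
theorem wt_ge {c δ r A : ℝ} (hc : 1 < c) (hδ0 : 0 ≤ δ) (hδ1 : δ < 1) (hr : 0 < r)
    (hrA : r < A) (hA : A < 1)
    (hE : (2 / A) * (1 + (1 + r * log r / (1 - r) / A) /
        (log A - r * log r / (1 - r) * (1 / A - 1))) = 1 / (δ * c + A) - 1 / (c - A))
    {u : ℝ} (hru : r < u) (hu1 : u < 1) (huA : u ≠ A) :
    lag r A u 0 ^ 2 * wt c δ r + lag r A u 1 ^ 2 * wt c δ A + lag r A u 2 ^ 2 * wt c δ 1 <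
      wt c δ u := by
  have hD := nodeDet_neg hr hrA hA
  have hD0 := hD.ne
  have hδc : 0 ≤ δ * c := by positivity
  have hwr : 0 < wt c δ r := mul_pos (by linarith) (by linarith)
  have hwA : 0 < wt c δ A := mul_pos (by linarith) (by linarith)
  have hw1 : 0 < wt c δ 1 := mul_pos (by linarith) (by linarith)
  -- Coefficients of the fundamental functions in the basis `u log u, u, 1`
  obtain ⟨a0, b0, c0, h0, H0⟩ : ∃ a b c, (∀ u, lag r A u 0 = a * (u * log u) + b * u + c) ∧
      c = A * log A / nodeDet r A :=
    ⟨-(1 - A) / nodeDet r A, -(A * log A) / nodeDet r A, A * log A / nodeDet r A,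
      fun u => by simp [lag]; ring, rfl⟩
  obtain ⟨a1, b1, c1, h1, H1⟩ : ∃ a b c, (∀ u, lag r A u 1 = a * (u * log u) + b * u + c) ∧
      a * (log A + 1) + b = ((1 - r) * (log A + 1) + r * log r) / nodeDet r A :=
    ⟨(1 - r) / nodeDet r A, r * log r / nodeDet r A, -(r * log r) / nodeDet r A,
      fun u => by simp [lag]; ring, by ring⟩
  obtain ⟨a2, b2, c2, h2⟩ : ∃ a b c, ∀ u, lag r A u 2 = a * (u * log u) + b * u + c :=
    ⟨-(A - r) / nodeDet r A, (A * log A - r * log r) / nodeDet r A,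
      ((A - r) * (r * log r) - (A * log A - r * log r) * r) / nodeDet r A,
      fun u => by simp [lag]; ring⟩
  obtain ⟨α, β, γ, d, e, f, hα, hH, hH'⟩ : ∃ α β γ d e f, α ≤ 0 ∧
      (∀ u, logPoly α β γ d e f u = wt c δ u - (lag r A u 0 ^ 2 * wt c δ r +
        lag r A u 1 ^ 2 * wt c δ A + lag r A u 2 ^ 2 * wt c δ 1)) ∧
      (∀ u, logPolyD1 α β γ d e u = c * (1 - δ) - 2 * u -
        2 * (lag r A u 0 * (a0 * (log u + 1) + b0) * wt c δ r +
          lag r A u 1 * (a1 * (log u + 1) + b1) * wt c δ A +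
          lag r A u 2 * (a2 * (log u + 1) + b2) * wt c δ 1)) := by
    refine ⟨-(a0 ^ 2 * wt c δ r + a1 ^ 2 * wt c δ A + a2 ^ 2 * wt c δ 1),
      -2 * (a0 * b0 * wt c δ r + a1 * b1 * wt c δ A + a2 * b2 * wt c δ 1),
      -1 - (b0 ^ 2 * wt c δ r + b1 ^ 2 * wt c δ A + b2 ^ 2 * wt c δ 1),
      -2 * (a0 * c0 * wt c δ r + a1 * c1 * wt c δ A + a2 * c2 * wt c δ 1),
      c * (1 - δ) - 2 * (b0 * c0 * wt c δ r + b1 * c1 * wt c δ A + b2 * c2 * wt c δ 1),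
      δ * c ^ 2 - (c0 ^ 2 * wt c δ r + c1 ^ 2 * wt c δ A + c2 ^ 2 * wt c δ 1), ?_, ?_, ?_⟩
    · have : 0 ≤ a0 ^ 2 * wt c δ r + a1 ^ 2 * wt c δ A + a2 ^ 2 * wt c δ 1 := by positivity
      linarith
    · intro u
      rw [h0, h1, h2, show wt c δ u = (c - u) * (δ * c + u) from rfl, logPoly]
      ring
    · intro u
      rw [h0, h1, h2, logPolyD1]
      ring
  have key := logPoly_pos (α := α) (β := β) (γ := γ) (d := d) (e := e) (f := f) hα hr hrA hA
    ?_ ?_ ?_ ?_ ?_ hru hu1 huA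
  · rw [hH] at key
    linarith
  · -- The value at `0` is negative even when only the square belonging to the node `r` is kept,
    -- because that Lagrange function is at least `1 / (1 - r)` at `0`.
    rw [hH, h0 0, H0]
    have hφA : A * log A < 0 := mul_neg_of_pos_of_neg (hr.trans hrA) (log_neg (hr.trans hrA) hA)
    have hφr : r * log r < 0 := mul_neg_of_pos_of_neg hr (log_neg hr (hrA.trans hA))
    have hr1 : 0 < 1 - r := by linarith
    have hL : 1 / (1 - r) ≤ A * log A / nodeDet r A := by
      rw [le_div_iff_of_neg hD, one_div, inv_mul_eq_div, le_div_iff₀ hr1]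
      have := mul_nonneg (neg_nonneg.2 hφr.le) (sub_nonneg.2 hA.le)
      unfold nodeDet
      linarith
    have hw : δ * c ^ 2 * (1 - r) ^ 2 < wt c δ r := by
      -- The difference of the two sides is `r` times this expression.
      have e1 : 0 < (1 - δ) * (c - r) + δ * ((2 - r) * c ^ 2 - r) := by
        have : 0 < c - r := by linarith
        have : 0 < (2 - r) * c ^ 2 - r := by nlinarith
        have : 0 < 1 - δ := by linarith
        positivity
      unfold wt
      linarith [mul_pos hr e1]
    have hsq : 1 / (1 - r) ^ 2 ≤ (A * log A / nodeDet r A) ^ 2 := by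
      rw [← _root_.one_div_pow]
      gcongr
    have hfin : δ * c ^ 2 < (A * log A / nodeDet r A) ^ 2 * wt c δ r := by
      calc δ * c ^ 2 < 1 / (1 - r) ^ 2 * wt c δ r := by
            rw [one_div, inv_mul_eq_div, lt_div_iff₀ (by positivity)]; exact hw
        _ ≤ _ := by gcongr
    have hw0 : wt c δ 0 = δ * c ^ 2 := by unfold wt; ring
    have : 0 ≤ lag r A 0 1 ^ 2 * wt c δ A + lag r A 0 2 ^ 2 * wt c δ 1 := by positivity
    simp only [zero_mul, mul_zero, zero_add]
    linarith
  · rw [hH, lag_r hD0]; simp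
  · rw [hH, lag_A hD0]; simp
  · rw [hH, lag_one hD0]; simp
  · have hA0 : 0 < A := hr.trans hrA
    have hcA : c - A ≠ 0 := by linarith
    have hdA : δ * c + A ≠ 0 := by linarith
    have hr1 : 1 - r ≠ 0 := by linarith
    have hden : log A - r * log r / (1 - r) * (1 / A - 1) = nodeDet r A / (A * (1 - r)) := by
      unfold nodeDet; field_simp
    have hE' : 2 * (a1 * (log A + 1) + b1) = 1 / (δ * c + A) - 1 / (c - A) := by
      rw [← hE, hden, H1]
      field_simp
      unfold nodeDet
      ring
    have hw : (1 / (δ * c + A) - 1 / (c - A)) * wt c δ A = c * (1 - δ) - 2 * A := by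
      unfold wt; field_simp; ring
    rw [hH', lag_A hD0]
    simp only [cons_val_zero, cons_val_one, cons_val]
    rw [← hw, ← hE']
    ring

/-! ### Information matrices and the determinant-trace inequality -/

/-- The defect in the AM-GM inequality for three numbers, manifestly nonnegative for nonnegative
`a, b, c`. -/
theorem amgm_identity (a b c : ℝ) : (a + b + c) ^ 3 - 27 * (a * b * c) =
    (a + b + c) / 2 * ((a - b) ^ 2 + (b - c) ^ 2 + (a - c) ^ 2) +
      3 * (a * (b - c) ^ 2 + b * (a - c) ^ 2 + c * (a - b) ^ 2) := by ring

theorem eq_third {a b c : ℝ} (ha : 0 ≤ a) (hb : 0 ≤ b) (hc : 0 ≤ c) (hs : a + b + c = 1)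
    (hp : a * b * c = 1 / 27) : a = 1 / 3 ∧ b = 1 / 3 ∧ c = 1 / 3 := by
  have key := amgm_identity a b c
  rw [hs, hp] at key
  have p1 := mul_nonneg ha (sq_nonneg (b - c))
  have p2 := mul_nonneg hb (sq_nonneg (a - c))
  have p3 := mul_nonneg hc (sq_nonneg (a - b))
  have q1 := sq_nonneg (a - b)
  have q2 := sq_nonneg (b - c)
  have q3 := sq_nonneg (a - c)
  have e1 : a - b = 0 := (pow_eq_zero_iff two_ne_zero).1 (by linarith)
  have e2 : b - c = 0 := (pow_eq_zero_iff two_ne_zero).1 (by linarith)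
  refine ⟨by linarith, by linarith, by linarith⟩

theorem det_le_trace_pow {N : Matrix (Fin 3) (Fin 3) ℝ} (hN : N.PosSemidef) :
    N.det ≤ (N.trace / 3) ^ 3 := by
  have h1 := hN.isHermitian.det_eq_prod_eigenvalues
  have h2 := hN.isHermitian.trace_eq_sum_eigenvalues
  have h3 := hN.eigenvalues_nonneg
  simp only [Fin.prod_univ_three, Fin.sum_univ_three, RCLike.ofReal_real_eq_id, id] at h1 h2
  rw [h1, h2]
  have a := h3 0
  have b := h3 1
  have c := h3 2
  have := amgm_identity (hN.isHermitian.eigenvalues 0) (hN.isHermitian.eigenvalues 1)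
    (hN.isHermitian.eigenvalues 2)
  have : 0 ≤ (hN.isHermitian.eigenvalues 0 + hN.isHermitian.eigenvalues 1 +
    hN.isHermitian.eigenvalues 2) ^ 3 - 27 * (hN.isHermitian.eigenvalues 0 *
    hN.isHermitian.eigenvalues 1 * hN.isHermitian.eigenvalues 2) := by
    rw [this]; positivity
  linarith

/-- The information matrix `∑ w λ(x) f(x) f(x)ᵀ` for arbitrary `λ` and `f`. -/
noncomputable def info (lam : ℝ → ℝ) (f : ℝ → Fin 3 → ℝ) (ξ : ℝ →₀ ℝ) :
    Matrix (Fin 3) (Fin 3) ℝ :=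
  ξ.sum fun x w => (w * lam x) • vecMulVec (f x) (f x)

theorem info_add (lam : ℝ → ℝ) (f : ℝ → Fin 3 → ℝ) (ξ η : ℝ →₀ ℝ) :
    info lam f (ξ + η) = info lam f ξ + info lam f η := by
  apply Finsupp.sum_add_index'
  · intro x; simp
  · intro x a b; rw [add_mul, add_smul]

theorem info_single (lam : ℝ → ℝ) (f : ℝ → Fin 3 → ℝ) (x w : ℝ) :
    info lam f (Finsupp.single x w) = (w * lam x) • vecMulVec (f x) (f x) := by
  apply Finsupp.sum_single_index; simp

theorem info_eq_conj {lam : ℝ → ℝ} {f v : ℝ → Fin 3 → ℝ} {B : Matrix (Fin 3) (Fin 3) ℝ}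
    {ξ : ℝ →₀ ℝ} (h : ∀ x ∈ ξ.support, f x = B *ᵥ v x) :
    info lam f ξ = B * info lam v ξ * Bᵀ := by
  unfold info Finsupp.sum
  rw [Finset.mul_sum, Finset.sum_mul]
  refine Finset.sum_congr rfl fun x hx => ?_
  dsimp only
  rw [h x hx, Matrix.mul_smul, Matrix.smul_mul, Matrix.mul_vecMulVec, Matrix.vecMulVec_mul,
    Matrix.vecMul_transpose]

theorem det_info_conj {lam : ℝ → ℝ} {f v : ℝ → Fin 3 → ℝ} {B : Matrix (Fin 3) (Fin 3) ℝ}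
    {ξ : ℝ →₀ ℝ} (h : ∀ x ∈ ξ.support, f x = B *ᵥ v x) :
    (info lam f ξ).det = B.det ^ 2 * (info lam v ξ).det := by
  rw [info_eq_conj h, det_mul, det_mul, det_transpose]; ring

theorem info_posSemidef {lam : ℝ → ℝ} {v : ℝ → Fin 3 → ℝ} {ξ : ℝ →₀ ℝ}
    (h : ∀ x ∈ ξ.support, 0 ≤ ξ x * lam x) : (info lam v ξ).PosSemidef := by
  unfold info Finsupp.sum
  refine Matrix.posSemidef_sum _ fun x hx => ?_
  have := (Matrix.posSemidef_vecMulVec_self_star (v x)).smul (h x hx)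
  simpa using this

theorem info_trace (lam : ℝ → ℝ) (v : ℝ → Fin 3 → ℝ) (ξ : ℝ →₀ ℝ) :
    (info lam v ξ).trace = ∑ x ∈ ξ.support, ξ x * (lam x * (v x ⬝ᵥ v x)) := by
  unfold info Finsupp.sum
  simp [Matrix.trace_sum, Matrix.trace_vecMulVec, mul_assoc]

theorem info_nodes {lam : ℝ → ℝ} {v : ℝ → Fin 3 → ℝ} {n : Fin 3 → ℝ}
    (hn : ∀ i, lam (n i) • vecMulVec (v (n i)) (v (n i)) = diagonal (Pi.single i 1))
    (a b c : ℝ) :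
    info lam v (Finsupp.single (n 2) a + Finsupp.single (n 1) b + Finsupp.single (n 0) c) =
      diagonal ![c, b, a] := by
  simp only [info_add, info_single, mul_smul, hn]
  ext i j
  fin_cases i <;> fin_cases j <;> simp [diagonal]

/-- Sufficiency half of the equivalence theorem, with uniqueness, for a saturated design with equal
weights. The functions `v` are the regression functions in coordinates in which the information
matrix of `ξD` is `(1/3) I`; then every design has information matrix of trace at most `1`, and
trace `1` confines its support to the nodes. -/
theorem optimal_of_nodes {lam : ℝ → ℝ} {f v : ℝ → Fin 3 → ℝ} {B : Matrix (Fin 3) (Fin 3) ℝ}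
    {n : Fin 3 → ℝ} {xL xU : ℝ} (hB : B.det ≠ 0) (hinj : Function.Injective n)
    (hmem : ∀ i, n i ∈ Set.Icc xL xU)
    (hf : ∀ x ∈ Set.Icc xL xU, f x = B *ᵥ v x)
    (hlam : ∀ x ∈ Set.Icc xL xU, 0 ≤ lam x)
    (hle : ∀ x ∈ Set.Icc xL xU, lam x * (v x ⬝ᵥ v x) ≤ 1)
    (heq : ∀ x ∈ Set.Icc xL xU, lam x * (v x ⬝ᵥ v x) = 1 → ∃ i, x = n i)
    (hn : ∀ i, lam (n i) • vecMulVec (v (n i)) (v (n i)) = diagonal (Pi.single i 1))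
    {ξD : ℝ →₀ ℝ} (hξD : ξD = Finsupp.single (n 2) (1 / 3) + Finsupp.single (n 1) (1 / 3)
            + Finsupp.single (n 0) (1 / 3))
    {ξ : ℝ →₀ ℝ} (hξ : IsDesign xL xU ξ) :
    (info lam f ξ).det ≤ (info lam f ξD).det ∧
      ((info lam f ξ).det = (info lam f ξD).det → ξ = ξD) := by
  obtain ⟨hsupp, hsum⟩ := hξ
  rw [Finsupp.sum] at hsum
  have hDsupp : ∀ x ∈ ξD.support, x ∈ Set.Icc xL xU := by
    intro x hx
    by_contra hx'
    have h : ∀ i, n i ≠ x := fun i hi => hx' (hi ▸ hmem i)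
    rw [Finsupp.mem_support_iff, hξD] at hx
    simp [h] at hx
  have hdetD : (info lam f ξD).det = B.det ^ 2 * (1 / 27) := by
    rw [det_info_conj fun x hx => hf x (hDsupp x hx), hξD, info_nodes hn, det_diagonal]
    simp [Fin.prod_univ_three]; norm_num
  have hdet := det_info_conj (lam := lam) fun x hx => hf x (hsupp x hx).1
  have hpsd : (info lam v ξ).PosSemidef :=
    info_posSemidef fun x hx => mul_nonneg (hsupp x hx).2.le (hlam x (hsupp x hx).1)
  have htr0 := hpsd.trace_nonneg
  have hterm : ∀ x ∈ ξ.support, ξ x * (lam x * (v x ⬝ᵥ v x)) ≤ ξ x := fun x hx =>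
    mul_le_of_le_one_right (hsupp x hx).2.le (hle x (hsupp x hx).1)
  have htr : (info lam v ξ).trace ≤ 1 := by
    rw [info_trace, ← hsum]
    exact Finset.sum_le_sum hterm
  have hamgm := det_le_trace_pow hpsd
  have hB2 : 0 < B.det ^ 2 := by positivity
  have hcube : ((info lam v ξ).trace / 3) ^ 3 ≤ 1 / 27 := by
    calc _ ≤ ((1 : ℝ) / 3) ^ 3 := by gcongr
      _ = _ := by norm_num
  refine ⟨?_, fun h => ?_⟩
  · rw [hdet, hdetD]
    gcongr
    linarith
  · rw [hdet, hdetD] at h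
    have hN : (info lam v ξ).det = 1 / 27 := mul_left_cancel₀ hB2.ne' h
    have htr1 : (info lam v ξ).trace = 1 := by
      refine le_antisymm htr ?_
      by_contra! hlt
      have : ((info lam v ξ).trace / 3) ^ 3 < (1 / 3) ^ 3 := by gcongr
      norm_num at this
      linarith
    have hall : ∀ x ∈ ξ.support, ∃ i, x = n i := by
      intro x hx
      refine heq x (hsupp x hx).1 ?_
      have := (Finset.sum_eq_sum_iff_of_le hterm).1
        (by rw [← info_trace, htr1, hsum]) x hx
      exact mul_left_cancel₀ (hsupp x hx).2.ne' (this.trans (mul_one _).symm)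
    have h01 : n 0 ≠ n 1 := hinj.ne (by decide)
    have h02 : n 0 ≠ n 2 := hinj.ne (by decide)
    have h12 : n 1 ≠ n 2 := hinj.ne (by decide)
    have hrep : ξ = Finsupp.single (n 2) (ξ (n 2)) + Finsupp.single (n 1) (ξ (n 1)) +
        Finsupp.single (n 0) (ξ (n 0)) := by
      ext x
      by_cases hx : x ∈ ξ.support
      · obtain ⟨i, rfl⟩ := hall x hx
        fin_cases i <;> simp [h01, h02, h12, h01.symm, h02.symm, h12.symm]
      · have hx0 := Finsupp.notMem_support_iff.1 hx
        have : ∀ i, n i = x → ξ (n i) = 0 := fun i hi => hi ▸ hx0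
        simp only [Finsupp.add_apply, Finsupp.single_apply, hx0]
        split_ifs <;> simp_all
    have hdiag := info_nodes hn (ξ (n 2)) (ξ (n 1)) (ξ (n 0))
    rw [← hrep] at hdiag
    rw [hdiag, det_diagonal, Fin.prod_univ_three] at hN
    rw [hdiag, trace_diagonal, Fin.sum_univ_three] at htr1
    simp only [cons_val_zero, cons_val_one, cons_val] at hN htr1
    have hnn : ∀ x, 0 ≤ ξ x := fun x => by
      by_cases hx : x ∈ ξ.support
      · exact (hsupp x hx).2.le
      · exact (Finsupp.notMem_support_iff.1 hx).ge
    obtain ⟨e0, e1, e2⟩ := eq_third (hnn (n 0)) (hnn (n 1)) (hnn (n 2)) htr1 hN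
    rw [hrep, hξD, e0, e1, e2]

/-! ### The group testing model -/

/-- In the variable `u = q^(x - x_L)` the gradient vector is a fixed linear image of
`(u log u, u, 1)`. -/
theorem gtF_eq {p0 p1 p2 xL u x : ℝ} (hq : 0 < 1 - p0) (hlq : log (1 - p0) ≠ 0)
    (hu : u = (1 - p0) ^ (x - xL)) :
    gtF p0 p1 p2 x =
      !![(p1 + p2 - 1) * (1 - p0) ^ (xL - 1) / log (1 - p0),
          (p1 + p2 - 1) * (1 - p0) ^ (xL - 1) * xL, 0;
        0, -(1 - p0) ^ xL, 1; 0, -(1 - p0) ^ xL, 0] *ᵥ ![u * log u, u, 1] := by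
  have hlu : log u = (x - xL) * log (1 - p0) := by rw [hu, log_rpow hq]
  have hx : (1 - p0) ^ x = (1 - p0) ^ xL * u := by
    rw [hu, ← rpow_add hq]; congr 1; ring
  have hx1 : (1 - p0) ^ (x - 1) = (1 - p0) ^ (xL - 1) * u := by
    rw [hu, ← rpow_add hq]; congr 1; ring
  ext i
  fin_cases i
  · simp [gtF, Matrix.mulVec, dotProduct, Fin.sum_univ_three, hx1, hlu]
    field_simp
    ring
  · simp [gtF, Matrix.mulVec, dotProduct, Fin.sum_univ_three, hx]
    ring
  · simp [gtF, Matrix.mulVec, dotProduct, Fin.sum_univ_three, hx]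

/-- Theorem 2: if `A₁ ∈ (r,1)` solves equation (E1), then the three-point design `ξ_D` with
equal weights `1/3` at `x_L`, `x₂* = x_L + log A₁ / log(1−p₀)` and `x_U` is the unique
`D`-optimal design: it maximizes `det M(ξ)` over all designs, uniquely. -/
theorem D_optimal_design
    (p0 p1 p2 xL xU c δ r Δ0 A1 x2s : ℝ)
    (hp0 : p0 ∈ Set.Ioo (0 : ℝ) 1)
    (hp1 : p1 ∈ Set.Ioc (1 / 2 : ℝ) 1) (hp2 : p2 ∈ Set.Ioc (1 / 2 : ℝ) 1)
    (hxL : 1 ≤ xL) (hxLU : xL < xU)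
    (hc : c = p1 / ((p1 + p2 - 1) * (1 - p0) ^ xL))
    (hδ : δ = (1 - p1) / p1)
    (hr : r = (1 - p0) ^ (xU - xL))
    (hΔ0 : Δ0 = r * Real.log r / (1 - r))
    (hA1 : A1 ∈ Set.Ioo r 1)
    (hE1 : (2 / A1) * (1 + (1 + Δ0 / A1) / (Real.log A1 - Δ0 * (1 / A1 - 1)))
            = 1 / (δ * c + A1) - 1 / (c - A1))
    (hx2s : x2s = xL + Real.log A1 / Real.log (1 - p0))
    (ξD : ℝ →₀ ℝ)
    (hξD : ξD = Finsupp.single xL (1 / 3) + Finsupp.single x2s (1 / 3)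
            + Finsupp.single xU (1 / 3)) :
    ∀ ξ : ℝ →₀ ℝ, IsDesign xL xU ξ →
      (gtInfo p0 p1 p2 ξ).det ≤ (gtInfo p0 p1 p2 ξD).det ∧
      ((gtInfo p0 p1 p2 ξ).det = (gtInfo p0 p1 p2 ξD).det → ξ = ξD) := by

  intro ξ hξ
  have hq : 0 < 1 - p0 := by linarith [hp0.2]
  have hq1 : 1 - p0 < 1 := by linarith [hp0.1]
  have hlq : log (1 - p0) < 0 := log_neg hq hq1
  have hκ : 0 < p1 + p2 - 1 := by linarith [hp1.1, hp2.1]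
  have hp1' : 0 < p1 := by linarith [hp1.1]
  have hqL : 0 < (1 - p0) ^ xL := rpow_pos_of_pos hq _
  have hqL1 : (1 - p0) ^ xL < 1 := rpow_lt_one hq.le hq1 (by linarith)
  obtain ⟨K, hK⟩ : ∃ K, K = (p1 + p2 - 1) * (1 - p0) ^ xL := ⟨_, rfl⟩
  have hK0 : 0 < K := hK ▸ mul_pos hκ hqL
  have hcK : c * K = p1 := by rw [hc, ← hK, div_mul_cancel₀ _ hK0.ne']
  have hδc : δ * p1 = 1 - p1 := by rw [hδ, div_mul_cancel₀ _ hp1'.ne']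
  have hKp : K < p1 := by rw [hK]; nlinarith [hp2.2]
  have hc1 : 1 < c := by rw [hc, ← hK]; exact (one_lt_div hK0).2 hKp
  have hδ0 : 0 ≤ δ := hδ ▸ div_nonneg (by linarith [hp1.2]) hp1'.le
  have hδ1 : δ < 1 := by rw [hδ]; exact (div_lt_one hp1').2 (by linarith [hp1.1])
  have hr0 : 0 < r := hr ▸ rpow_pos_of_pos hq _
  obtain ⟨hrA, hA⟩ := hA1
  have hA0 : 0 < A1 := hr0.trans hrA
  have hlr : log r = (xU - xL) * log (1 - p0) := by rw [hr, log_rpow hq]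
  have hlA : log A1 = (x2s - xL) * log (1 - p0) := by
    rw [hx2s]; field_simp [hlq.ne]; ring
  have hx2L : xL < x2s := by
    have := log_neg hA0 hA
    by_contra! h
    have := mul_nonneg_of_nonpos_of_nonpos (sub_nonpos.2 h) hlq.le
    linarith
  have hx2U : x2s < xU := by
    have := log_lt_log hr0 hrA
    rw [hlr, hlA] at this
    by_contra! h
    nlinarith
  have hD := nodeDet_neg hr0 hrA hA
  rw [hΔ0] at hE1
  obtain ⟨U, hU⟩ : ∃ U : ℝ → ℝ, ∀ x, U x = (1 - p0) ^ (x - xL) := ⟨_, fun _ => rfl⟩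
  have hUL : U xL = 1 := by rw [hU, sub_self, rpow_zero]
  have hUU : U xU = r := by rw [hU, hr]
  have hU2 : U x2s = A1 := by
    rw [hU, rpow_def_of_pos hq, mul_comm, ← hlA, exp_log hA0]
  have hanti : StrictAnti U := fun x y hxy => by
    rw [hU, hU]; exact rpow_lt_rpow_of_exponent_gt hq hq1 (by linarith)
  have hUmem : ∀ x ∈ Set.Icc xL xU, r ≤ U x ∧ U x ≤ 1 := fun x hx =>
    ⟨hUU ▸ hanti.antitone hx.2, hUL ▸ hanti.antitone hx.1⟩
  have hwt : ∀ u, r ≤ u → u ≤ 1 → 0 < wt c δ u := fun u h1 h2 =>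
    mul_pos (by linarith) (add_pos_of_nonneg_of_pos (mul_nonneg hδ0 (by linarith)) (by linarith))
  have hlam : ∀ x, gtLam p0 p1 p2 x = 1 / (K ^ 2 * wt c δ (U x)) := by
    intro x
    have hx : (p1 + p2 - 1) * (1 - p0) ^ x = K * U x := by
      rw [hK, hU, mul_assoc, ← rpow_add hq]; congr 2; ring
    have h1 : 1 - p1 = K * (δ * c) := by rw [← hδc, ← hcK]; ring
    have h2 : gtPi p0 p1 p2 x = K * (c - U x) := by rw [gtPi, hx, ← hcK]; ring
    have h3 : 1 - gtPi p0 p1 p2 x = K * (δ * c + U x) := by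
      rw [gtPi, hx, mul_add, ← h1]; ring
    rw [gtLam, h3, h2, wt]; congr 1; ring
  -- Scaling of the Lagrange functions under which the information matrix of `ξD` is `(1/3) I`.
  obtain ⟨s, hs⟩ : ∃ s : Fin 3 → ℝ,
      s = ![K * √(wt c δ r), K * √(wt c δ A1), K * √(wt c δ 1)] := ⟨_, rfl⟩
  have hwr := hwt r le_rfl (by linarith)
  have hwA := hwt A1 hrA.le hA.le
  have hw1 := hwt 1 (by linarith) le_rfl
  have hs0 : ∀ i, s i ≠ 0 := by
    intro i
    rw [hs]
    fin_cases i <;> simp [hK0.ne', (sqrt_pos.2 hwr).ne', (sqrt_pos.2 hwA).ne',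
      (sqrt_pos.2 hw1).ne']
  obtain ⟨v, hv⟩ : ∃ v : ℝ → Fin 3 → ℝ, ∀ x i, v x i = s i * lag r A1 (U x) i :=
    ⟨_, fun _ _ => rfl⟩
  have hvv : ∀ x, v x ⬝ᵥ v x = K ^ 2 * (lag r A1 (U x) 0 ^ 2 * wt c δ r +
      lag r A1 (U x) 1 ^ 2 * wt c δ A1 + lag r A1 (U x) 2 ^ 2 * wt c δ 1) := by
    intro x
    have e1 := sq_sqrt hwr.le
    have e2 := sq_sqrt hwA.le
    have e3 := sq_sqrt hw1.le
    simp only [dotProduct, Fin.sum_univ_three, hv, hs, cons_val_zero, cons_val_one, cons_val]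
    linear_combination K ^ 2 * lag r A1 (U x) 0 ^ 2 * e1 + K ^ 2 * lag r A1 (U x) 1 ^ 2 * e2
      + K ^ 2 * lag r A1 (U x) 2 ^ 2 * e3
  have hker : ∀ x ∈ Set.Icc xL xU, gtLam p0 p1 p2 x * (v x ⬝ᵥ v x) =
      (lag r A1 (U x) 0 ^ 2 * wt c δ r + lag r A1 (U x) 1 ^ 2 * wt c δ A1 +
        lag r A1 (U x) 2 ^ 2 * wt c δ 1) / wt c δ (U x) := by
    intro x hx
    have := hwt _ (hUmem x hx).1 (hUmem x hx).2
    rw [hvv, hlam]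
    field_simp
  have hlt : ∀ x ∈ Set.Icc xL xU, x ≠ xU → x ≠ x2s → x ≠ xL →
      gtLam p0 p1 p2 x * (v x ⬝ᵥ v x) < 1 := by
    intro x hx h1 h2 h3
    have hw := hwt _ (hUmem x hx).1 (hUmem x hx).2
    rw [hker x hx, div_lt_one hw]
    refine wt_ge hc1 hδ0 hδ1 hr0 hrA hA hE1 ?_ ?_ ?_
    · rw [← hUU]; exact hanti (lt_of_le_of_ne hx.2 h1)
    · rw [← hUL]; exact hanti (lt_of_le_of_ne hx.1 h3.symm)
    · rw [← hU2]; exact hanti.injective.ne h2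
  have hlagn : ∀ i, lag r A1 (U ((![xU, x2s, xL] : Fin 3 → ℝ) i)) = Pi.single i 1 := by
    intro i
    fin_cases i
    · simp only [Fin.zero_eta, cons_val_zero, hUU, lag_r hD.ne]
      ext j; fin_cases j <;> simp
    · simp only [Fin.mk_one, cons_val_one, cons_val_zero, hU2, lag_A hD.ne]
      ext j; fin_cases j <;> simp
    · simp only [Fin.reduceFinMk, cons_val, hUL, lag_one hD.ne]
      ext j; fin_cases j <;> simp
  have hlams : ∀ i, gtLam p0 p1 p2 ((![xU, x2s, xL] : Fin 3 → ℝ) i) * (s i * s i) = 1 := by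
    intro i
    rw [hlam, hs]
    have e1 := mul_self_sqrt hwr.le
    have e2 := mul_self_sqrt hwA.le
    have e3 := mul_self_sqrt hw1.le
    fin_cases i
    · simp [hUU, mul_mul_mul_comm, e1]; field_simp
    · simp [hU2, mul_mul_mul_comm, e2]; field_simp
    · simp [hUL, mul_mul_mul_comm, e3]; field_simp
  have hnode : ∀ i, gtLam p0 p1 p2 ((![xU, x2s, xL] : Fin 3 → ℝ) i) •
      vecMulVec (v ((![xU, x2s, xL] : Fin 3 → ℝ) i)) (v ((![xU, x2s, xL] : Fin 3 → ℝ) i)) =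
        diagonal (Pi.single i 1) := by
    intro i
    have hvn : v ((![xU, x2s, xL] : Fin 3 → ℝ) i) = Pi.single i (s i) := by
      ext j
      rw [hv, hlagn]
      by_cases hij : j = i
      · subst hij; simp
      · simp [hij]
    have h := hlams i
    rw [hvn]
    ext j k
    by_cases hj : j = i
    · subst hj
      by_cases hk : k = j
      · subst hk; simpa [vecMulVec_apply] using h
      · simp [vecMulVec_apply, hk, diagonal, Ne.symm hk]
    · by_cases hk : j = k
      · subst hk; simp [vecMulVec_apply, hj]
      · simp [vecMulVec_apply, hj, diagonal, hk]
  have hnodele : ∀ i, gtLam p0 p1 p2 ((![xU, x2s, xL] : Fin 3 → ℝ) i) *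
      (v ((![xU, x2s, xL] : Fin 3 → ℝ) i) ⬝ᵥ v ((![xU, x2s, xL] : Fin 3 → ℝ) i)) = 1 := by
    intro i
    have := congrArg trace (hnode i)
    simpa [trace_vecMulVec] using this
  refine optimal_of_nodes (xL := xL) (xU := xU) (lam := gtLam p0 p1 p2) (f := gtF p0 p1 p2)
    (n := ![xU, x2s, xL]) (v := v)
    (B := !![(p1 + p2 - 1) * (1 - p0) ^ (xL - 1) / log (1 - p0),
          (p1 + p2 - 1) * (1 - p0) ^ (xL - 1) * xL, 0;
        0, -(1 - p0) ^ xL, 1; 0, -(1 - p0) ^ xL, 0] *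
      (!![r * log r, A1 * log A1, 0; r, A1, 1; 1, 1, 1] * diagonal fun i => (s i)⁻¹))
    ?_ ?_ ?_ ?_ ?_ ?_ ?_ hnode hξD hξ
  · have h1 : (1 - p0) ^ (xL - 1) ≠ 0 := (rpow_pos_of_pos hq _).ne'
    have h2 : (!![r * log r, A1 * log A1, 0; r, A1, 1; 1, 1, 1] : Matrix _ _ ℝ).det =
        nodeDet r A1 := by
      rw [det_fin_three]; simp [nodeDet]; ring
    rw [det_mul, det_mul, h2, det_diagonal, det_fin_three]
    refine mul_ne_zero ?_ (mul_ne_zero hD.ne (Finset.prod_ne_zero_iff.2 fun i _ =>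
      inv_ne_zero (hs0 i)))
    simp [hκ.ne', h1, hlq.ne, hqL.ne']
  · intro i j hij
    fin_cases i <;> fin_cases j <;> simp at hij ⊢ <;> linarith
  · intro i
    fin_cases i
    · exact ⟨hxLU.le, le_rfl⟩
    · exact ⟨hx2L.le, hx2U.le⟩
    · exact ⟨le_rfl, hxLU.le⟩
  · intro x hx
    rw [gtF_eq hq hlq.ne (hU x), ← mulVec_mulVec, ← mulVec_mulVec, ← lag_repr hD.ne]
    congr 2
    ext i
    rw [mulVec_diagonal, hv, inv_mul_cancel_left₀ (hs0 i)]
  · intro x hx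
    have := hwt _ (hUmem x hx).1 (hUmem x hx).2
    rw [hlam]; positivity
  · intro x hx
    by_cases h1 : x = xU
    · subst h1; exact (hnodele 0).le
    by_cases h2 : x = x2s
    · rw [h2]; exact (hnodele 1).le
    by_cases h3 : x = xL
    · rw [h3]; exact (hnodele 2).le
    exact (hlt x hx h1 h2 h3).le
  · intro x hx h
    by_cases h1 : x = xU
    · exact ⟨0, h1⟩
    by_cases h2 : x = x2s
    · exact ⟨1, h2⟩
    by_cases h3 : x = xL
    · exact ⟨2, h3⟩
    exact absurd h (hlt x hx h1 h2 h3).ne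
end

section
/- Fix three group sizes x1 < x2 < x3 in [x_L, x_U] and let M_f be the 3×3 matrix with columns f(x1), f(x2), f(x3). For any weights w1, w2, w3 > 0 with w1 + w2 + w3 = 1, let ξ be the design with these sizes and weights. Then for every u ∈ ℝ³ with M(ξ)u = e1 (where e1 = (1,0,0)^T), one has u_1 ≥ det(M_f)^{−2}(Σ_{j=1}^3 Q_j(x1,x2,x3)^{1/2})², and equality holds for some such u if and only if w_i = Q_i(x1,x2,x3)^{1/2} / Σ_{j=1}^3 Q_j(x1,x2,x3)^{1/2} for i = 1,2,3. (These are the unique D_s-optimal weights for estimating the prevalence p0 at the given group sizes.) -/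
/-!
Write `aᵢ = q ^ xᵢ`, `D = det M_f` and `dᵢ = wᵢ λ(xᵢ) > 0`, so that `M = M_f diag(d) M_fᵀ`.

* `D ≠ 0`: the cofactors of the first row of `M_f` are `a₂ - a₃`, `-(a₁ - a₃)`, `a₁ - a₂`, and
  since `xᵢ = log aᵢ / log q`, up to a nonzero factor `D` is the second-order divided difference of
  the strictly convex function `t ↦ t log t` at `a₃ < a₂ < a₁` (`mfDet_ne_zero`).
* If `M u = e₁`, put `zᵢ = f(xᵢ) · u`. Cramer's rule determines every `dᵢ zᵢ` as (cofactor) / `D`,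
  and `u₁ = u · M u = ∑ dᵢ zᵢ²`. Hence `u₁ = D⁻² ∑ Qᵢ / wᵢ` for each solution `u` (`fst_solution`),
  and a solution exists because `M` is invertible.
* Since `∑ wᵢ = 1`, we have `∑ Qᵢ / wᵢ - S² = ∑ (√Qᵢ - S wᵢ)² / wᵢ` (`sum_div_sub_sq`), which is
  nonnegative and vanishes exactly when `wᵢ = √Qᵢ / S`.
-/

open Real Matrix

/-- Since `0 < q ^ x < 1`, the response probability satisfies `1 - p₂ < π(x) < p₁`. -/
lemma gtLam_pos {p0 p1 p2 x : ℝ} (hp0 : p0 ∈ Set.Ioo (0 : ℝ) 1)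
    (hp1 : p1 ∈ Set.Ioc (1 / 2 : ℝ) 1) (hp2 : p2 ∈ Set.Ioc (1 / 2 : ℝ) 1) (hx : 0 < x) :
    0 < gtLam p0 p1 p2 x := by
  obtain ⟨h0, h0'⟩ := hp0
  obtain ⟨h1, h1'⟩ := hp1
  obtain ⟨h2, h2'⟩ := hp2
  have ha : 0 < (1 - p0) ^ x := Real.rpow_pos_of_pos (by linarith) x
  have ha' : (1 - p0) ^ x < 1 := Real.rpow_lt_one (by linarith) (by linarith) hx
  have hc : 0 < p1 + p2 - 1 := by linarith
  have hπ : 0 < gtPi p0 p1 p2 x := by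
    unfold gtPi
    nlinarith [mul_pos hc (sub_pos.2 ha')]
  have hπ' : 0 < 1 - gtPi p0 p1 p2 x := by
    unfold gtPi
    nlinarith [mul_pos hc ha]
  unfold gtLam
  positivity

lemma mfDet_eq (p0 p1 p2 x1 x2 x3 : ℝ) :
    ((Matrix.of ![gtF p0 p1 p2 x1, gtF p0 p1 p2 x2, gtF p0 p1 p2 x3])ᵀ).det =
      gtF p0 p1 p2 x1 0 * ((1 - p0) ^ x2 - (1 - p0) ^ x3)
        - gtF p0 p1 p2 x2 0 * ((1 - p0) ^ x1 - (1 - p0) ^ x3)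
        + gtF p0 p1 p2 x3 0 * ((1 - p0) ^ x1 - (1 - p0) ^ x2) := by
  rw [Matrix.det_transpose, Matrix.det_fin_three]
  simp [gtF]
  ring

/-- `M_f` is nonsingular, by strict convexity of `t ↦ t log t`. -/
lemma mfDet_ne_zero {p0 p1 p2 x1 x2 x3 : ℝ} (hp0 : p0 ∈ Set.Ioo (0 : ℝ) 1)
    (hc : 0 < p1 + p2 - 1) (h12 : x1 < x2) (h23 : x2 < x3) :
    ((Matrix.of ![gtF p0 p1 p2 x1, gtF p0 p1 p2 x2, gtF p0 p1 p2 x3])ᵀ).det ≠ 0 := by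
  obtain ⟨h0, h0'⟩ := hp0
  have hq : 0 < 1 - p0 := by linarith
  have hlog : Real.log (1 - p0) < 0 := Real.log_neg hq (by linarith)
  have hpos : ∀ x : ℝ, 0 < (1 - p0) ^ x := fun x => Real.rpow_pos_of_pos hq x
  have hanti : ∀ {x y : ℝ}, x < y → (1 - p0) ^ y < (1 - p0) ^ x := fun h =>
    Real.rpow_lt_rpow_of_exponent_gt hq (by linarith) h
  have h := Real.strictConvexOn_mul_log.slope_strict_mono_adjacent
    (Set.mem_Ici.2 (hpos x3).le) (Set.mem_Ici.2 (hpos x1).le) (hanti h23) (hanti h12)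
  have e1 := sub_pos.2 (hanti h12)
  have e2 := sub_pos.2 (hanti h23)
  rw [div_lt_div_iff₀ e2 e1] at h
  simp only [Real.log_rpow hq] at h
  rw [mfDet_eq]
  simp only [gtF, Matrix.cons_val_zero, Real.rpow_sub_one hq.ne']
  set a1 := (1 - p0) ^ x1
  set a2 := (1 - p0) ^ x2
  set a3 := (1 - p0) ^ x3
  intro hD
  -- Multiplied by `log q`, this combination is the cross-multiplied slope inequality `h` turned
  -- into an equality.
  have hE : (x1 * a1 * (a2 - a3) - x2 * a2 * (a1 - a3) + x3 * a3 * (a1 - a2)) = 0 := by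
    have : (p1 + p2 - 1) / (1 - p0) *
        (x1 * a1 * (a2 - a3) - x2 * a2 * (a1 - a3) + x3 * a3 * (a1 - a2)) = 0 := by
      rw [← hD]; ring
    exact (mul_eq_zero.1 this).resolve_left (div_pos hc hq).ne'
  exact absurd h (not_lt.2 (le_of_eq (by linear_combination Real.log (1 - p0) * hE)))

/-- `M(ξ) = M_f diag(wᵢ λ(xᵢ)) M_fᵀ`. -/
lemma sum_gtAtom_eq (p0 p1 p2 w1 w2 w3 x1 x2 x3 : ℝ) :
    gtAtom p0 p1 p2 w1 x1 + gtAtom p0 p1 p2 w2 x2 + gtAtom p0 p1 p2 w3 x3 =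
      (Matrix.of ![gtF p0 p1 p2 x1, gtF p0 p1 p2 x2, gtF p0 p1 p2 x3])ᵀ *
        Matrix.diagonal ![w1 * gtLam p0 p1 p2 x1, w2 * gtLam p0 p1 p2 x2,
          w3 * gtLam p0 p1 p2 x3] *
        Matrix.of ![gtF p0 p1 p2 x1, gtF p0 p1 p2 x2, gtF p0 p1 p2 x3] := by
  ext i j
  simp [gtAtom, Matrix.mul_apply, Fin.sum_univ_three, Matrix.vecMulVec_apply,
    Matrix.diagonal_apply]
  ring

/-- The first coordinate of a solution of `∑ dᵢ (fᵢ · u) fᵢ = e₁` with `fᵢ = (Aᵢ, 1 - aᵢ, -aᵢ)`: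
by Cramer's rule `yᵢ = dᵢ (fᵢ · u)` is a cofactor over `D`, and `u₁ = ∑ yᵢ² / dᵢ`. -/
lemma fst_solution_aux {A1 A2 A3 a1 a2 a3 d1 d2 d3 u0 u1 u2 D : ℝ}
    (hd1 : d1 ≠ 0) (hd2 : d2 ≠ 0) (hd3 : d3 ≠ 0) (hD0 : D ≠ 0)
    (hD : D = A1 * (a2 - a3) - A2 * (a1 - a3) + A3 * (a1 - a2))
    (y1 y2 y3 : ℝ)
    (hy1 : y1 = d1 * (A1 * u0 + (1 - a1) * u1 + -a1 * u2))
    (hy2 : y2 = d2 * (A2 * u0 + (1 - a2) * u1 + -a2 * u2))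
    (hy3 : y3 = d3 * (A3 * u0 + (1 - a3) * u1 + -a3 * u2))
    (E0 : y1 * A1 + y2 * A2 + y3 * A3 = 1)
    (E1 : y1 * (1 - a1) + y2 * (1 - a2) + y3 * (1 - a3) = 0)
    (E2 : y1 * -a1 + y2 * -a2 + y3 * -a3 = 0) :
    u0 = ((a2 - a3) ^ 2 / d1 + (a1 - a3) ^ 2 / d2 + (a1 - a2) ^ 2 / d3) / D ^ 2 := by
  have F : y1 + y2 + y3 = 0 := by linear_combination E1 - E2
  have c1 : y1 * D = a2 - a3 := by
    rw [hD]
    linear_combination (a2 - a3) * E0 + A2 * (a3 * F + E2) - A3 * (a2 * F + E2)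
  have c2 : y2 * D = -(a1 - a3) := by
    rw [hD]
    linear_combination -(a1 - a3) * E0 - A1 * (a3 * F + E2) + A3 * (a1 * F + E2)
  have c3 : y3 * D = a1 - a2 := by
    rw [hD]
    linear_combination (a1 - a2) * E0 + A1 * (a2 * F + E2) - A2 * (a1 * F + E2)
  have hu : u0 = y1 ^ 2 / d1 + y2 ^ 2 / d2 + y3 ^ 2 / d3 := by
    have z1 : y1 ^ 2 / d1 = y1 * (A1 * u0 + (1 - a1) * u1 + -a1 * u2) := by
      rw [div_eq_iff hd1]; linear_combination y1 * hy1
    have z2 : y2 ^ 2 / d2 = y2 * (A2 * u0 + (1 - a2) * u1 + -a2 * u2) := by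
      rw [div_eq_iff hd2]; linear_combination y2 * hy2
    have z3 : y3 ^ 2 / d3 = y3 * (A3 * u0 + (1 - a3) * u1 + -a3 * u2) := by
      rw [div_eq_iff hd3]; linear_combination y3 * hy3
    rw [z1, z2, z3]
    linear_combination -u0 * E0 - u1 * E1 - u2 * E2
  rw [hu, eq_div_iff (pow_ne_zero 2 hD0), ← c1, ← neg_sq (a1 - a3), ← c2, ← c3]
  ring

/-- Every solution of `M(ξ) u = e₁` has first coordinate `D⁻² ∑ Qᵢ / wᵢ`. -/
lemma fst_solution {p0 p1 p2 x1 x2 x3 w1 w2 w3 : ℝ} {u : Fin 3 → ℝ}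
    (hw1 : 0 < w1) (hw2 : 0 < w2) (hw3 : 0 < w3)
    (hl1 : 0 < gtLam p0 p1 p2 x1) (hl2 : 0 < gtLam p0 p1 p2 x2) (hl3 : 0 < gtLam p0 p1 p2 x3)
    (hD : ((Matrix.of ![gtF p0 p1 p2 x1, gtF p0 p1 p2 x2, gtF p0 p1 p2 x3])ᵀ).det ≠ 0)
    (hu : (gtAtom p0 p1 p2 w1 x1 + gtAtom p0 p1 p2 w2 x2 + gtAtom p0 p1 p2 w3 x3).mulVec u =
      ![1, 0, 0]) :
    u 0 = ((gtLam p0 p1 p2 x1)⁻¹ * ((1 - p0) ^ x2 - (1 - p0) ^ x3) ^ 2 / w1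
        + (gtLam p0 p1 p2 x2)⁻¹ * ((1 - p0) ^ x1 - (1 - p0) ^ x3) ^ 2 / w2
        + (gtLam p0 p1 p2 x3)⁻¹ * ((1 - p0) ^ x1 - (1 - p0) ^ x2) ^ 2 / w3) /
      ((Matrix.of ![gtF p0 p1 p2 x1, gtF p0 p1 p2 x2, gtF p0 p1 p2 x3])ᵀ).det ^ 2 := by
  have E0 := congrFun hu 0
  have E1 := congrFun hu 1
  have E2 := congrFun hu 2
  simp only [gtAtom, Matrix.mulVec, dotProduct, Fin.sum_univ_three, Matrix.add_apply,
    Matrix.smul_apply, Matrix.vecMulVec_apply, smul_eq_mul, Matrix.cons_val] at E0 E1 E2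
  have k : ∀ x, gtF p0 p1 p2 x 1 = 1 - (1 - p0) ^ x ∧ gtF p0 p1 p2 x 2 = -(1 - p0) ^ x :=
    fun x => ⟨rfl, rfl⟩
  simp only [k] at E0 E1 E2
  rw [fst_solution_aux (mul_pos hw1 hl1).ne' (mul_pos hw2 hl2).ne' (mul_pos hw3 hl3).ne' hD
    (mfDet_eq p0 p1 p2 x1 x2 x3) _ _ _ (u0 := u 0) (u1 := u 1) (u2 := u 2) rfl rfl rfl
    (by linear_combination E0) (by linear_combination E1) (by linear_combination E2)]
  congr 1
  field_simp

/-- The Cauchy–Schwarz defect as a weighted sum of squares. -/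
lemma sum_div_sub_sq {w1 w2 w3 r1 r2 r3 S : ℝ} (hw1 : 0 < w1) (hw2 : 0 < w2) (hw3 : 0 < w3)
    (hw : w1 + w2 + w3 = 1) (hS : S = r1 + r2 + r3) :
    r1 ^ 2 / w1 + r2 ^ 2 / w2 + r3 ^ 2 / w3 - S ^ 2 =
      (r1 - S * w1) ^ 2 / w1 + (r2 - S * w2) ^ 2 / w2 + (r3 - S * w3) ^ 2 / w3 := by
  have h : ∀ {w r : ℝ}, 0 < w → (r - S * w) ^ 2 / w = r ^ 2 / w - 2 * S * r + S ^ 2 * w := by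
    intro w r h
    field_simp
    ring
  rw [h hw1, h hw2, h hw3]
  linear_combination (-2 * S) * hS - S ^ 2 * hw

/-- Lemma 2 (Dₛ-optimal weights): for a design `ξ` at fixed sizes `x₁ < x₂ < x₃` with positive
weights summing to one, every `u` with `M(ξ) u = e₁` satisfies
`u₁ ≥ det(M_f)⁻² (√Q₁ + √Q₂ + √Q₃)²`, with equality attained by some such `u` iff
`wᵢ = √Qᵢ / (√Q₁ + √Q₂ + √Q₃)` for `i = 1, 2, 3`. -/
theorem Ds_optimal_weights
    (p0 p1 p2 xL xU x1 x2 x3 w1 w2 w3 Q1 Q2 Q3 S : ℝ)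
    (hp0 : p0 ∈ Set.Ioo (0 : ℝ) 1)
    (hp1 : p1 ∈ Set.Ioc (1 / 2 : ℝ) 1) (hp2 : p2 ∈ Set.Ioc (1 / 2 : ℝ) 1)
    (hxL : 1 ≤ xL) (hxLU : xL < xU)
    (hx1 : xL ≤ x1) (h12 : x1 < x2) (h23 : x2 < x3) (hx3 : x3 ≤ xU)
    (hw1 : 0 < w1) (hw2 : 0 < w2) (hw3 : 0 < w3) (hw : w1 + w2 + w3 = 1)
    (hQ1 : Q1 = (gtLam p0 p1 p2 x1)⁻¹ * ((1 - p0) ^ x2 - (1 - p0) ^ x3) ^ 2)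
    (hQ2 : Q2 = (gtLam p0 p1 p2 x2)⁻¹ * ((1 - p0) ^ x1 - (1 - p0) ^ x3) ^ 2)
    (hQ3 : Q3 = (gtLam p0 p1 p2 x3)⁻¹ * ((1 - p0) ^ x1 - (1 - p0) ^ x2) ^ 2)
    (hS : S = Real.sqrt Q1 + Real.sqrt Q2 + Real.sqrt Q3)
    (Mf M : Matrix (Fin 3) (Fin 3) ℝ)
    (hMf : Mf = (Matrix.of ![gtF p0 p1 p2 x1, gtF p0 p1 p2 x2, gtF p0 p1 p2 x3])ᵀ)
    (hM : M = gtAtom p0 p1 p2 w1 x1 + gtAtom p0 p1 p2 w2 x2 + gtAtom p0 p1 p2 w3 x3) :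
    (∀ u : Fin 3 → ℝ, M.mulVec u = ![1, 0, 0] → S ^ 2 / Mf.det ^ 2 ≤ u 0) ∧
    ((∃ u : Fin 3 → ℝ, M.mulVec u = ![1, 0, 0] ∧ u 0 = S ^ 2 / Mf.det ^ 2) ↔
      (w1 = Real.sqrt Q1 / S ∧ w2 = Real.sqrt Q2 / S ∧ w3 = Real.sqrt Q3 / S)) := by
  have hc : 0 < p1 + p2 - 1 := by linarith [hp1.1, hp2.1]
  have hl1 : 0 < gtLam p0 p1 p2 x1 := gtLam_pos hp0 hp1 hp2 (by linarith)
  have hl2 : 0 < gtLam p0 p1 p2 x2 := gtLam_pos hp0 hp1 hp2 (by linarith)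
  have hl3 : 0 < gtLam p0 p1 p2 x3 := gtLam_pos hp0 hp1 hp2 (by linarith)
  have hD : Mf.det ≠ 0 := hMf ▸ mfDet_ne_zero hp0 hc h12 h23
  have hval : ∀ u : Fin 3 → ℝ, M.mulVec u = ![1, 0, 0] →
      u 0 = (Q1 / w1 + Q2 / w2 + Q3 / w3) / Mf.det ^ 2 := by
    intro u hu
    subst hM hMf hQ1 hQ2 hQ3
    exact fst_solution hw1 hw2 hw3 hl1 hl2 hl3 hD hu
  have hex : ∃ u : Fin 3 → ℝ, M.mulVec u = ![1, 0, 0] := by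
    have hdet : M.det ≠ 0 := by
      rw [hM, sum_gtAtom_eq, Matrix.det_mul, Matrix.det_mul, ← Matrix.det_transpose (Matrix.of _),
        ← hMf, Matrix.det_diagonal, Fin.prod_univ_three]
      exact mul_ne_zero (mul_ne_zero hD (mul_ne_zero (mul_ne_zero (mul_pos hw1 hl1).ne'
        (mul_pos hw2 hl2).ne') (mul_pos hw3 hl3).ne')) hD
    refine ⟨M⁻¹.mulVec ![1, 0, 0], ?_⟩
    rw [Matrix.mulVec_mulVec, Matrix.mul_nonsing_inv _ (isUnit_iff_ne_zero.2 hdet),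
      Matrix.one_mulVec]
  have hQ1' : √Q1 ^ 2 = Q1 := Real.sq_sqrt (by rw [hQ1]; positivity)
  have hQ2' : √Q2 ^ 2 = Q2 := Real.sq_sqrt (by rw [hQ2]; positivity)
  have hQ3' : √Q3 ^ 2 = Q3 := Real.sq_sqrt (by rw [hQ3]; positivity)
  have hS0 : 0 < S := by
    have : 0 < Q1 := by
      have : (1 - p0) ^ x3 < (1 - p0) ^ x2 :=
        Real.rpow_lt_rpow_of_exponent_gt (by linarith [hp0.2]) (by linarith [hp0.1]) h23
      have := sub_pos.2 this
      rw [hQ1]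
      positivity
    rw [hS]
    positivity
  have key := sum_div_sub_sq hw1 hw2 hw3 hw hS
  rw [hQ1', hQ2', hQ3'] at key
  have n1 : 0 ≤ (√Q1 - S * w1) ^ 2 / w1 := by positivity
  have n2 : 0 ≤ (√Q2 - S * w2) ^ 2 / w2 := by positivity
  have n3 : 0 ≤ (√Q3 - S * w3) ^ 2 / w3 := by positivity
  have hiff : ∀ {w r : ℝ}, 0 < w → ((r - S * w) ^ 2 / w = 0 ↔ w = r / S) := by
    intro w r h
    rw [div_eq_zero_iff, or_iff_left h.ne', sq_eq_zero_iff, sub_eq_zero, eq_div_iff hS0.ne',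
      mul_comm w, eq_comm]
  refine ⟨fun u hu => ?_, ?_⟩
  · rw [hval u hu]
    gcongr
    linarith
  · rw [← hiff hw1, ← hiff hw2, ← hiff hw3]
    constructor
    · rintro ⟨u, hu, h⟩
      rw [hval u hu, div_left_inj' (pow_ne_zero 2 hD)] at h
      refine ⟨?_, ?_, ?_⟩ <;> linarith
    · rintro ⟨h1, h2, h3⟩
      obtain ⟨u, hu⟩ := hex
      refine ⟨u, hu, ?_⟩
      rw [hval u hu]
      congr 1
      linarith
end

section
/- Suppose A_s ∈ (r, 1) satisfies equation (E2): (2(1+Δ1(A_s))/A_s)(1 + (1 + Δ0/A_s)/(log A_s − Δ0(1/A_s − 1))) = 1/(δc + A_s) − 1/(c − A_s) + 2Δ2(A_s). Let x2^s = x_L + log A_s / log(1 − p0), and let ξ_s be the design on the three group sizes x_L < x2^s < x_U with weights w_i = Q_i(x_L, x2^s, x_U)^{1/2} / Σ_{j=1}^3 Q_j(x_L, x2^s, x_U)^{1/2}. Then M(ξ_s) is invertible, and for every design ξ with group sizes in [x_L, x_U] and every u ∈ ℝ³ with M(ξ)u = e1 (where e1 = (1,0,0)^T), one has u_1 ≥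 (M(ξ_s)^{−1})_{11}, with equality only if ξ = ξ_s (i.e., ξ_s is the unique D_s-optimal design for estimating the prevalence alone). -/
/-!
The proof is by duality. Suppose `v` satisfies `λ(x) (f(x) · v)² ≤ 1` for all `x` in
`[xL, xU]`. Then `vᵀ M(ξ) v ≤ 1` for every design `ξ`, and Cauchy–Schwarz for the form `M(ξ)` gives
`v₁² ≤ u₁` whenever `M(ξ) u = e₁` (`dual_bound`). Equality forces `ξ` to live where the constraint
is active and `M(ξ) v` to be a multiple of `e₁`.

To find `v`, put `a = q ^ (x - xL) ∈ [r, 1]`. Up to a linear change of parameters the regression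
functions become `a log a`, `1`, `a`, and `1 / λ` is a positive multiple of `h a = (c - a) (δ c + a)`.
Hence `f(x) · v` can be any multiple of a function `φ a = α a log a + β + γ a`. Take `φ` with
values `√h`, `-√h`, `√h` at `r`, `As`, `1`; equation (E2) says that `φ` is tangent to `-√h` at `As`
(`exists_interpolant`).

The heart of the matter is that `φ² < h` elsewhere on `[r, 1]` (`sq_le_variance`). Strict convexity
of `a log a` and the sign pattern give `α > 0` and `β > 0`. As `h` is quadratic, the third
derivative of `φ² - h` is a positive function times `k a = 2 α a log a + (3 α + 2 γ) a - β`, which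
has at most one positive zero. By Rolle's theorem `φ² - h` has at most four zeros on `(0, ∞)` with
multiplicity, so only `r`, the double zero `As`, and `1`; and it is negative close to `r` and `1`
because there `0 < φ`, while the convex `φ` lies below the chord of the concave `√h`.

With the stated weights `M(ξs) v` is a multiple of `e₁`, so `(M(ξs)⁻¹)₁₁ = v₁²`. A design attaining
the bound is supported on the same three points and has the same image `M(ξ) v`; since the three
gradients are linearly independent (`gtF_indep`), it equals `ξs`.
-/

open Real Matrix

/-! ### The Chebyshev-type bound for the interpolant -/

/-- If `h a = (c - a) (δ c + a)` and `φ a = α a log a + β + γ a`, then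
`k a = 3 a φ' a - φ a` is, up to the positive factor `2 α / a²`, the third derivative of `φ² - h`.
The hypotheses are `k x = 0` and `k y = 0`: for `β > 0` there is at most one positive zero. -/
lemma third_deriv_zero_unique {α β γ x y : ℝ} (hα : 0 < α) (hβ : 0 < β) (hx : 0 < x) (hxy : x < y)
    (h1 : 3 * x * (α * (log x + 1) + γ) - (α * (x * log x) + β + γ * x) = 0)
    (h2 : 3 * y * (α * (log y + 1) + γ) - (α * (y * log y) + β + γ * y) = 0) : False := by
  have hy : 0 < y := hx.trans hxy
  have hlog : log x < log y := log_lt_log hx hxy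
  -- dividing by the argument, `k a / a = 2 α log a + const - β / a` is strictly increasing
  have e1 : (2 * α * log x + 3 * α + 2 * γ) * x = β := by linarith
  have e2 : (2 * α * log y + 3 * α + 2 * γ) * y = β := by linarith
  have hk : 2 * α * log x + 3 * α + 2 * γ < 2 * α * log y + 3 * α + 2 * γ := by nlinarith
  have hpos : 0 < 2 * α * log x + 3 * α + 2 * γ := by
    by_contra hn
    nlinarith
  nlinarith [mul_pos hpos (sub_pos.2 hxy), mul_pos (sub_pos.2 hk) hy]

lemma rolle_pos {f f' : ℝ → ℝ} (hf : ∀ x, 0 < x → HasDerivAt f (f' x) x) {x y : ℝ} (hx : 0 < x)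
    (hxy : x < y) (h : f x = f y) : ∃ z, x < z ∧ z < y ∧ f' z = 0 := by
  obtain ⟨z, hz, hz'⟩ := exists_hasDerivAt_eq_zero hxy
    (fun t ht => (hf t (hx.trans_le ht.1)).continuousAt.continuousWithinAt) h
    (fun t ht => hf t (hx.trans ht.1))
  exact ⟨z, hz.1, hz.2, hz'⟩

/-- `x log x` lies strictly below its chord between `r` and `1`. -/
lemma mul_log_lt_chord {r a : ℝ} (hr : 0 < r) (hra : r < a) (ha : a < 1) :
    a * log a * (1 - r) < r * log r * (1 - a) := by
  have h1r : 0 < 1 - r := by linarith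
  have hs : (1 - a) / (1 - r) + (a - r) / (1 - r) = 1 := by field_simp; ring
  have := strictConvexOn_mul_log.2 (Set.mem_Ici.2 hr.le) (Set.mem_Ici.2 zero_le_one)
    (by linarith : r ≠ 1) (div_pos (by linarith : 0 < 1 - a) h1r)
    (div_pos (by linarith : 0 < a - r) h1r) hs
  simp only [smul_eq_mul, log_one, mul_zero, add_zero, mul_one] at this
  have e : (1 - a) / (1 - r) * r + (a - r) / (1 - r) = a := by field_simp; ring
  rw [e, div_mul_eq_mul_div, lt_div_iff₀ h1r] at this
  linarith

/-- The first derivative of `φ² - h` has at most three positive zeros: by Rolle's theorem a fourth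
one would give two zeros of the third derivative. -/
lemma no_four_critical {α β γ c δ : ℝ} (hα : 0 < α) (hβ : 0 < β) {z1 z2 z3 z4 : ℝ} (h0 : 0 < z1)
    (h12 : z1 < z2) (h23 : z2 < z3) (h34 : z3 < z4)
    (hz : ∀ z, z = z1 ∨ z = z2 ∨ z = z3 ∨ z = z4 →
      2 * (α * (z * log z) + β + γ * z) * (α * (log z + 1) + γ) - ((c - z) - (δ * c + z)) = 0) :
    False := by
  have hlog : ∀ x : ℝ, 0 < x → HasDerivAt log (1 / x) x := fun x hx => by
    simpa using Real.hasDerivAt_log hx.ne'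
  have hφ : ∀ x : ℝ, 0 < x →
      HasDerivAt (fun z => α * (z * log z) + β + γ * z) (α * (log x + 1) + γ) x := fun x hx => by
    have := ((((hasDerivAt_id x).mul (hlog x hx)).const_mul α).add_const β).add
      ((hasDerivAt_id x).const_mul γ)
    exact this.congr_deriv (by simp only [id]; field_simp)
  have hφ' : ∀ x : ℝ, 0 < x → HasDerivAt (fun z => α * (log z + 1) + γ) (α * (1 / x)) x :=
    fun x hx => (((hlog x hx).add_const 1).const_mul α).add_const γ
  have hG1 : ∀ x : ℝ, 0 < x → HasDerivAt
      (fun z => 2 * (α * (z * log z) + β + γ * z) * (α * (log z + 1) + γ)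
        - ((c - z) - (δ * c + z)))
      (2 * (α * (log x + 1) + γ) ^ 2 + 2 * (α * (x * log x) + β + γ * x) * α * (1 / x) + 2) x :=
    fun x hx => by
      have := (((hφ x hx).const_mul 2).mul (hφ' x hx)).sub
        (((hasDerivAt_id x).const_sub c).sub ((hasDerivAt_id x).const_add (δ * c)))
      exact this.congr_deriv (by ring)
  have hG2 : ∀ x : ℝ, 0 < x → HasDerivAt
      (fun x => 2 * (α * (log x + 1) + γ) ^ 2
        + 2 * (α * (x * log x) + β + γ * x) * α * (1 / x) + 2)
      (2 * α / x ^ 2 * (3 * x * (α * (log x + 1) + γ) - (α * (x * log x) + β + γ * x))) x :=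
    fun x hx => by
      have hinv : HasDerivAt (fun z : ℝ => 1 / z) (-(x ^ 2)⁻¹) x := by
        simpa using hasDerivAt_inv hx.ne'
      have := ((((hφ' x hx).pow 2).const_mul 2).add
        ((((hφ x hx).const_mul 2).mul_const α).mul hinv)).add_const 2
      exact this.congr_deriv (by field_simp; ring)
  obtain ⟨y1, a1, b1, c1⟩ := rolle_pos hG1 h0 h12
    ((hz z1 (by simp)).trans (hz z2 (by simp)).symm)
  obtain ⟨y2, a2, b2, c2⟩ := rolle_pos hG1 (h0.trans h12) h23
    ((hz z2 (by simp)).trans (hz z3 (by simp)).symm)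
  obtain ⟨y3, a3, b3, c3⟩ := rolle_pos hG1 (h0.trans (h12.trans h23)) h34
    ((hz z3 (by simp)).trans (hz z4 (by simp)).symm)
  have hy1 : 0 < y1 := h0.trans a1
  obtain ⟨x1, d1, e1, f1⟩ := rolle_pos hG2 hy1 (b1.trans a2) (c1.trans c2.symm)
  obtain ⟨x2, d2, e2, f2⟩ := rolle_pos hG2 (hy1.trans (b1.trans a2)) (b2.trans a3)
    (c2.trans c3.symm)
  have hx1 : 0 < x1 := hy1.trans d1
  have hx2 : 0 < x2 := hx1.trans (e1.trans d2)
  refine third_deriv_zero_unique hα hβ hx1 (e1.trans d2)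
    ((mul_eq_zero.1 f1).resolve_left (by positivity))
    ((mul_eq_zero.1 f2).resolve_left (by positivity))

/-- The Chebyshev-type bound. If `φ a = α a log a + β + γ a` equals `√h` at `r` and `1` and touches
`-√h` at an interior point `A`, where `h a = (c - a) (δ c + a)`, then `φ² ≤ h` on `[r, 1]` with
equality at `r`, `A`, `1` only. -/
lemma sq_le_variance {c δ r A α β γ : ℝ} (hr : 0 < r) (hrA : r < A) (hA1 : A < 1) (hc : 1 < c)
    (hδ : 0 ≤ δ)
    (h1 : β + γ = √((c - 1) * (δ * c + 1)))
    (h2 : α * (A * log A) + β + γ * A = -√((c - A) * (δ * c + A)))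
    (h3 : α * (r * log r) + β + γ * r = √((c - r) * (δ * c + r)))
    (h4 : 2 * √((c - A) * (δ * c + A)) * (α * (log A + 1) + γ) = -((c - A) - (δ * c + A)))
    {a : ℝ} (hra : r ≤ a) (ha1 : a ≤ 1) :
    (α * (a * log a) + β + γ * a) ^ 2 ≤ (c - a) * (δ * c + a) ∧
    ((α * (a * log a) + β + γ * a) ^ 2 = (c - a) * (δ * c + a) → a = r ∨ a = A ∨ a = 1) := by
  have hδc : 0 ≤ δ * c := by nlinarith
  have hh : ∀ x, r ≤ x → x ≤ 1 → 0 < (c - x) * (δ * c + x) := fun x hx hx' =>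
    mul_pos (by linarith) (by linarith)
  have hH1 := sqrt_pos.2 (hh 1 (by linarith) le_rfl)
  have hHr := sqrt_pos.2 (hh r le_rfl (by linarith))
  have hHA := sqrt_pos.2 (hh A hrA.le hA1.le)
  have hs1 := sq_sqrt (hh 1 (by linarith) le_rfl).le
  have hsr := sq_sqrt (hh r le_rfl (by linarith)).le
  have hsA := sq_sqrt (hh A hrA.le hA1.le).le
  set H1 := √((c - 1) * (δ * c + 1))
  set Hr := √((c - r) * (δ * c + r))
  set HA := √((c - A) * (δ * c + A))
  have h1r : 0 < 1 - r := by linarith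
  have hcA := mul_log_lt_chord hr hrA hA1
  -- `φ` times the chord length, split into the linear interpolant and a multiple of `α`
  have key : ∀ x, (α * (x * log x) + β + γ * x) * (1 - r) = ((1 - x) * Hr + (x - r) * H1)
      + α * (x * log x * (1 - r) - r * log r * (1 - x)) := fun x => by
    rw [← h1, ← h3]; ring
  -- a nonpositive `α` would make `φ` concave, so positive at `A`
  have hα : 0 < α := by
    by_contra hn
    have := key A
    rw [h2] at this
    have p1 : 0 < (1 - A) * Hr := mul_pos (by linarith) hHr
    have p2 : 0 < (A - r) * H1 := mul_pos (by linarith) hH1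
    have p3 : 0 < HA * (1 - r) := mul_pos hHA h1r
    nlinarith [mul_nonneg (neg_nonneg.2 (not_lt.1 hn)) (sub_pos.2 hcA).le]
  -- `φ 0 = β`, and the convex `φ` is positive at `r` and negative further right
  have hβ : 0 < β := by
    have hlog := log_lt_log hr hrA
    have e : β * (A - r) = A * Hr + r * HA + α * (A * r) * (log A - log r) := by
      have : HA = -(α * (A * log A) + β + γ * A) := by linarith
      rw [← h3, this]; ring
    have : 0 < A * Hr + r * HA + α * (A * r) * (log A - log r) := by
      have hA0 := hr.trans hrA
      have := sub_pos.2 hlog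
      positivity
    rw [← e] at this
    exact pos_of_mul_pos_left this (by linarith)
  have hupper : ∀ x, r < x → x < 1 → 0 ≤ α * (x * log x) + β + γ * x →
      (α * (x * log x) + β + γ * x) ^ 2 - (c - x) * (δ * c + x) < 0 := by
    intro x hx hx' h0
    have hk := key x
    have hch := mul_log_lt_chord hr hx hx'
    set φ := α * (x * log x) + β + γ * x
    have hle : φ * (1 - r) ≤ (1 - x) * Hr + (x - r) * H1 := by nlinarith [mul_pos hα (sub_pos.2 hch)]
    have hsq : (φ * (1 - r)) ^ 2 ≤ ((1 - x) * Hr + (x - r) * H1) ^ 2 :=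
      pow_le_pow_left₀ (mul_nonneg h0 h1r.le) hle 2
    -- convexity of the square followed by strict concavity of `h`
    have e1 : ((1 - x) * Hr + (x - r) * H1) ^ 2
        = (1 - r) * ((1 - x) * Hr ^ 2 + (x - r) * H1 ^ 2)
          - (1 - x) * (x - r) * (Hr - H1) ^ 2 := by ring
    have e2 : (1 - r) * ((c - x) * (δ * c + x)) = ((1 - x) * Hr ^ 2 + (x - r) * H1 ^ 2)
        + (1 - r) * ((1 - x) * (x - r)) := by rw [hsr, hs1]; ring
    have hp : 0 < (1 - x) * (x - r) := mul_pos (by linarith) (by linarith)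
    have hp2 : 0 ≤ (1 - x) * (x - r) * (Hr - H1) ^ 2 := by positivity
    have hfin : (1 - r) ^ 2 * φ ^ 2 < (1 - r) ^ 2 * ((c - x) * (δ * c + x)) :=
      calc (1 - r) ^ 2 * φ ^ 2 = (φ * (1 - r)) ^ 2 := by ring
        _ ≤ (1 - r) * ((1 - x) * Hr ^ 2 + (x - r) * H1 ^ 2) := by linarith
        _ < (1 - r) * ((1 - r) * ((c - x) * (δ * c + x))) := by
          rw [e2]
          exact mul_lt_mul_of_pos_left (lt_add_of_pos_right _ (mul_pos h1r hp)) h1r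
        _ = (1 - r) ^ 2 * ((c - x) * (δ * c + x)) := by ring
    have := lt_of_mul_lt_mul_left hfin (by positivity)
    linarith
  have hG : Continuous (fun x => (α * (x * log x) + β + γ * x) ^ 2 - (c - x) * (δ * c + x)) := by
    have := Real.continuous_mul_log
    fun_prop
  have hφc : Continuous (fun x => α * (x * log x) + β + γ * x) := by
    have := Real.continuous_mul_log
    fun_prop
  have hGd : ∀ x, 0 < x → HasDerivAt
      (fun x => (α * (x * log x) + β + γ * x) ^ 2 - (c - x) * (δ * c + x))
      (2 * (α * (x * log x) + β + γ * x) * (α * (log x + 1) + γ) - ((c - x) - (δ * c + x))) x := by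
    intro x hx
    have hφ := ((((hasDerivAt_id x).mul (Real.hasDerivAt_log hx.ne')).const_mul α).add_const β).add
      ((hasDerivAt_id x).const_mul γ)
    have := (hφ.pow 2).sub (((hasDerivAt_id x).const_sub c).mul
      ((hasDerivAt_id x).const_add (δ * c)))
    exact this.congr_deriv (by simp only [id]; field_simp; simp; ring)
  set G := fun x => (α * (x * log x) + β + γ * x) ^ 2 - (c - x) * (δ * c + x) with hGdef
  have hGr : G r = 0 := by simp only [hGdef]; rw [h3, hsr]; ring
  have hGA : G A = 0 := by simp only [hGdef]; rw [h2, neg_sq, hsA]; ring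
  have hG1 : G 1 = 0 := by
    simp only [hGdef, log_one, mul_zero, zero_add, mul_one]; rw [h1, hs1]; ring
  have hGA' : 2 * (α * (A * log A) + β + γ * A) * (α * (log A + 1) + γ)
      - ((c - A) - (δ * c + A)) = 0 := by
    rw [h2]; linarith
  -- a further zero of `φ² - h` would produce four critical points
  have hnz : ∀ b, r < b → b < 1 → b ≠ A → G b ≠ 0 := by
    intro b hb hb1 hbA hGb
    have hb0 := hr.trans hb
    have hA0 := hr.trans hrA
    rcases lt_or_gt_of_ne hbA with h | h
    · obtain ⟨z1, u1, v1, k1⟩ := rolle_pos hGd hr hb (hGr.trans hGb.symm)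
      obtain ⟨z2, u2, v2, k2⟩ := rolle_pos hGd hb0 h (hGb.trans hGA.symm)
      obtain ⟨z3, u3, v3, k3⟩ := rolle_pos hGd hA0 hA1 (hGA.trans hG1.symm)
      refine no_four_critical (c := c) (δ := δ) (γ := γ) hα hβ (hr.trans u1) (v1.trans u2) v2 u3 ?_
      rintro z (rfl | rfl | rfl | rfl) <;> assumption
    · obtain ⟨z1, u1, v1, k1⟩ := rolle_pos hGd hr hrA (hGr.trans hGA.symm)
      obtain ⟨z2, u2, v2, k2⟩ := rolle_pos hGd hA0 h (hGA.trans hGb.symm)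
      obtain ⟨z3, u3, v3, k3⟩ := rolle_pos hGd hb0 hb1 (hGb.trans hG1.symm)
      refine no_four_critical (c := c) (δ := δ) (γ := γ) hα hβ (hr.trans u1) v1 u2 (v2.trans u3) ?_
      rintro z (rfl | rfl | rfl | rfl) <;> assumption
  have hneg : ∀ b, r < b → b < 1 → b ≠ A → G b < 0 := by
    intro b hb hb1 hbA
    by_contra hn
    push Not at hn
    rcases lt_or_gt_of_ne hbA with h | h
    · have hev : ∀ᶠ t in nhdsWithin r (Set.Ioi r), 0 < α * (t * log t) + β + γ * t :=
        (hφc.continuousAt.eventually (lt_mem_nhds (hHr.trans_eq h3.symm))).filter_mono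
          nhdsWithin_le_nhds
      obtain ⟨t, ht, ht1, ht2⟩ := (hev.and (Ioo_mem_nhdsGT hb)).exists
      have hGt := hupper t ht1 (ht2.trans hb1) ht.le
      obtain ⟨s, hs, hs0⟩ := intermediate_value_Icc ht2.le hG.continuousOn ⟨hGt.le, hn⟩
      exact hnz s (ht1.trans_le hs.1) (hs.2.trans_lt hb1) (hs.2.trans_lt h).ne hs0
    · have hev : ∀ᶠ t in nhdsWithin 1 (Set.Iio 1), 0 < α * (t * log t) + β + γ * t :=
        (hφc.continuousAt.eventually (lt_mem_nhds (by simpa [h1] using hH1))).filter_mono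
          nhdsWithin_le_nhds
      obtain ⟨t, ht, ht1, ht2⟩ := (hev.and (Ioo_mem_nhdsLT hb1)).exists
      have hGt := hupper t (hb.trans ht1) ht2 ht.le
      obtain ⟨s, hs, hs0⟩ := intermediate_value_Icc' ht1.le hG.continuousOn ⟨hGt.le, hn⟩
      exact hnz s (hb.trans_le hs.1) (hs.2.trans_lt ht2) (h.trans_le hs.1).ne' hs0
  by_cases hn : a = r ∨ a = A ∨ a = 1
  · refine ⟨?_, fun _ => hn⟩
    have : G a = 0 := by rcases hn with rfl | rfl | rfl <;> assumption
    exact (sub_eq_zero.1 this).le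
  · push Not at hn
    have := hneg a (lt_of_le_of_ne hra (Ne.symm hn.1)) (lt_of_le_of_ne ha1 hn.2.2) hn.2.1
    have := sub_neg.1 this
    exact ⟨this.le, fun h => absurd h this.ne⟩

/-- Equation (E2) says exactly that the interpolant with values `√h`, `-√h`, `√h` at `r`, `A`, `1`
is tangent to `-√h` at `A`. The interpolant is the chord of `√h` over `[r, 1]` plus a multiple of
`a log a - Δ0 (1 - a)`, which vanishes at `r` and `1`. -/
lemma exists_interpolant {c δ r A Δ0 Δ1 Δ2 : ℝ} (hr : 0 < r) (hrA : r < A) (hA1 : A < 1)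
    (hc : 1 < c) (hδ : 0 ≤ δ)
    (hΔ0 : Δ0 = r * Real.log r / (1 - r))
    (hΔ1 : Δ1 = ((A - r) * √((c - 1) * (δ * c + 1)) + (1 - A) * √((c - r) * (δ * c + r)))
            / ((1 - r) * √((c - A) * (δ * c + A))))
    (hΔ2 : Δ2 = (√((c - 1) * (δ * c + 1)) - √((c - r) * (δ * c + r)))
            / ((1 - r) * √((c - A) * (δ * c + A))))
    (hE2 : (2 * (1 + Δ1) / A) * (1 + (1 + Δ0 / A) / (Real.log A - Δ0 * (1 / A - 1)))
            = 1 / (δ * c + A) - 1 / (c - A) + 2 * Δ2) :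
    ∃ α β γ : ℝ, β + γ = √((c - 1) * (δ * c + 1)) ∧
      α * (A * log A) + β + γ * A = -√((c - A) * (δ * c + A)) ∧
      α * (r * log r) + β + γ * r = √((c - r) * (δ * c + r)) ∧
      2 * √((c - A) * (δ * c + A)) * (α * (log A + 1) + γ) = -((c - A) - (δ * c + A)) := by
  have hA0 : 0 < A := hr.trans hrA
  have hδc : 0 ≤ δ * c := by nlinarith
  have hcA : 0 < c - A := by linarith
  have hdA : 0 < δ * c + A := by linarith
  have hHA := sqrt_pos.2 (mul_pos hcA hdA)
  have hsA := sq_sqrt (mul_pos hcA hdA).le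
  set H1 := √((c - 1) * (δ * c + 1))
  set Hr := √((c - r) * (δ * c + r))
  set HA := √((c - A) * (δ * c + A))
  have h1r : 0 < 1 - r := by linarith
  have hch := mul_log_lt_chord hr hrA hA1
  have e0 : Δ0 * (1 - r) = r * log r := by rw [hΔ0]; field_simp
  have e1 : HA * Δ1 * (1 - r) = (A - r) * H1 + (1 - A) * Hr := by rw [hΔ1]; field_simp
  have e2 : HA * Δ2 = (H1 - Hr) / (1 - r) := by rw [hΔ2]; field_simp
  set D := log A - Δ0 * (1 / A - 1) with hD
  have hAD : A * D = A * log A - Δ0 * (1 - A) := by rw [hD]; field_simp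
  have hD0 : D ≠ 0 := by
    intro h
    rw [h, mul_zero] at hAD
    have : A * log A * (1 - r) = Δ0 * (1 - r) * (1 - A) := by
      have : A * log A = Δ0 * (1 - A) := by linarith
      rw [this]; ring
    rw [e0] at this
    linarith
  have hE : (1 + Δ1) / (A * D) * (log A + 1 + Δ0)
      = ((c - A) - (δ * c + A)) / (2 * HA ^ 2) + Δ2 := by
    have l : (2 * (1 + Δ1) / A) * (1 + (1 + Δ0 / A) / D)
        = 2 * ((1 + Δ1) / (A * D) * (log A + 1 + Δ0)) := by
      have : log A + 1 + Δ0 = D + (1 + Δ0 / A) := by rw [hD]; field_simp; ring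
      rw [this]
      field_simp
    have hr' : 1 / (δ * c + A) - 1 / (c - A) = ((c - A) - (δ * c + A)) / HA ^ 2 := by
      rw [hsA]; field_simp
    rw [l, hr'] at hE2
    have : ((c - A) - (δ * c + A)) / (2 * HA ^ 2) = ((c - A) - (δ * c + A)) / HA ^ 2 / 2 := by
      field_simp
    rw [this]
    linarith
  set α := -HA * ((1 + Δ1) / (A * D)) with hα
  refine ⟨α, (Hr - r * H1) / (1 - r) - α * Δ0, (H1 - Hr) / (1 - r) + α * Δ0, ?_, ?_, ?_, ?_⟩
  · field_simp
    ring
  · have : α * (A * D) = -HA * (1 + Δ1) := by rw [hα]; field_simp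
    rw [hAD] at this
    have hL : (Hr - r * H1) / (1 - r) + (H1 - Hr) / (1 - r) * A = HA * Δ1 := by
      field_simp
      linarith
    linear_combination this + hL
  · have hL : (Hr - r * H1) / (1 - r) + (H1 - Hr) / (1 - r) * r = Hr := by
      field_simp
      ring
    linear_combination hL - α * e0
  · have : α * (log A + 1 + Δ0) = -HA * (((c - A) - (δ * c + A)) / (2 * HA ^ 2) + Δ2) := by
      rw [← hE, hα]; ring
    have h3 : 2 * HA * (HA * (((c - A) - (δ * c + A)) / (2 * HA ^ 2)))
        = (c - A) - (δ * c + A) := by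
      field_simp
    linear_combination 2 * HA * this - 2 * HA * e2 - h3

/-! ### Information matrices and the dual bound -/

lemma dot_gtInfo (p0 p1 p2 : ℝ) (ξ : ℝ →₀ ℝ) (y u : Fin 3 → ℝ) :
    y ⬝ᵥ (gtInfo p0 p1 p2 ξ *ᵥ u) = ξ.sum fun x w =>
      w * gtLam p0 p1 p2 x * (gtF p0 p1 p2 x ⬝ᵥ y) * (gtF p0 p1 p2 x ⬝ᵥ u) := by
  simp only [gtInfo, gtAtom, Finsupp.sum, Matrix.sum_mulVec, dotProduct_sum, smul_mulVec,
    vecMulVec_mulVec, dotProduct_smul]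
  refine Finset.sum_congr rfl fun x _ => ?_
  rw [dotProduct_comm y]
  simp [smul_eq_mul]
  ring

lemma gtInfo_three (p0 p1 p2 x1 x2 x3 a1 a2 a3 : ℝ) :
    gtInfo p0 p1 p2 (Finsupp.single x1 a1 + Finsupp.single x2 a2 + Finsupp.single x3 a3)
      = gtAtom p0 p1 p2 a1 x1 + gtAtom p0 p1 p2 a2 x2 + gtAtom p0 p1 p2 a3 x3 := by
  have h0 : ∀ x, gtAtom p0 p1 p2 0 x = 0 := fun x => by simp [gtAtom]
  have hadd : ∀ x a b, gtAtom p0 p1 p2 (a + b) x = gtAtom p0 p1 p2 a x + gtAtom p0 p1 p2 b x :=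
    fun x a b => by simp [gtAtom, add_mul, add_smul]
  unfold gtInfo
  rw [Finsupp.sum_add_index' h0 hadd, Finsupp.sum_add_index' h0 hadd,
    Finsupp.sum_single_index, Finsupp.sum_single_index, Finsupp.sum_single_index]
  all_goals exact h0 _

lemma gtAtom_mulVec (p0 p1 p2 w x : ℝ) (v : Fin 3 → ℝ) :
    gtAtom p0 p1 p2 w x *ᵥ v
      = (w * (gtLam p0 p1 p2 x * (gtF p0 p1 p2 x ⬝ᵥ v))) • gtF p0 p1 p2 x := by
  ext i
  simp [gtAtom, smul_mulVec, vecMulVec_mulVec]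
  ring

/-- Up to a linear change of parameters, the regression functions are `a log a`, `1` and `a`,
where `a = q ^ (x - xL)`. -/
lemma exists_coeff {p0 p1 p2 xL : ℝ} (hp0 : p0 ∈ Set.Ioo (0 : ℝ) 1) (hK : 0 < p1 + p2 - 1)
    (α β γ : ℝ) : ∃ v : Fin 3 → ℝ, ∀ x, gtF p0 p1 p2 x ⬝ᵥ v
      = α * ((1 - p0) ^ (x - xL) * log ((1 - p0) ^ (x - xL))) + β + γ * (1 - p0) ^ (x - xL) := by
  have hq : 0 < 1 - p0 := by linarith [hp0.2]
  set q := 1 - p0 with hqdef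
  have hqL : 0 < q ^ xL := rpow_pos_of_pos hq _
  refine ⟨![α * q * log q / (q ^ xL * (p1 + p2 - 1)), β,
    -β + α * xL * log q / q ^ xL - γ / q ^ xL], fun x => ?_⟩
  simp only [gtF, dotProduct, Fin.sum_univ_three, ← hqdef, cons_val_zero, cons_val_one, cons_val]
  rw [log_rpow hq, rpow_sub hq, rpow_sub hq, rpow_one]
  field_simp
  ring

/-- The gradient vectors at three distinct group sizes are linearly independent. -/
lemma gtF_indep {p0 p1 p2 x1 x2 x3 : ℝ} (hp0 : p0 ∈ Set.Ioo (0 : ℝ) 1) (hK : 0 < p1 + p2 - 1)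
    (h12 : x1 < x2) (h23 : x2 < x3) {d1 d2 d3 : ℝ}
    (h : d1 • gtF p0 p1 p2 x1 + d2 • gtF p0 p1 p2 x2 + d3 • gtF p0 p1 p2 x3 = 0) :
    d1 = 0 ∧ d2 = 0 ∧ d3 = 0 := by
  -- it suffices to pair the relation with `a log a`, `1` and `a`, where `a = q ^ (x - x1)`
  have pair : ∀ g : ℝ → ℝ, (∃ v : Fin 3 → ℝ, ∀ x, gtF p0 p1 p2 x ⬝ᵥ v = g x) →
      d1 * g x1 + d2 * g x2 + d3 * g x3 = 0 := by
    rintro g ⟨v, hv⟩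
    have := congrArg (· ⬝ᵥ v) h
    simp only [add_dotProduct, smul_dotProduct, hv, zero_dotProduct, smul_eq_mul] at this
    exact this
  have hq : 0 < 1 - p0 := by linarith [hp0.2]
  have hq1 : 1 - p0 < 1 := by linarith [hp0.1]
  have i1 := pair _ (exists_coeff (xL := x1) hp0 hK 0 1 0)
  have i2 := pair _ (exists_coeff (xL := x1) hp0 hK 0 0 1)
  have i3 := pair _ (exists_coeff (xL := x1) hp0 hK 1 0 0)
  have hA : (1 - p0) ^ (x2 - x1) < 1 := rpow_lt_one hq.le hq1 (by linarith)
  have hr : (1 - p0) ^ (x3 - x1) < (1 - p0) ^ (x2 - x1) :=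
    rpow_lt_rpow_of_exponent_gt hq hq1 (by linarith)
  have hr0 : 0 < (1 - p0) ^ (x3 - x1) := rpow_pos_of_pos hq _
  have hch := mul_log_lt_chord hr0 hr hA
  simp only [sub_self, rpow_zero, log_one] at i1 i2 i3
  set A := (1 - p0) ^ (x2 - x1)
  set r := (1 - p0) ^ (x3 - x1)
  have hd2 : d2 = 0 := by
    have : d2 * (A * log A * (1 - r) - r * log r * (1 - A)) = 0 := by
      linear_combination (1 - r) * i3 - (r * log r) * (i1 - i2)
    exact (mul_eq_zero.1 this).resolve_right (by linarith)
  have hd3 : d3 = 0 := by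
    have : d3 * (1 - r) = 0 := by
      rw [hd2] at i1 i2
      linear_combination i1 - i2
    exact (mul_eq_zero.1 this).resolve_right (by linarith)
  refine ⟨?_, hd2, hd3⟩
  rw [hd2, hd3] at i1
  linarith

/-- A design charging three distinct points with positive weights has nonsingular information
matrix. -/
lemma det_three_ne_zero {p0 p1 p2 x1 x2 x3 w1 w2 w3 : ℝ} (hp0 : p0 ∈ Set.Ioo (0 : ℝ) 1)
    (hK : 0 < p1 + p2 - 1) (h12 : x1 < x2) (h23 : x2 < x3)
    (hl1 : 0 < gtLam p0 p1 p2 x1) (hl2 : 0 < gtLam p0 p1 p2 x2) (hl3 : 0 < gtLam p0 p1 p2 x3)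
    (hw1 : 0 < w1) (hw2 : 0 < w2) (hw3 : 0 < w3) :
    (gtInfo p0 p1 p2
      (Finsupp.single x1 w1 + Finsupp.single x2 w2 + Finsupp.single x3 w3)).det ≠ 0 := by
  intro hdet
  obtain ⟨z, hz0, hz⟩ := Matrix.exists_mulVec_eq_zero_iff.2 hdet
  rw [gtInfo_three, add_mulVec, add_mulVec, gtAtom_mulVec, gtAtom_mulVec, gtAtom_mulVec] at hz
  obtain ⟨k1, k2, k3⟩ := gtF_indep hp0 hK h12 h23 hz
  simp only [mul_eq_zero, hw1.ne', hw2.ne', hw3.ne', hl1.ne', hl2.ne', hl3.ne', false_or]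
    at k1 k2 k3
  have hF : Matrix.of ![gtF p0 p1 p2 x1, gtF p0 p1 p2 x2, gtF p0 p1 p2 x3] *ᵥ z = 0 := by
    ext i
    fin_cases i
    · exact k1
    · exact k2
    · exact k3
  obtain ⟨d, hd0, hd⟩ := Matrix.exists_vecMul_eq_zero_iff.2
    (Matrix.exists_mulVec_eq_zero_iff.1 ⟨z, hz0, hF⟩)
  have : d 0 • gtF p0 p1 p2 x1 + d 1 • gtF p0 p1 p2 x2 + d 2 • gtF p0 p1 p2 x3 = 0 := by
    rw [← hd]
    ext j
    simp [vecMul, dotProduct, Fin.sum_univ_three]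
  obtain ⟨m1, m2, m3⟩ := gtF_indep hp0 hK h12 h23 this
  apply hd0
  ext i
  fin_cases i <;> assumption

/-- The dual (Elfving) bound: a vector `v` with `λ(x) (f(x) · v)² ≤ 1` on the design region
certifies `u₁ ≥ v₁²`, by the Cauchy–Schwarz inequality for the form `M(ξ)`. In the case of equality
`ξ` charges only points where the constraint is active, and `M(ξ) v` is a multiple of `e₁`. -/
lemma dual_bound {p0 p1 p2 xL xU t : ℝ} {v : Fin 3 → ℝ} (ht : t * v 0 = 1)
    (hlam : ∀ x ∈ Set.Icc xL xU, 0 < gtLam p0 p1 p2 x)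
    (hv : ∀ x ∈ Set.Icc xL xU, gtLam p0 p1 p2 x * (gtF p0 p1 p2 x ⬝ᵥ v) ^ 2 ≤ 1)
    {ξ : ℝ →₀ ℝ} (hξ : IsDesign xL xU ξ) {u : Fin 3 → ℝ}
    (hu : gtInfo p0 p1 p2 ξ *ᵥ u = ![1, 0, 0]) :
    v 0 ^ 2 ≤ u 0 ∧ (u 0 = v 0 ^ 2 →
      (∀ x ∈ ξ.support, gtLam p0 p1 p2 x * (gtF p0 p1 p2 x ⬝ᵥ v) ^ 2 = 1) ∧
      gtInfo p0 p1 p2 ξ *ᵥ v = ![t, 0, 0]) := by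
  have hv0 : v 0 ≠ 0 := right_ne_zero_of_mul (ht.trans_ne one_ne_zero)
  have huu := dot_gtInfo p0 p1 p2 ξ u u
  have huv := dot_gtInfo p0 p1 p2 ξ v u
  rw [hu] at huu huv
  have ev : ∀ y : Fin 3 → ℝ, y ⬝ᵥ ![1, 0, 0] = y 0 := fun y => by
    simp [dotProduct, Fin.sum_univ_three]
  rw [ev] at huu huv
  have hone : ∑ x ∈ ξ.support, ξ x = 1 := hξ.2
  -- completing the square, `u₁ - v₁²` is a sum of two nonnegative parts
  have hsum : u 0 - v 0 ^ 2 = ∑ x ∈ ξ.support,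
      (ξ x * gtLam p0 p1 p2 x * (gtF p0 p1 p2 x ⬝ᵥ u - v 0 * (gtF p0 p1 p2 x ⬝ᵥ v)) ^ 2
        + v 0 ^ 2 * ξ x * (1 - gtLam p0 p1 p2 x * (gtF p0 p1 p2 x ⬝ᵥ v) ^ 2)) := by
    have : u 0 - v 0 ^ 2 = u 0 - 2 * v 0 * v 0 + v 0 ^ 2 * ∑ x ∈ ξ.support, ξ x := by
      rw [hone]; ring
    rw [this]
    trans (∑ x ∈ ξ.support,
          ξ x * gtLam p0 p1 p2 x * (gtF p0 p1 p2 x ⬝ᵥ u) * (gtF p0 p1 p2 x ⬝ᵥ u))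
        - 2 * v 0 * (∑ x ∈ ξ.support,
          ξ x * gtLam p0 p1 p2 x * (gtF p0 p1 p2 x ⬝ᵥ v) * (gtF p0 p1 p2 x ⬝ᵥ u))
        + v 0 ^ 2 * ∑ x ∈ ξ.support, ξ x
    · exact congrArg₂ (fun a b => a - 2 * v 0 * b + _) huu huv
    rw [Finset.mul_sum, Finset.mul_sum, ← Finset.sum_sub_distrib, ← Finset.sum_add_distrib]
    refine Finset.sum_congr rfl fun x _ => ?_
    ring
  have n1 : ∀ x ∈ ξ.support,
      0 ≤ ξ x * gtLam p0 p1 p2 x * (gtF p0 p1 p2 x ⬝ᵥ u - v 0 * (gtF p0 p1 p2 x ⬝ᵥ v)) ^ 2 :=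
    fun x hx => mul_nonneg (mul_pos (hξ.1 x hx).2 (hlam x (hξ.1 x hx).1)).le (sq_nonneg _)
  have n2 : ∀ x ∈ ξ.support,
      0 ≤ v 0 ^ 2 * ξ x * (1 - gtLam p0 p1 p2 x * (gtF p0 p1 p2 x ⬝ᵥ v) ^ 2) :=
    fun x hx => mul_nonneg (mul_nonneg (sq_nonneg _) (hξ.1 x hx).2.le)
      (sub_nonneg.2 (hv x (hξ.1 x hx).1))
  refine ⟨?_, fun heq => ?_⟩
  · have := Finset.sum_nonneg fun x hx => add_nonneg (n1 x hx) (n2 x hx)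
    linarith
  rw [heq, sub_self, eq_comm,
    Finset.sum_eq_zero_iff_of_nonneg fun x hx => add_nonneg (n1 x hx) (n2 x hx)] at hsum
  refine ⟨fun x hx => ?_, ?_⟩
  · have h := ((add_eq_zero_iff_of_nonneg (n1 x hx) (n2 x hx)).1 (hsum x hx)).2
    have : v 0 ^ 2 * ξ x ≠ 0 := mul_ne_zero (pow_ne_zero _ hv0) (hξ.1 x hx).2.ne'
    linarith [(mul_eq_zero.1 h).resolve_left this]
  · have hfu : ∀ x ∈ ξ.support, gtF p0 p1 p2 x ⬝ᵥ u = v 0 * (gtF p0 p1 p2 x ⬝ᵥ v) := by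
      intro x hx
      have h := ((add_eq_zero_iff_of_nonneg (n1 x hx) (n2 x hx)).1 (hsum x hx)).1
      have := (mul_eq_zero.1 h).resolve_left
        (mul_pos (hξ.1 x hx).2 (hlam x (hξ.1 x hx).1)).ne'
      linarith [pow_eq_zero_iff (two_ne_zero) |>.1 this]
    have hMu : ∀ y : Fin 3 → ℝ, y 0 = v 0 * (y ⬝ᵥ (gtInfo p0 p1 p2 ξ *ᵥ v)) := by
      intro y
      have := dot_gtInfo p0 p1 p2 ξ y u
      rw [hu, ev] at this
      rw [this, dot_gtInfo, Finsupp.sum, Finsupp.sum, Finset.mul_sum]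
      refine Finset.sum_congr rfl fun x hx => ?_
      rw [hfu x hx]
      ring
    have ht' : t = (v 0)⁻¹ := eq_inv_of_mul_eq_one_left ht
    ext i
    have := hMu (Pi.single i 1)
    rw [single_one_dotProduct] at this
    rw [ht', ← mul_right_inj' hv0, ← this]
    fin_cases i <;> simp [hv0]

/-! ### Optimality of the three-point design -/

set_option maxHeartbeats 2000000 in
/-- Theorem 3: if `A_s ∈ (r,1)` solves equation (E2), then the three-point design `ξ_s`
supported at `x_L < x₂ˢ < x_U` with the Dₛ-optimal weights is the unique Dₛ-optimal design:
`M(ξ_s)` is invertible, and for every design `ξ` and every `u` with `M(ξ) u = e₁` one has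
`u₁ ≥ (M(ξ_s)⁻¹)₁₁`, with equality only if `ξ = ξ_s`. -/
theorem Ds_optimal_design
    (p0 p1 p2 xL xU c δ r Δ0 As Δ1 Δ2 x2s Q1 Q2 Q3 S w1 w2 w3 : ℝ)
    (hp0 : p0 ∈ Set.Ioo (0 : ℝ) 1)
    (hp1 : p1 ∈ Set.Ioc (1 / 2 : ℝ) 1) (hp2 : p2 ∈ Set.Ioc (1 / 2 : ℝ) 1)
    (hxL : 1 ≤ xL) (hxLU : xL < xU)
    (hc : c = p1 / ((p1 + p2 - 1) * (1 - p0) ^ xL))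
    (hδ : δ = (1 - p1) / p1)
    (hr : r = (1 - p0) ^ (xU - xL))
    (hΔ0 : Δ0 = r * Real.log r / (1 - r))
    (hAs : As ∈ Set.Ioo r 1)
    (hΔ1 : Δ1 = ((As - r) * Real.sqrt ((c - 1) * (δ * c + 1))
              + (1 - As) * Real.sqrt ((c - r) * (δ * c + r)))
            / ((1 - r) * Real.sqrt ((c - As) * (δ * c + As))))
    (hΔ2 : Δ2 = (Real.sqrt ((c - 1) * (δ * c + 1)) - Real.sqrt ((c - r) * (δ * c + r)))
            / ((1 - r) * Real.sqrt ((c - As) * (δ * c + As))))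
    (hE2 : (2 * (1 + Δ1) / As) * (1 + (1 + Δ0 / As) / (Real.log As - Δ0 * (1 / As - 1)))
            = 1 / (δ * c + As) - 1 / (c - As) + 2 * Δ2)
    (hx2s : x2s = xL + Real.log As / Real.log (1 - p0))
    (hord1 : xL < x2s) (hord2 : x2s < xU)
    (hQ1 : Q1 = (gtLam p0 p1 p2 xL)⁻¹ * ((1 - p0) ^ x2s - (1 - p0) ^ xU) ^ 2)
    (hQ2 : Q2 = (gtLam p0 p1 p2 x2s)⁻¹ * ((1 - p0) ^ xL - (1 - p0) ^ xU) ^ 2)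
    (hQ3 : Q3 = (gtLam p0 p1 p2 xU)⁻¹ * ((1 - p0) ^ xL - (1 - p0) ^ x2s) ^ 2)
    (hS : S = Real.sqrt Q1 + Real.sqrt Q2 + Real.sqrt Q3)
    (hw1 : w1 = Real.sqrt Q1 / S) (hw2 : w2 = Real.sqrt Q2 / S) (hw3 : w3 = Real.sqrt Q3 / S)
    (ξs : ℝ →₀ ℝ)
    (hξs : ξs = Finsupp.single xL w1 + Finsupp.single x2s w2 + Finsupp.single xU w3) :
    (gtInfo p0 p1 p2 ξs).det ≠ 0 ∧
    ∀ ξ : ℝ →₀ ℝ, IsDesign xL xU ξ →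
      ∀ u : Fin 3 → ℝ, (gtInfo p0 p1 p2 ξ).mulVec u = ![1, 0, 0] →
        ((gtInfo p0 p1 p2 ξs)⁻¹ 0 0 ≤ u 0 ∧
          (u 0 = (gtInfo p0 p1 p2 ξs)⁻¹ 0 0 → ξ = ξs)) := by
  have hq : 0 < 1 - p0 := by linarith [hp0.2]
  have hq1 : 1 - p0 < 1 := by linarith [hp0.1]
  have hK : 0 < p1 + p2 - 1 := by linarith [hp1.1, hp2.1]
  have hp1' : 0 < p1 := by linarith [hp1.1]
  have hr0 : 0 < r := hr ▸ rpow_pos_of_pos hq _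
  have hqL : 0 < (1 - p0) ^ xL := rpow_pos_of_pos hq _
  have hqL1 : (1 - p0) ^ xL < 1 := rpow_lt_one hq.le hq1 (by linarith)
  -- `k` is the scale between `1 / λ` and `h`
  obtain ⟨k, hk⟩ : ∃ k, k = (p1 + p2 - 1) * (1 - p0) ^ xL := ⟨_, rfl⟩
  have hk0 : 0 < k := hk ▸ mul_pos hK hqL
  have hkc : k * c = p1 := by rw [hc, ← hk]; field_simp
  have hkδ : k * (δ * c) = 1 - p1 := by
    have : p1 * δ = 1 - p1 := by rw [hδ]; field_simp
    linear_combination δ * hkc + this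
  have hc1 : 1 < c := by
    rw [hc, ← hk, one_lt_div hk0, hk]
    nlinarith [hp2.2]
  have hδ0 : 0 ≤ δ := hδ ▸ div_nonneg (by linarith [hp1.2]) hp1'.le
  have hδc : 0 ≤ δ * c := by nlinarith
  obtain ⟨hrA, hA1⟩ := hAs
  have hA0 := hr0.trans hrA
  -- in the variable `a = q ^ (x - xL)` the design region is `[r, 1]`
  have haL : (1 - p0) ^ (xL - xL) = 1 := by simp
  have ha2 : (1 - p0) ^ (x2s - xL) = As := by
    rw [hx2s, add_sub_cancel_left, rpow_def_of_pos hq,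
      mul_div_cancel₀ _ (log_neg hq hq1).ne, exp_log hA0]
  have hinj : ∀ x y, (1 - p0) ^ (x - xL) = (1 - p0) ^ (y - xL) → x = y := fun x y h => by
    have := (rpow_right_inj hq hq1.ne).1 h
    linarith
  have hreg : ∀ x ∈ Set.Icc xL xU, r ≤ (1 - p0) ^ (x - xL) ∧ (1 - p0) ^ (x - xL) ≤ 1 := by
    intro x hx
    refine ⟨?_, rpow_le_one hq.le hq1.le (by linarith [hx.1])⟩
    rw [hr]
    exact rpow_le_rpow_of_exponent_ge hq hq1.le (by linarith [hx.2])
  have hqx : ∀ x, (1 - p0) ^ x = (1 - p0) ^ xL * (1 - p0) ^ (x - xL) := fun x => by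
    rw [← rpow_add hq]; congr 1; ring
  have hlam : ∀ x, gtLam p0 p1 p2 x
      = 1 / (k ^ 2 * ((c - (1 - p0) ^ (x - xL)) * (δ * c + (1 - p0) ^ (x - xL)))) := fun x => by
    have e : gtPi p0 p1 p2 x = k * (c - (1 - p0) ^ (x - xL)) := by
      rw [gtPi, hqx x, mul_sub, hkc, hk]; ring
    rw [gtLam, e]
    congr 1
    linear_combination
      k * (c - (1 - p0) ^ (x - xL)) * (-hkδ - hkc)
  have hh : ∀ a, r ≤ a → a ≤ 1 → 0 < (c - a) * (δ * c + a) := fun a h h' =>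
    mul_pos (by linarith) (by linarith)
  have hlpos : ∀ x ∈ Set.Icc xL xU, 0 < gtLam p0 p1 p2 x := fun x hx => by
    have := hh _ (hreg x hx).1 (hreg x hx).2
    rw [hlam]
    positivity
  obtain ⟨α, β, γ, i1, i2, i3, i4⟩ := exists_interpolant hr0 hrA hA1 hc1 hδ0 hΔ0 hΔ1 hΔ2 hE2
  obtain ⟨v, hv⟩ := exists_coeff (p1 := p1) (p2 := p2) (xL := xL) hp0 hK
    (k * α) (k * β) (k * γ)
  have hv' : ∀ x, gtF p0 p1 p2 x ⬝ᵥ v = k * (α * ((1 - p0) ^ (x - xL) *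
      log ((1 - p0) ^ (x - xL))) + β + γ * (1 - p0) ^ (x - xL)) := fun x => by rw [hv]; ring
  have hvb : ∀ x ∈ Set.Icc xL xU, gtLam p0 p1 p2 x * (gtF p0 p1 p2 x ⬝ᵥ v) ^ 2 ≤ 1 ∧
      (gtLam p0 p1 p2 x * (gtF p0 p1 p2 x ⬝ᵥ v) ^ 2 = 1 → x = xL ∨ x = x2s ∨ x = xU) := by
    intro x hx
    obtain ⟨ha, ha'⟩ := hreg x hx
    have hp := hh _ ha ha'
    obtain ⟨b1, b2⟩ := sq_le_variance hr0 hrA hA1 hc1 hδ0 i1 i2 i3 i4 ha ha'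
    rw [hv' x, hlam, mul_pow, one_div_mul_eq_div, mul_div_mul_left _ _ (pow_ne_zero 2 hk0.ne')]
    refine ⟨(div_le_one hp).2 b1, fun h => ?_⟩
    rcases b2 ((div_eq_one_iff_eq hp.ne').1 h) with h | h | h
    · exact Or.inr (Or.inr (hinj _ _ (h.trans hr)))
    · exact Or.inr (Or.inl (hinj _ _ (h.trans ha2.symm)))
    · exact Or.inl (hinj _ _ (h.trans haL.symm))
  have hLmem : xL ∈ Set.Icc xL xU := ⟨le_rfl, hxLU.le⟩
  have h2mem : x2s ∈ Set.Icc xL xU := ⟨hord1.le, hord2.le⟩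
  have hUmem : xU ∈ Set.Icc xL xU := ⟨hxLU.le, le_rfl⟩
  have hp1h := hh 1 (by linarith) le_rfl
  have hpA := hh As hrA.le hA1.le
  have hpr := hh r le_rfl (by linarith)
  have hH1 := sqrt_pos.2 hp1h
  have hHA := sqrt_pos.2 hpA
  have hHr := sqrt_pos.2 hpr
  have hs1 := sq_sqrt hp1h.le
  have hsA := sq_sqrt hpA.le
  have hsr := sq_sqrt hpr.le
  have l1 := hlam xL
  have l2 := hlam x2s
  have l3 := hlam xU
  have v1 := hv' xL
  have v2 := hv' x2s
  have v3 := hv' xU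
  rw [haL] at l1 v1
  rw [ha2] at l2 v2
  rw [← hr] at l3 v3
  rw [log_one, mul_zero, mul_zero, zero_add, mul_one, i1] at v1
  rw [i2] at v2
  rw [i3] at v3
  rw [← hs1] at l1
  rw [← hsA] at l2
  rw [← hsr] at l3
  set H1 := √((c - 1) * (δ * c + 1))
  set HA := √((c - As) * (δ * c + As))
  set Hr := √((c - r) * (δ * c + r))
  have hq12 : 0 < (1 - p0) ^ xL - (1 - p0) ^ x2s :=
    sub_pos.2 (rpow_lt_rpow_of_exponent_gt hq hq1 hord1)
  have hq23 : 0 < (1 - p0) ^ x2s - (1 - p0) ^ xU :=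
    sub_pos.2 (rpow_lt_rpow_of_exponent_gt hq hq1 hord2)
  have hq13 : 0 < (1 - p0) ^ xL - (1 - p0) ^ xU := by linarith
  have sQ1 : √Q1 = k * H1 * ((1 - p0) ^ x2s - (1 - p0) ^ xU) := by
    rw [hQ1, l1, one_div, inv_inv, ← mul_pow, ← mul_pow, sqrt_sq (by positivity)]
  have sQ2 : √Q2 = k * HA * ((1 - p0) ^ xL - (1 - p0) ^ xU) := by
    rw [hQ2, l2, one_div, inv_inv, ← mul_pow, ← mul_pow, sqrt_sq (by positivity)]
  have sQ3 : √Q3 = k * Hr * ((1 - p0) ^ xL - (1 - p0) ^ x2s) := by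
    rw [hQ3, l3, one_div, inv_inv, ← mul_pow, ← mul_pow, sqrt_sq (by positivity)]
  have hS0 : 0 < S := by rw [hS, sQ1, sQ2, sQ3]; positivity
  have hw1p : 0 < w1 := by rw [hw1, sQ1]; positivity
  have hw2p : 0 < w2 := by rw [hw2, sQ2]; positivity
  have hw3p : 0 < w3 := by rw [hw3, sQ3]; positivity
  have hdet : (gtInfo p0 p1 p2 ξs).det ≠ 0 := by
    rw [hξs]
    exact det_three_ne_zero hp0 hK hord1 hord2 (hlpos _ hLmem) (hlpos _ h2mem) (hlpos _ hUmem)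
      hw1p hw2p hw3p
  have hwsum : w1 + w2 + w3 = 1 := by
    rw [hw1, hw2, hw3, ← add_div, ← add_div, ← hS, div_self hS0.ne']
  have c1 : gtLam p0 p1 p2 xL * (gtF p0 p1 p2 xL ⬝ᵥ v) = 1 / (k * H1) := by
    rw [v1, l1]; field_simp
  have c2 : gtLam p0 p1 p2 x2s * (gtF p0 p1 p2 x2s ⬝ᵥ v) = -(1 / (k * HA)) := by
    rw [v2, l2]; field_simp
  have c3 : gtLam p0 p1 p2 xU * (gtF p0 p1 p2 xU ⬝ᵥ v) = 1 / (k * Hr) := by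
    rw [v3, l3]; field_simp
  have m1 : w1 * (1 / (k * H1)) = ((1 - p0) ^ x2s - (1 - p0) ^ xU) / S := by
    rw [hw1, sQ1]; field_simp
  have m2 : w2 * (-(1 / (k * HA))) = -((1 - p0) ^ xL - (1 - p0) ^ xU) / S := by
    rw [hw2, sQ2]; field_simp
  have m3 : w3 * (1 / (k * Hr)) = ((1 - p0) ^ xL - (1 - p0) ^ x2s) / S := by
    rw [hw3, sQ3]; field_simp
  -- the weights are those for which the last two coordinates of `M(ξs) v` cancel
  obtain ⟨t, hMv⟩ : ∃ t, gtInfo p0 p1 p2 ξs *ᵥ v = ![t, 0, 0] := by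
    refine ⟨(gtInfo p0 p1 p2 ξs *ᵥ v) 0, ?_⟩
    ext i
    fin_cases i
    · rfl
    all_goals
      simp only [hξs, gtInfo_three, add_mulVec, gtAtom_mulVec, c1, c2, c3, m1, m2, m3]
      simp [gtF]
      field_simp
      ring
  have ht : t * v 0 = 1 := by
    have : v ⬝ᵥ (gtInfo p0 p1 p2 ξs *ᵥ v) = w1 + w2 + w3 := by
      rw [hξs, gtInfo_three, add_mulVec, add_mulVec, gtAtom_mulVec, gtAtom_mulVec,
        gtAtom_mulVec, dotProduct_add, dotProduct_add, dotProduct_smul, dotProduct_smul,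
        dotProduct_smul, c1, c2, c3, dotProduct_comm v, dotProduct_comm v, dotProduct_comm v,
        v1, v2, v3]
      simp only [smul_eq_mul]
      field_simp
    rw [hMv, hwsum] at this
    simpa [dotProduct, Fin.sum_univ_three, mul_comm] using this
  have hinv : (gtInfo p0 p1 p2 ξs)⁻¹ 0 0 = v 0 ^ 2 := by
    have e : gtInfo p0 p1 p2 ξs *ᵥ (v 0 • v) = Pi.single 0 1 := by
      rw [mulVec_smul, hMv]
      ext i
      fin_cases i <;> simp [mul_comm (v 0), ht]
    have := congrArg ((gtInfo p0 p1 p2 ξs)⁻¹ *ᵥ ·) e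
    simp only [mulVec_mulVec, nonsing_inv_mul _ (isUnit_iff_ne_zero.2 hdet), one_mulVec,
      mulVec_single_one] at this
    have := congrFun this 0
    simp only [Pi.smul_apply, smul_eq_mul, col_apply] at this
    rw [← this, sq]
  refine ⟨hdet, fun ξ hξ u hu => ?_⟩
  rw [hinv]
  obtain ⟨r1, r2⟩ := dual_bound ht hlpos (fun x hx => (hvb x hx).1) hξ hu
  refine ⟨r1, fun heq => ?_⟩
  obtain ⟨s1, s2⟩ := r2 heq
  have hsupp : ∀ x, x ≠ xL → x ≠ x2s → x ≠ xU → ξ x = 0 := by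
    intro x n1 n2 n3
    by_contra hx
    have hx' := Finsupp.mem_support_iff.2 hx
    rcases (hvb x (hξ.1 x hx').1).2 (s1 x hx') with h | h | h
    · exact n1 h
    · exact n2 h
    · exact n3 h
  have hξ3 : ξ = Finsupp.single xL (ξ xL) + Finsupp.single x2s (ξ x2s)
      + Finsupp.single xU (ξ xU) := by
    ext x
    by_cases n1 : x = xL
    · subst n1
      simp [hord1.ne', hxLU.ne']
    by_cases n2 : x = x2s
    · subst n2
      simp [hord1.ne, hord2.ne']
    by_cases n3 : x = xU
    · subst n3
      simp [hord2.ne, hxLU.ne]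
    simp [hsupp x n1 n2 n3, Ne.symm n1, Ne.symm n2, Ne.symm n3]
  -- `M(ξ) v = M(ξs) v`, and the gradients at the three points are linearly independent
  rw [hξ3, gtInfo_three] at s2
  rw [hξs, gtInfo_three, ← s2] at hMv
  simp only [add_mulVec, gtAtom_mulVec, c1, c2, c3] at hMv
  obtain ⟨d1, d2, d3⟩ := gtF_indep (d1 := (w1 - ξ xL) * (1 / (k * H1)))
    (d2 := (w2 - ξ x2s) * (-(1 / (k * HA)))) (d3 := (w3 - ξ xU) * (1 / (k * Hr)))
    hp0 hK hord1 hord2 (by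
      rw [sub_mul, sub_mul, sub_mul, sub_smul, sub_smul, sub_smul]
      rw [← sub_eq_zero] at hMv
      rw [← hMv]
      abel)
  have g1 := (mul_eq_zero.1 d1).resolve_right (by positivity)
  have g2 := (mul_eq_zero.1 d2).resolve_right (neg_ne_zero.2 (by positivity))
  have g3 := (mul_eq_zero.1 d3).resolve_right (by positivity)
  rw [hξ3, hξs, sub_eq_zero.1 g1, sub_eq_zero.1 g2, sub_eq_zero.1 g3]
end

section
/- There exists a ∈ (r, 1) such that log a − Δ0(1/a − 1) ≠ 0 and (2/a)(1 + (1 + Δ0/a)/(log a − Δ0(1/a − 1))) = 1/(δc + a) − 1/(c − a). (Lemma 1, first equation: equation (E1) has a root in (r,1).) -/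
/-! Write `h a = log a - Δ0 (1/a - 1)`. The constant `Δ0` is chosen so that `h r = h 1 = 0`; since
`h` is strictly convex as a function of `1/a`, it is negative on `(r, 1)`. Multiplying the equation
by `h a` therefore loses nothing there, and it turns the equation into `G a = 0` with `G` continuous
on all of `[r, 1]`: the right-hand side has no pole because `c > 1` and `δ c ≥ 0`. At the endpoints
only the term `(2/a)(1 + Δ0/a)` survives, and it is negative at `r` and positive at `1`, both by
the strict inequality `log x < x - 1` (at `x = r` and `x = 1/r`). The intermediate value theorem
gives the root. -/

open Real

/-- Strict concavity of `log` on `[1, 1/r]`, read at the point `1/a`. -/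
lemma h_neg {r a : ℝ} (hr0 : 0 < r) (hra : r < a) (ha1 : a < 1) :
    Real.log a - r * Real.log r / (1 - r) * (1 / a - 1) < 0 := by
  have ha0 : 0 < a := hr0.trans hra
  have h1r : 0 < 1 - r := by linarith
  have hlt : (1 : ℝ) < 1 / r := by rw [lt_div_iff₀ hr0]; linarith
  -- `1/a = u * 1 + v * (1/r)` with these weights
  have hu : 0 < (a - r) / (a * (1 - r)) := div_pos (by linarith) (by positivity)
  have hv : 0 < r * (1 - a) / (a * (1 - r)) :=
    div_pos (mul_pos hr0 (by linarith)) (by positivity)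
  have huv : (a - r) / (a * (1 - r)) + r * (1 - a) / (a * (1 - r)) = 1 := by
    field_simp; ring
  have key := strictConcaveOn_log_Ioi.2 (Set.mem_Ioi.2 one_pos)
    (Set.mem_Ioi.2 (one_div_pos.2 hr0)) hlt.ne hu hv huv
  have hpt : (a - r) / (a * (1 - r)) * 1 + r * (1 - a) / (a * (1 - r)) * (1 / r) = 1 / a := by
    field_simp; ring
  simp only [smul_eq_mul] at key
  rw [hpt, Real.log_one, one_div r, one_div a, Real.log_inv, Real.log_inv] at key
  have e : r * Real.log r / (1 - r) * (1 / a - 1)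
      = r * (1 - a) / (a * (1 - r)) * Real.log r := by
    field_simp
  rw [e]
  linarith

/-- Equation (E1) has a root whenever `0 < r < 1`, `c > 1` and `d = δ c ≥ 0`. -/
lemma root_aux {r c d : ℝ} (hr0 : 0 < r) (hr1 : r < 1) (hc : 1 < c) (hd : 0 ≤ d) :
    ∃ a ∈ Set.Ioo r 1,
      Real.log a - r * Real.log r / (1 - r) * (1 / a - 1) ≠ 0 ∧
      (2 / a) * (1 + (1 + r * Real.log r / (1 - r) / a) /
          (Real.log a - r * Real.log r / (1 - r) * (1 / a - 1)))
        = 1 / (d + a) - 1 / (c - a) := by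
  have h1r : 0 < 1 - r := by linarith
  have hneg := fun a (h : r < a) (h' : a < 1) => h_neg hr0 h h'
  have hΔr : 1 + r * Real.log r / (1 - r) / r < 0 := by
    have h1 : Real.log r < r - 1 := Real.log_lt_sub_one_of_pos hr0 hr1.ne
    have e : 1 + r * Real.log r / (1 - r) / r = (1 - r + Real.log r) / (1 - r) := by
      field_simp
    rw [e]
    exact div_neg_of_neg_of_pos (by linarith) h1r
  have hΔ1 : 0 < 1 + r * Real.log r / (1 - r) := by
    have h1 : Real.log r⁻¹ < r⁻¹ - 1 :=
      Real.log_lt_sub_one_of_pos (by positivity) (by simpa using hr1.ne)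
    rw [Real.log_inv] at h1
    have h2 := mul_lt_mul_of_pos_left h1 hr0
    rw [mul_sub, mul_inv_cancel₀ hr0.ne'] at h2
    have e : 1 + r * Real.log r / (1 - r) = (1 - r + r * Real.log r) / (1 - r) := by
      field_simp
    rw [e]
    exact div_pos (by linarith) h1r
  have hhr : Real.log r - r * Real.log r / (1 - r) * (1 / r - 1) = 0 := by
    field_simp; ring
  generalize r * Real.log r / (1 - r) = Δ at *
  let G : ℝ → ℝ := fun a => (2 / a) * ((Real.log a - Δ * (1 / a - 1)) + (1 + Δ / a))
    - (Real.log a - Δ * (1 / a - 1)) * (1 / (d + a) - 1 / (c - a))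
  have hG : ContinuousOn G (Set.Icc r 1) := by
    have p1 : ∀ a ∈ Set.Icc r 1, a ≠ 0 := fun a ha => (hr0.trans_le ha.1).ne'
    have p2 : ∀ a ∈ Set.Icc r 1, d + a ≠ 0 := fun a ha => by
      have := hr0.trans_le ha.1
      positivity
    have p3 : ∀ a ∈ Set.Icc r 1, c - a ≠ 0 := fun a ha => by
      have := ha.2
      exact (by linarith : 0 < c - a).ne'
    have hid : ContinuousOn (fun a : ℝ => a) (Set.Icc r 1) := continuousOn_id
    have hlog : ContinuousOn (fun a : ℝ => Real.log a) (Set.Icc r 1) := hid.log p1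
    have hinv : ∀ k : ℝ, ContinuousOn (fun a : ℝ => k / a) (Set.Icc r 1) := fun k =>
      continuousOn_const.div hid p1
    have hh : ContinuousOn (fun a : ℝ => Real.log a - Δ * (1 / a - 1)) (Set.Icc r 1) :=
      hlog.sub (continuousOn_const.mul ((hinv 1).sub continuousOn_const))
    exact ((hinv 2).mul (hh.add (continuousOn_const.add (hinv Δ)))).sub
      (hh.mul ((continuousOn_const.div (continuousOn_const.add hid) p2).sub
        (continuousOn_const.div (continuousOn_const.sub hid) p3)))
  have hGr : G r < 0 := by
    simp only [G, hhr, zero_add, zero_mul, sub_zero]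
    exact mul_neg_of_pos_of_neg (by positivity) hΔr
  have hG1 : 0 < G 1 := by
    simp only [G, Real.log_one, div_one, sub_self, mul_zero, zero_add, zero_mul, sub_zero]
    linarith
  obtain ⟨a, ha, hGa⟩ := intermediate_value_Ioo hr1.le hG ⟨hGr, hG1⟩
  have hh := (hneg a ha.1 ha.2).ne
  refine ⟨a, ha, hh, ?_⟩
  simp only [G] at hGa
  generalize Real.log a - Δ * (1 / a - 1) = H at *
  generalize 1 / (d + a) - 1 / (c - a) = R at *
  generalize 1 + Δ / a = K at *
  generalize 2 / a = T at *
  field_simp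
  linarith

/-- Lemma 1, first part: equation (E1) has a root `a ∈ (r, 1)`. -/
theorem E1_has_root
    (p0 p1 p2 xL xU c δ r Δ0 : ℝ)
    (hp0 : p0 ∈ Set.Ioo (0 : ℝ) 1)
    (hp1 : p1 ∈ Set.Ioc (1 / 2 : ℝ) 1) (hp2 : p2 ∈ Set.Ioc (1 / 2 : ℝ) 1)
    (hxL : 1 ≤ xL) (hxLU : xL < xU)
    (hc : c = p1 / ((p1 + p2 - 1) * (1 - p0) ^ xL))
    (hδ : δ = (1 - p1) / p1)
    (hr : r = (1 - p0) ^ (xU - xL))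
    (hΔ0 : Δ0 = r * Real.log r / (1 - r)) :
    ∃ a ∈ Set.Ioo r 1,
      Real.log a - Δ0 * (1 / a - 1) ≠ 0 ∧
      (2 / a) * (1 + (1 + Δ0 / a) / (Real.log a - Δ0 * (1 / a - 1)))
        = 1 / (δ * c + a) - 1 / (c - a) := by
  obtain ⟨h0, h0'⟩ := hp0
  obtain ⟨h1, h1'⟩ := hp1
  obtain ⟨h2, h2'⟩ := hp2
  have hq : 0 < 1 - p0 := by linarith
  have hq1 : 1 - p0 < 1 := by linarith
  have hr0 : 0 < r := hr ▸ Real.rpow_pos_of_pos hq _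
  have hr1 : r < 1 := hr ▸ Real.rpow_lt_one hq.le hq1 (by linarith)
  have hQ0 : 0 < (1 - p0) ^ xL := Real.rpow_pos_of_pos hq _
  have hQ1 : (1 - p0) ^ xL < 1 := Real.rpow_lt_one hq.le hq1 (by linarith)
  have hs : 0 < p1 + p2 - 1 := by linarith
  have hc1 : 1 < c := by
    rw [hc, lt_div_iff₀ (mul_pos hs hQ0)]
    have := mul_lt_mul_of_pos_left hQ1 hs
    linarith
  have hδ0 : 0 ≤ δ := hδ ▸ div_nonneg (by linarith) (by linarith)
  subst hΔ0
  exact root_aux hr0 hr1 hc1 (mul_nonneg hδ0 (by linarith))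
end

section
/- There exists a ∈ (r, 1) such that log a − Δ0(1/a − 1) ≠ 0 and (2(1+Δ1(a))/a)(1 + (1 + Δ0/a)/(log a − Δ0(1/a − 1))) = 1/(δc + a) − 1/(c − a) + 2Δ2(a). (Lemma 1, second equation: equation (E2) has a root in (r,1).) -/
/-!
Write `g a = log a - Δ₀ (1/a - 1)`. Then `a * g a = a log a - Δ₀ (1 - a)` is the difference between the
strictly convex function `a log a` and its chord over `[r, 1]`, so `g` vanishes at `r` and at `1` and
is negative in between (`gap_neg`). Hence, after multiplication by `g a`, the equation becomes
`F a = 0` with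
`F a = (2 (1 + Δ₁ a) / a) (g a + 1 + Δ₀ / a) - g a (1 / (δ c + a) - 1 / (c - a) + 2 Δ₂ a)`,
which is continuous on all of `[r, 1]` because `1 < c` and `0 ≤ δ`. At the endpoints only
`(2 (1 + Δ₁ a) / a) (1 + Δ₀ / a)` survives; since `-1 < Δ₀ < -r` and `0 ≤ Δ₁`, it is
negative at `r` and positive at `1`. The intermediate value theorem gives the root.
-/

open Real

/-- `Δ₁(a)` from Lemma 1. -/
noncomputable def Del1 (c δ r a : ℝ) : ℝ :=
  ((a - r) * Real.sqrt ((c - 1) * (δ * c + 1)) + (1 - a) * Real.sqrt ((c - r) * (δ * c + r)))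
    / ((1 - r) * Real.sqrt ((c - a) * (δ * c + a)))

/-- `Δ₂(a)` from Lemma 1. -/
noncomputable def Del2 (c δ r a : ℝ) : ℝ :=
  (Real.sqrt ((c - 1) * (δ * c + 1)) - Real.sqrt ((c - r) * (δ * c + r)))
    / ((1 - r) * Real.sqrt ((c - a) * (δ * c + a)))

/-- `a log a` lies strictly below its chord over `[r, 1]`; dividing by `a` gives the sign of
`log a - Δ₀ (1/a - 1)`. -/
lemma gap_neg {r a : ℝ} (hr0 : 0 < r) (ha : a ∈ Set.Ioo r 1) :
    Real.log a - r * Real.log r / (1 - r) * (1 / a - 1) < 0 := by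
  obtain ⟨h1, h2⟩ := ha
  have ha0 : 0 < a := hr0.trans h1
  have hr1 : 0 < 1 - r := by linarith
  have hw1 : 0 < (1 - a) / (1 - r) := div_pos (by linarith) hr1
  have hw2 : 0 < (a - r) / (1 - r) := div_pos (by linarith) hr1
  have key := Real.strictConvexOn_mul_log.2 (Set.mem_Ici.2 hr0.le)
    (Set.mem_Ici.2 zero_le_one) (sub_pos.1 hr1).ne hw1 hw2 (by field_simp; ring)
  have e : (1 - a) / (1 - r) * r + (a - r) / (1 - r) * 1 = a := by field_simp; ring
  simp only [smul_eq_mul, Real.log_one, mul_zero, add_zero, e] at key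
  have h : Real.log a - r * Real.log r / (1 - r) * (1 / a - 1)
      = (a * Real.log a - (1 - a) / (1 - r) * (r * Real.log r)) / a := by
    field_simp
  rw [h]
  exact div_neg_of_neg_of_pos (by linarith) ha0

lemma gap_left {r : ℝ} (hr0 : 0 < r) (hr1 : r < 1) :
    Real.log r - r * Real.log r / (1 - r) * (1 / r - 1) = 0 := by
  have : 1 - r ≠ 0 := by linarith
  field_simp
  ring

/-- The bounds `-1 < Δ₀ < -r`, from `1 - 1/r < log r < r - 1`. -/
lemma chord_slope_bounds {r : ℝ} (hr0 : 0 < r) (hr1 : r < 1) :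
    -1 < r * Real.log r / (1 - r) ∧ r * Real.log r / (1 - r) < -r := by
  have h1 : Real.log r < r - 1 := Real.log_lt_sub_one_of_pos hr0 hr1.ne
  have h2 : Real.log r⁻¹ < r⁻¹ - 1 :=
    Real.log_lt_sub_one_of_pos (inv_pos.2 hr0) (by simpa using hr1.ne)
  rw [Real.log_inv] at h2
  have h3 := mul_lt_mul_of_pos_left h2 hr0
  rw [mul_sub, mul_inv_cancel₀ hr0.ne'] at h3
  have hr : 0 < 1 - r := by linarith
  constructor
  · rw [lt_div_iff₀ hr]; linarith
  · rw [div_lt_iff₀ hr]; nlinarith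

lemma Del1_nonneg (c δ : ℝ) {r a : ℝ} (hr1 : r < 1) (h1 : r ≤ a) (h2 : a ≤ 1) :
    0 ≤ Del1 c δ r a := by
  have := sub_nonneg.2 h1
  have := sub_nonneg.2 h2
  have := sub_pos.2 hr1
  unfold Del1
  positivity

/-- The root exists for arbitrary `1 < c`, `0 ≤ δ` and `0 < r < 1`. -/
lemma exists_root {c δ r : ℝ} (hc : 1 < c) (hδ : 0 ≤ δ) (hr0 : 0 < r) (hr1 : r < 1) :
    ∃ a ∈ Set.Ioo r 1,
      Real.log a - r * Real.log r / (1 - r) * (1 / a - 1) ≠ 0 ∧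
      (2 * (1 + Del1 c δ r a) / a) *
          (1 + (1 + r * Real.log r / (1 - r) / a) /
            (Real.log a - r * Real.log r / (1 - r) * (1 / a - 1)))
        = 1 / (δ * c + a) - 1 / (c - a) + 2 * Del2 c δ r a := by
  have hgap := fun a (ha : a ∈ Set.Ioo r 1) => gap_neg hr0 ha
  have hl := gap_left hr0 hr1
  obtain ⟨hb1, hb2⟩ := chord_slope_bounds hr0 hr1
  generalize r * Real.log r / (1 - r) = D at *
  let F : ℝ → ℝ := fun a =>
    (2 * (1 + Del1 c δ r a) / a) * ((Real.log a - D * (1 / a - 1)) + (1 + D / a))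
      - (Real.log a - D * (1 / a - 1)) * (1 / (δ * c + a) - 1 / (c - a) + 2 * Del2 c δ r a)
  have hδc : 0 ≤ δ * c := mul_nonneg hδ (by linarith)
  have hpos : ∀ a ∈ Set.Icc r 1, a ≠ 0 ∧ c - a ≠ 0 ∧ δ * c + a ≠ 0 ∧
      (1 - r) * Real.sqrt ((c - a) * (δ * c + a)) ≠ 0 := by
    rintro a ⟨h1, h2⟩
    have h3 : 0 < a := by linarith
    have h4 : 0 < c - a := by linarith
    have h5 : 0 < δ * c + a := by linarith
    have h6 : 0 < 1 - r := by linarith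
    exact ⟨h3.ne', h4.ne', h5.ne', (mul_pos h6 (Real.sqrt_pos.2 (mul_pos h4 h5))).ne'⟩
  have hcont : ContinuousOn F (Set.Icc r 1) := by
    have hD1 : ContinuousOn (Del1 c δ r) (Set.Icc r 1) := by
      unfold Del1
      exact ContinuousOn.div (by fun_prop) (by fun_prop) fun a ha => (hpos a ha).2.2.2
    have hD2 : ContinuousOn (Del2 c δ r) (Set.Icc r 1) := by
      unfold Del2
      exact ContinuousOn.div (by fun_prop) (by fun_prop) fun a ha => (hpos a ha).2.2.2
    have ha0 : ∀ a ∈ Set.Icc r 1, a ≠ 0 := fun a ha => (hpos a ha).1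
    have ha1 : ∀ a ∈ Set.Icc r 1, c - a ≠ 0 := fun a ha => (hpos a ha).2.1
    have ha2 : ∀ a ∈ Set.Icc r 1, δ * c + a ≠ 0 := fun a ha => (hpos a ha).2.2.1
    have hg : ContinuousOn (fun a => Real.log a - D * (1 / a - 1)) (Set.Icc r 1) := by
      fun_prop (disch := assumption)
    have hR : ContinuousOn (fun a => 1 / (δ * c + a) - 1 / (c - a) + 2 * Del2 c δ r a)
        (Set.Icc r 1) := by
      fun_prop (disch := assumption)
    have hL : ContinuousOn (fun a => 2 * (1 + Del1 c δ r a) / a) (Set.Icc r 1) := by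
      fun_prop (disch := assumption)
    have hd : ContinuousOn (fun a => 1 + D / a) (Set.Icc r 1) := by
      fun_prop (disch := assumption)
    exact (hL.mul (hg.add hd)).sub (hg.mul hR)
  have hFr : F r < 0 := by
    have h := Del1_nonneg c δ hr1 le_rfl hr1.le
    have h' : 1 + D / r < 0 := by
      have : D / r < -1 := by rw [div_lt_iff₀ hr0]; linarith
      linarith
    simp only [F, hl, zero_add, zero_mul, sub_zero]
    exact mul_neg_of_pos_of_neg (by positivity) h'
  have hF1 : 0 < F 1 := by
    have h := Del1_nonneg c δ hr1 hr1.le le_rfl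
    have h' : 0 < 1 + D := by linarith
    simp only [F, Real.log_one, div_one, sub_self, mul_zero, zero_add, zero_mul, sub_zero]
    positivity
  obtain ⟨a, ha, hFa⟩ := intermediate_value_Ioo hr1.le hcont ⟨hFr, hF1⟩
  have hg := (hgap a ha).ne
  refine ⟨a, ha, hg, ?_⟩
  simp only [F] at hFa
  generalize Real.log a - D * (1 / a - 1) = g at *
  have e : 1 + (1 + D / a) / g = (g + (1 + D / a)) / g := by rw [add_div g, div_self hg]
  rw [e, ← mul_div_assoc, div_eq_iff hg]
  linarith

/-- Lemma 1, second part: equation (E2) has a root `a ∈ (r, 1)`. -/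
theorem E2_has_root
    (p0 p1 p2 xL xU c δ r Δ0 : ℝ)
    (hp0 : p0 ∈ Set.Ioo (0 : ℝ) 1)
    (hp1 : p1 ∈ Set.Ioc (1 / 2 : ℝ) 1) (hp2 : p2 ∈ Set.Ioc (1 / 2 : ℝ) 1)
    (hxL : 1 ≤ xL) (hxLU : xL < xU)
    (hc : c = p1 / ((p1 + p2 - 1) * (1 - p0) ^ xL))
    (hδ : δ = (1 - p1) / p1)
    (hr : r = (1 - p0) ^ (xU - xL))
    (hΔ0 : Δ0 = r * Real.log r / (1 - r)) :
    ∃ a ∈ Set.Ioo r 1,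
      Real.log a - Δ0 * (1 / a - 1) ≠ 0 ∧
      (2 * (1 + Del1 c δ r a) / a) * (1 + (1 + Δ0 / a) / (Real.log a - Δ0 * (1 / a - 1)))
        = 1 / (δ * c + a) - 1 / (c - a) + 2 * Del2 c δ r a := by
  obtain ⟨hp0, hp0'⟩ := hp0
  obtain ⟨hp1, hp1'⟩ := hp1
  obtain ⟨hp2, hp2'⟩ := hp2
  have hq0 : 0 < 1 - p0 := by linarith
  have hq1 : 1 - p0 < 1 := by linarith
  have hr0 : 0 < r := hr ▸ Real.rpow_pos_of_pos hq0 _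
  have hr1 : r < 1 := hr ▸ Real.rpow_lt_one hq0.le hq1 (by linarith)
  have hδ0 : 0 ≤ δ := hδ ▸ div_nonneg (by linarith) (by linarith)
  have hs0 : 0 < (1 - p0) ^ xL := Real.rpow_pos_of_pos hq0 _
  have hs1 : (1 - p0) ^ xL < 1 := Real.rpow_lt_one hq0.le hq1 (by linarith)
  have hc1 : 1 < c := by
    have hk : 0 < p1 + p2 - 1 := by linarith
    rw [hc, one_lt_div (mul_pos hk hs0)]
    nlinarith
  rw [hΔ0]
  exact exists_root hc1 hδ0 hr0 hr1
end

section
/- The root in (r, 1) of equation (E1) is unique: if a, a' ∈ (r, 1) both satisfy log a − Δ0(1/a − 1) ≠ 0, log a' − Δ0(1/a' − 1) ≠ 0, and the equation (2/a)(1 + (1 + Δ0/a)/(log a − Δ0(1/a − 1))) = 1/(δc + a) − 1/(c − a) (and likewise for a'), then a = a'. -/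
/-!
Write `e = -Δ0`, `D x = (δc + x)(c - x)`, `k = c(1 - δ)` and `P x = 2 D x - x D' x = 2δc² + k x`.
Clearing denominators, (E1) becomes the vanishing of an expression that is affine in `log a`, with
coefficient `-P a`; dividing by `P a > 0` isolates the logarithm, so that (E1) reads `M a = 0` with
`M x = -log x + e - (2 D x - e D' x) / P x`.

The derivative of `M` is now rational: `M' = -Q / (x P²)`, where `Q` is the cubic
`-2k x³ + B x² + C x + E` with `k > 0` and `C, E ≥ 0`. Whatever the sign of `B`, the function
`Q x / x²` is strictly decreasing on `x > 0`, so once `Q` vanishes it stays negative and `M` is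
strictly increasing from there on. Two roots `a < a'` would give a zero of `Q` in `(a, a')` by
Rolle, whereas `M 1 < 0 = M a'` gives by the mean value theorem a point of `(a', 1)` with `Q > 0`.
The sign `M 1 < 0` comes from `c > 1` and `e < 1`, the latter being `log (1/r) < 1/r - 1`.
-/

open Real

/-- The left side of (E1) in the form `M a = 0`, with `e = -Δ0`. -/
noncomputable def E1M (c δ e x : ℝ) : ℝ :=
  -log x + e - (2 * ((δ * c + x) * (c - x)) - e * (c * (1 - δ) - 2 * x))
    / (2 * δ * c ^ 2 + c * (1 - δ) * x)

/-- The cubic whose sign is opposite to that of the derivative of `E1M`. -/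
def E1Q (c δ e x : ℝ) : ℝ :=
  -2 * (c * (1 - δ)) * x ^ 3
    + (2 * (c * (1 - δ)) ^ 2 - 4 * δ * c ^ 2 - c ^ 2 * (1 + δ) ^ 2) * x ^ 2
    + (6 * δ * c ^ 2 * (c * (1 - δ)) + e * (c ^ 2 * (1 + δ) ^ 2)) * x + 4 * δ ^ 2 * c ^ 4

lemma E1P_pos {c δ x : ℝ} (hc : 1 < c) (hδ0 : 0 ≤ δ) (hδ1 : δ < 1) (hx : 0 < x) :
    0 < 2 * δ * c ^ 2 + c * (1 - δ) * x := by
  have : 0 < c * (1 - δ) * x := mul_pos (mul_pos (by linarith) (by linarith)) hx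
  positivity

lemma E1M_hasDerivAt {c δ x : ℝ} (e : ℝ) (hc : 1 < c) (hδ0 : 0 ≤ δ) (hδ1 : δ < 1) (hx : 0 < x) :
    HasDerivAt (E1M c δ e)
      (-(E1Q c δ e x) / (x * (2 * δ * c ^ 2 + c * (1 - δ) * x) ^ 2)) x := by
  have hP := (E1P_pos hc hδ0 hδ1 hx).ne'
  have h1 : HasDerivAt (fun x : ℝ => 2 * ((δ * c + x) * (c - x)) - e * (c * (1 - δ) - 2 * x))
      (2 * (1 * (c - x) + (δ * c + x) * (-1)) - e * (-(2 * 1))) x :=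
    ((((hasDerivAt_id x).const_add (δ * c)).mul ((hasDerivAt_id x).const_sub c)).const_mul 2).sub
      ((((hasDerivAt_id x).const_mul 2).const_sub (c * (1 - δ))).const_mul e)
  have h2 : HasDerivAt (fun x : ℝ => 2 * δ * c ^ 2 + c * (1 - δ) * x) (c * (1 - δ) * 1) x :=
    ((hasDerivAt_id x).const_mul (c * (1 - δ))).const_add (2 * δ * c ^ 2)
  have h3 := ((Real.hasDerivAt_log hx.ne').neg.add_const e).sub (h1.div h2 hP)
  refine h3.congr_deriv ?_
  unfold E1Q
  -- Clear the denominators with `P` opaque, so that its factor `c` is not cancelled.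
  obtain ⟨P, hPdef⟩ : ∃ P, P = 2 * δ * c ^ 2 + c * (1 - δ) * x := ⟨_, rfl⟩
  simp only [← hPdef] at hP ⊢
  field_simp
  rw [hPdef]
  ring

/-- `E1Q x / x ^ 2` is strictly decreasing on `x > 0`, so `E1Q` cannot be positive past a zero. -/
lemma E1Q_neg_of_zero {c δ e x y : ℝ} (hc : 1 < c) (hδ0 : 0 ≤ δ) (hδ1 : δ < 1) (he : 0 ≤ e)
    (hx : 0 < x) (hxy : x < y) (h0 : E1Q c δ e x = 0) : E1Q c δ e y < 0 := by
  have hk : 0 < c * (1 - δ) := mul_pos (by linarith) (by linarith)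
  have hy : 0 < y := hx.trans hxy
  have hd : 0 < y - x := by linarith
  have key : y ^ 2 * E1Q c δ e x - x ^ 2 * E1Q c δ e y =
      (y - x) * (2 * (c * (1 - δ)) * x ^ 2 * y ^ 2
        + (6 * δ * c ^ 2 * (c * (1 - δ)) + e * (c ^ 2 * (1 + δ) ^ 2)) * (x * y)
        + 4 * δ ^ 2 * c ^ 4 * (x + y)) := by
    unfold E1Q; ring
  have hpos : 0 < (y - x) * (2 * (c * (1 - δ)) * x ^ 2 * y ^ 2
        + (6 * δ * c ^ 2 * (c * (1 - δ)) + e * (c ^ 2 * (1 + δ) ^ 2)) * (x * y)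
        + 4 * δ ^ 2 * c ^ 4 * (x + y)) := by positivity
  rw [← key, h0] at hpos
  have : 0 < x ^ 2 := by positivity
  by_contra! h
  nlinarith [mul_nonneg this.le h]

lemma E1M_one_neg {c δ e : ℝ} (hc : 1 < c) (hδ0 : 0 ≤ δ) (hδ1 : δ < 1) (he : e < 1) :
    E1M c δ e 1 < 0 := by
  have hP := E1P_pos hc hδ0 hδ1 one_pos
  have hN : E1M c δ e 1 = 2 * ((δ * c + 1) * (c - 1)) * (e - 1)
      / (2 * δ * c ^ 2 + c * (1 - δ) * 1) := by
    unfold E1M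
    rw [log_one, eq_div_iff hP.ne', sub_mul, div_mul_cancel₀ _ hP.ne']
    ring
  rw [hN]
  have hD : 0 < (δ * c + 1) * (c - 1) :=
    mul_pos (by nlinarith) (by linarith)
  exact div_neg_of_neg_of_pos (mul_neg_of_pos_of_neg (by linarith) (by linarith)) hP

lemma E1M_no_two_zeros {c δ e a b : ℝ} (hc : 1 < c) (hδ0 : 0 ≤ δ) (hδ1 : δ < 1)
    (he0 : 0 ≤ e) (he1 : e < 1) (ha : 0 < a) (hab : a < b) (hb : b < 1)
    (hMa : E1M c δ e a = 0) (hMb : E1M c δ e b = 0) : False := by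
  have hder : ∀ x, 0 < x → HasDerivAt (E1M c δ e)
      (-(E1Q c δ e x) / (x * (2 * δ * c ^ 2 + c * (1 - δ) * x) ^ 2)) x :=
    fun x hx => E1M_hasDerivAt e hc hδ0 hδ1 hx
  have hden : ∀ x, 0 < x → 0 < x * (2 * δ * c ^ 2 + c * (1 - δ) * x) ^ 2 :=
    fun x hx => mul_pos hx (pow_pos (E1P_pos hc hδ0 hδ1 hx) 2)
  obtain ⟨ξ, ⟨hξ1, hξ2⟩, hξ⟩ := exists_hasDerivAt_eq_zero hab
    (fun x hx => (hder x (ha.trans_le hx.1)).continuousAt.continuousWithinAt)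
    (hMa.trans hMb.symm) (fun x hx => hder x (ha.trans hx.1))
  obtain ⟨η, ⟨hη1, -⟩, hη⟩ := exists_hasDerivAt_eq_slope (E1M c δ e) _ hb
    (fun x hx => (hder x (ha.trans (hab.trans_le hx.1))).continuousAt.continuousWithinAt)
    (fun x hx => hder x (ha.trans (hab.trans hx.1)))
  have hξ0 : 0 < ξ := ha.trans hξ1
  have hη0 : 0 < η := ha.trans (hab.trans hη1)
  have hQξ : E1Q c δ e ξ = 0 := by
    rcases div_eq_zero_iff.1 hξ with h | h
    · linarith
    · exact absurd h (hden ξ hξ0).ne'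
  have hQη := E1Q_neg_of_zero hc hδ0 hδ1 he0 hξ0 (hξ2.trans hη1) hQξ
  have h1 : 0 < -(E1Q c δ e η) / (η * (2 * δ * c ^ 2 + c * (1 - δ) * η) ^ 2) :=
    div_pos (by linarith) (hden η hη0)
  have h2 : (E1M c δ e 1 - E1M c δ e b) / (1 - b) < 0 := by
    rw [hMb, sub_zero]
    exact div_neg_of_neg_of_pos (E1M_one_neg hc hδ0 hδ1 he1) (by linarith)
  linarith

lemma E1M_eq_zero {c δ Δ0 a : ℝ} (hc : 1 < c) (hδ0 : 0 ≤ δ) (hδ1 : δ < 1)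
    (ha : 0 < a) (ha1 : a < 1) (hne : Real.log a - Δ0 * (1 / a - 1) ≠ 0)
    (heq : (2 / a) * (1 + (1 + Δ0 / a) / (Real.log a - Δ0 * (1 / a - 1)))
            = 1 / (δ * c + a) - 1 / (c - a)) : E1M c δ (-Δ0) a = 0 := by
  have hP := (E1P_pos hc hδ0 hδ1 ha).ne'
  have hA : δ * c + a ≠ 0 := by
    have : 0 ≤ δ * c := mul_nonneg hδ0 (by linarith)
    linarith
  have hB : c - a ≠ 0 := by linarith
  obtain ⟨G, hG⟩ : ∃ G, G = Real.log a - Δ0 * (1 / a - 1) := ⟨_, rfl⟩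
  rw [← hG] at hne heq
  have hl : a * G = a * Real.log a - Δ0 * (1 - a) := by rw [hG]; field_simp
  have h1 : 2 * (a * G + (a + Δ0)) * ((δ * c + a) * (c - a))
      = a * (a * G) * ((c - a) - (δ * c + a)) := by
    field_simp at heq
    linear_combination heq
  rw [hl] at h1
  have h2 : (-log a + -Δ0) * (2 * δ * c ^ 2 + c * (1 - δ) * a)
      = 2 * ((δ * c + a) * (c - a)) - -Δ0 * (c * (1 - δ) - 2 * a) := by
    apply mul_left_cancel₀ ha.ne'
    linear_combination -h1
  unfold E1M
  rw [← h2, mul_div_cancel_right₀ _ hP, sub_self]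

/-- Uniqueness of the root of equation (E1) in `(r, 1)`. -/
theorem E1_root_unique
    (p0 p1 p2 xL xU c δ r Δ0 : ℝ)
    (hp0 : p0 ∈ Set.Ioo (0 : ℝ) 1)
    (hp1 : p1 ∈ Set.Ioc (1 / 2 : ℝ) 1) (hp2 : p2 ∈ Set.Ioc (1 / 2 : ℝ) 1)
    (hxL : 1 ≤ xL) (hxLU : xL < xU)
    (hc : c = p1 / ((p1 + p2 - 1) * (1 - p0) ^ xL))
    (hδ : δ = (1 - p1) / p1)
    (hr : r = (1 - p0) ^ (xU - xL))
    (hΔ0 : Δ0 = r * Real.log r / (1 - r))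
    (a a' : ℝ) (ha : a ∈ Set.Ioo r 1) (ha' : a' ∈ Set.Ioo r 1)
    (hne : Real.log a - Δ0 * (1 / a - 1) ≠ 0)
    (hne' : Real.log a' - Δ0 * (1 / a' - 1) ≠ 0)
    (heq : (2 / a) * (1 + (1 + Δ0 / a) / (Real.log a - Δ0 * (1 / a - 1)))
            = 1 / (δ * c + a) - 1 / (c - a))
    (heq' : (2 / a') * (1 + (1 + Δ0 / a') / (Real.log a' - Δ0 * (1 / a' - 1)))
            = 1 / (δ * c + a') - 1 / (c - a')) :
    a = a' := by

  obtain ⟨hp00, hp01⟩ := hp0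
  obtain ⟨hp10, hp11⟩ := hp1
  obtain ⟨hp20, hp21⟩ := hp2
  have hq0 : 0 < 1 - p0 := by linarith
  have hq1 : 1 - p0 < 1 := by linarith
  have hc1 : 1 < c := by
    have hqx0 : 0 < (1 - p0) ^ xL := rpow_pos_of_pos hq0 _
    have hqx1 : (1 - p0) ^ xL < 1 := rpow_lt_one hq0.le hq1 (by linarith)
    rw [hc, one_lt_div (mul_pos (by linarith) hqx0)]
    nlinarith
  have hδ0 : 0 ≤ δ := by rw [hδ]; exact div_nonneg (by linarith) (by linarith)
  have hδ1 : δ < 1 := by rw [hδ, div_lt_one (by linarith)]; linarith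
  have hr0 : 0 < r := by rw [hr]; exact rpow_pos_of_pos hq0 _
  have hr1 : r < 1 := by rw [hr]; exact rpow_lt_one hq0.le hq1 (by linarith)
  have he0 : 0 ≤ -Δ0 := by
    rw [hΔ0, ← neg_div]
    exact div_nonneg (by nlinarith [log_neg hr0 hr1]) (by linarith)
  have he1 : -Δ0 < 1 := by
    rw [hΔ0, ← neg_div, div_lt_one (by linarith)]
    have h := log_lt_sub_one_of_pos (inv_pos.2 hr0) (inv_ne_one.2 hr1.ne)
    rw [log_inv] at h
    have h2 := mul_lt_mul_of_pos_left h hr0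
    rw [mul_sub, mul_inv_cancel₀ hr0.ne'] at h2
    linarith
  have ha0 := hr0.trans ha.1
  have ha0' := hr0.trans ha'.1
  have hM := E1M_eq_zero hc1 hδ0 hδ1 ha0 ha.2 hne heq
  have hM' := E1M_eq_zero hc1 hδ0 hδ1 ha0' ha'.2 hne' heq'
  rcases lt_trichotomy a a' with h | h | h
  · exact (E1M_no_two_zeros hc1 hδ0 hδ1 he0 he1 ha0 h ha'.2 hM hM').elim
  · exact h
  · exact (E1M_no_two_zeros hc1 hδ0 hδ1 he0 he1 ha0' h ha.2 hM' hM).elim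
end
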